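/- There exists a finitely presented group G = ⟨A | R⟩ whose Dehn function is equivalent to n^2 (i.e., G has quadratic Dehn function) and whose conjugacy problem is undecidable (the set of pairs of words over A^{±1} that are conjugate in G is not recursive). -/

import Mathlib

/-- `AreaLE R w N` says that the word `w` (in the alphabet `(Fin a)^{±1}`) is equal, in
the free group on `Fin a`, to a product of at most `N` conjugates of relators from
`R^{±1}`; i.e. that `Area(w) ≤ N`. -/
def AreaLE {a : ℕ} (R : Finset (FreeGroup (Fin a)))
    (w : List (Fin a × Bool)) (N : ℕ) : Prop :=
  ∃ g r : Fin N → FreeGroup (Fin a),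
    (∀ i, r i ∈ R ∨ (r i)⁻¹ ∈ R) ∧
      FreeGroup.mk w = (List.ofFn fun i => g i * r i * (g i)⁻¹).prod

/-- the area of a word (representing `1` in the presented group) -/
noncomputable def wordArea {a : ℕ} (R : Finset (FreeGroup (Fin a)))
    (w : List (Fin a × Bool)) : ℕ :=
  sInf {N | AreaLE R w N}

/-- the Dehn function of the finite presentation `⟨Fin a ∣ R⟩`:
`d(n) = max {Area(w) : ‖w‖ ≤ n, w = 1 in the group}` -/
noncomputable def dehn {a : ℕ} (R : Finset (FreeGroup (Fin a))) (n : ℕ) : ℕ :=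
  sSup {N | ∃ w : List (Fin a × Bool), w.length ≤ n ∧
    FreeGroup.mk w ∈ Subgroup.normalClosure (R : Set (FreeGroup (Fin a))) ∧
    N = wordArea R w}

/-- equivalence of functions: `(1/A) f(n/B) − Cn − D < g(n) < A f(Bn) + Cn + D`
for some constants `A, B, C, D ≥ 1` -/
def FunEquiv (f g : ℕ → ℕ) : Prop :=
  ∃ A B C D : ℕ, 1 ≤ A ∧ 1 ≤ B ∧ 1 ≤ C ∧ 1 ≤ D ∧
    ∀ n, f (n / B) < A * (g n + C * n + D) ∧ g n < A * f (B * n) + C * n + D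


/-! ### Area calculus -/

namespace CP

inductive Ar {F : Type} [Group F] (R : Set F) : ℕ → F → Prop
  | one : Ar R 0 1
  | step {n : ℕ} {z : F} (h : Ar R n z) (g r : F) (hr : r ∈ R) : Ar R (n + 1) (g * r * g⁻¹ * z)

section
variable {F : Type} [Group F] {R : Set F}

theorem Ar.mul {n m : ℕ} {z z' : F} (h : Ar R n z) (h' : Ar R m z') : Ar R (n + m) (z * z') := by
  induction h with
  | one => simpa using h'
  | step h g r hr ih =>
    have := Ar.step ih g r hr
    rw [← mul_assoc] at this
    convert this using 1
    omega

theorem Ar.conj {n : ℕ} {z : F} (h : Ar R n z) (g : F) : Ar R n (g * z * g⁻¹) := by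
  induction h with
  | one => simpa using Ar.one
  | step h g' r hr ih =>
    have := Ar.step ih (g * g') r hr
    convert this using 1
    group

theorem Ar.of_mem {r : F} (hr : r ∈ R) : Ar R 1 r := by
  simpa using Ar.step Ar.one 1 r hr

theorem Ar.mono (h1 : (1 : F) ∈ R) {n m : ℕ} (hnm : n ≤ m) {z : F} (h : Ar R n z) : Ar R m z := by
  induction hnm with
  | refl => exact h
  | step _ ih => simpa using Ar.step ih 1 1 h1

theorem Ar.inv (hi : ∀ r ∈ R, r⁻¹ ∈ R) {n : ℕ} {z : F} (h : Ar R n z) : Ar R n z⁻¹ := by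
  induction h with
  | one => simpa using Ar.one
  | step h g r hr ih =>
    have := ih.mul ((Ar.of_mem (hi r hr)).conj g)
    convert this using 1
    group

/-- `x` and `y` differ by area at most `N` -/
def Sim (R : Set F) (N : ℕ) (x y : F) : Prop := Ar R N (x * y⁻¹)

theorem Sim.refl (x : F) : Sim R 0 x x := by simpa [Sim] using Ar.one

theorem Sim.mono (h1 : (1 : F) ∈ R) {n m : ℕ} (hnm : n ≤ m) {x y : F} (h : Sim R n x y) :
    Sim R m x y := Ar.mono h1 hnm h

theorem Sim.symm (hi : ∀ r ∈ R, r⁻¹ ∈ R) {n : ℕ} {x y : F} (h : Sim R n x y) : Sim R n y x := by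
  have := Ar.inv hi h
  simpa [Sim] using this

theorem Sim.trans {n m : ℕ} {x y z : F} (h : Sim R n x y) (h' : Sim R m y z) :
    Sim R (n + m) x z := by
  have := Ar.mul h h'
  simpa [Sim, mul_assoc] using this

theorem Sim.mul_left {n : ℕ} {x y : F} (a : F) (h : Sim R n x y) : Sim R n (a * x) (a * y) := by
  have := Ar.conj h a
  simpa [Sim, mul_assoc] using this

theorem Sim.mul_right {n : ℕ} {x y : F} (a : F) (h : Sim R n x y) : Sim R n (x * a) (y * a) := by
  simpa [Sim, mul_assoc] using h

theorem Sim.mul {n m : ℕ} {x y x' y' : F} (h : Sim R n x y) (h' : Sim R m x' y') :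
    Sim R (n + m) (x * x') (y * y') :=
  (h.mul_right x').trans (h'.mul_left y)

end

theorem Ar.areaLE {a : ℕ} {R : Finset (FreeGroup (Fin a))} {n : ℕ} {z : FreeGroup (Fin a)}
    (h : Ar (R : Set (FreeGroup (Fin a))) n z) (w : List (Fin a × Bool)) (hw : FreeGroup.mk w = z) :
    AreaLE R w n := by
  suffices H : ∃ g r : Fin n → FreeGroup (Fin a),
    (∀ i, r i ∈ R ∨ (r i)⁻¹ ∈ R) ∧
      z = (List.ofFn fun i => g i * r i * (g i)⁻¹).prod by
    obtain ⟨g, r, h1, h2⟩ := H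
    exact ⟨g, r, h1, hw.trans h2⟩
  clear hw
  induction h with
  | one => exact ⟨fun _ => 1, fun _ => 1, fun i => i.elim0, by simp⟩
  | step h g r hr ih =>
    obtain ⟨g', r', h1, h2⟩ := ih
    refine ⟨Fin.cons g g', Fin.cons r r', ?_, ?_⟩
    · intro i
      refine Fin.cases ?_ ?_ i
      · left; simpa using hr
      · intro i; simpa using h1 i
    · rw [h2]; simp [List.ofFn_succ]

end CP

namespace CP

/-! ### Abstract geometry -/

def nk (k : ℤ × ℤ) : ℕ := k.1.natAbs + k.2.natAbs

def Adj {α : Type} (l l' : List α) : Prop := l = l' ∨ (∃ a, l' = a :: l) ∨ ∃ a, l = a :: l'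

structure Geo (G : Type) [Group G] (V : Type) [MulAction G V] (α : Type) where
  o : V
  vtx : G → List α
  Red : List α → Prop
  κ : G → ℤ × ℤ
  dist : Fin 3 → V → V → ℝ
  r : Fin 3 → ℤ × ℤ → ℝ
  B : ℝ
  T0 : ℝ
  τ : Fin 3 → ℤ × ℤ
  κ_mul : ∀ g h, κ (g * h) = κ g + κ h
  dist_self : ∀ i a, dist i a a = 0
  dist_symm : ∀ i a b, dist i a b = dist i b a
  dist_tri : ∀ i a b c, dist i a c ≤ dist i a b + dist i b c
  B_ge : 2 ≤ B
  T0_ge : 0 ≤ T0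
  lip : ∀ i s a b, dist i (s • a) (s • b) ≤ B ^ (vtx s).length * r i (κ s) * dist i a b
  lip' : ∀ i s a b, dist i (s⁻¹ • a) (s⁻¹ • b) ≤ B ^ (vtx s).length * r i (-κ s) * dist i a b
  r_add : ∀ i k k', r i (k + k') = r i k * r i k'
  r_pos : ∀ i k, 0 < r i k
  r_le : ∀ i k, r i k ≤ B ^ nk k
  r_tau : ∀ i j, i ≠ j → B ≤ r i (τ j)
  vtx_one : vtx 1 = []
  red_vtx : ∀ g, Red (vtx g)
  red_tail : ∀ a l, Red (a :: l) → Red l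
  len_mul : ∀ g g', (vtx (g * g')).length ≤ (vtx g).length + (vtx g').length
  adj_of : ∀ g s, (vtx s).length ≤ 1 → Adj (vtx g) (vtx (g * s))
  of_adj : ∀ g g', Adj (vtx g) (vtx g') → (vtx (g⁻¹ * g')).length ≤ 1
  of_eq : ∀ g g', vtx g = vtx g' → vtx (g⁻¹ * g') = []
  pi : ∀ l, Red l → ∀ (k : ℤ × ℤ) (c : Fin 3 → V),
    ∃ g, vtx g = l ∧ κ g = k ∧ ∀ i, dist i o (g⁻¹ • c i) ≤ T0
  fin : ∀ D : ℕ, {s : G | (vtx s).length ≤ 1 ∧ nk (κ s) ≤ D ∧ ∀ i, dist i o (s • o) ≤ D}.Finite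

theorem nk_add (a b : ℤ × ℤ) : nk (a + b) ≤ nk a + nk b := by
  simp only [nk, Prod.fst_add, Prod.snd_add]; omega
theorem nk_neg (a : ℤ × ℤ) : nk (-a) = nk a := by simp [nk]
theorem nk_zero : nk 0 = 0 := by simp [nk]
theorem nk_nsmul (n : ℕ) (a : ℤ × ℤ) : nk (n • a) = n * nk a := by
  have h1 : (n • a).1 = n * a.1 := by simp
  have h2 : (n • a).2 = n * a.2 := by simp
  rw [nk, h1, h2, Int.natAbs_mul, Int.natAbs_mul, Int.natAbs_natCast, nk]
  ring
theorem nk_sub (a b : ℤ × ℤ) : nk (a - b) ≤ nk a + nk b := by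
  simp only [nk, Prod.fst_sub, Prod.snd_sub]; omega

def clz (s : ℕ) (z : ℤ) : ℤ := max (-s) (min s z)
def cl (s : ℕ) (k : ℤ × ℤ) : ℤ × ℤ := (clz s k.1, clz s k.2)

theorem cl_zero (k : ℤ × ℤ) : cl 0 k = 0 := by
  ext <;> simp only [cl, clz, Prod.fst_zero, Prod.snd_zero] <;> omega
theorem cl_eq {s : ℕ} {k : ℤ × ℤ} (h : nk k ≤ s) : cl s k = k := by
  simp only [nk] at h
  ext <;> simp only [cl, clz] <;> omega
theorem cl_sub (s : ℕ) (k k' : ℤ × ℤ) : nk (cl s k - cl s k') ≤ nk (k - k') := by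
  simp only [nk, cl, clz, Prod.fst_sub, Prod.snd_sub]; omega
theorem cl_succ (s : ℕ) (k : ℤ × ℤ) : nk (cl s k - cl (s + 1) k) ≤ 2 := by
  simp only [nk, cl, clz, Prod.fst_sub, Prod.snd_sub]; omega
theorem cl_le (s : ℕ) (k : ℤ × ℤ) : nk (cl s k) ≤ nk k := by
  simp only [nk, cl, clz]; omega
theorem nk_symm (a b : ℤ × ℤ) : nk (a - b) = nk (b - a) := by
  simp only [nk, Prod.fst_sub, Prod.snd_sub]; omega

section lists
variable {α : Type}

def rt (s : ℕ) (l : List α) : List α := l.drop (l.length - s)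

theorem Adj.symm {l l' : List α} (h : Adj l l') : Adj l' l := by
  rcases h with h | h | h
  · exact Or.inl h.symm
  · exact Or.inr (Or.inr h)
  · exact Or.inr (Or.inl h)

theorem rt_zero (l : List α) : rt 0 l = [] := by simp [rt]
theorem rt_eq {s : ℕ} {l : List α} (h : l.length ≤ s) : rt s l = l := by
  simp [rt, Nat.sub_eq_zero_of_le h]
theorem rt_len (s : ℕ) (l : List α) : (rt s l).length ≤ l.length := by simp [rt]
theorem rt_len' (s : ℕ) (l : List α) : (rt s l).length ≤ s := by simp [rt]; omega

theorem rt_cons (s : ℕ) (a : α) (l : List α) : Adj (rt s l) (rt s (a :: l)) := by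
  by_cases h : s ≤ l.length
  · left
    have : (a :: l).length - s = (l.length - s) + 1 := by simp; omega
    rw [rt, rt, this, List.drop_succ_cons]
  · right; left
    refine ⟨a, ?_⟩
    rw [rt_eq (l := a :: l) (by rw [List.length_cons]; omega), rt_eq (by omega)]

theorem rt_adj (s : ℕ) {l l' : List α} (h : Adj l l') : Adj (rt s l) (rt s l') := by
  rcases h with rfl | ⟨a, rfl⟩ | ⟨a, rfl⟩
  · exact Or.inl rfl
  · exact rt_cons s a l
  · exact (rt_cons s a l').symm

theorem rt_succ (s : ℕ) (l : List α) : Adj (rt s l) (rt (s + 1) l) := by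
  by_cases h : s + 1 ≤ l.length
  · right; left
    have h1 : l.length - (s + 1) < l.length := by omega
    refine ⟨l[l.length - (s + 1)], ?_⟩
    rw [rt, rt, List.drop_eq_getElem_cons h1]
    congr 2
    omega
  · left; rw [rt_eq (by omega), rt_eq (by omega)]

end lists

namespace Geo
variable {G : Type} [Group G] {V : Type} [MulAction G V] {α : Type} (X : Geo G V α)

theorem κ_one : X.κ 1 = 0 := by
  have := X.κ_mul 1 1
  simpa using this
theorem κ_inv (g : G) : X.κ g⁻¹ = -X.κ g := by
  have := X.κ_mul g g⁻¹
  rw [mul_inv_cancel, X.κ_one] at this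
  exact (neg_eq_of_add_eq_zero_right this.symm).symm

theorem dist_nonneg (i : Fin 3) (a b : V) : 0 ≤ X.dist i a b := by
  have := X.dist_tri i a b a
  rw [X.dist_self, X.dist_symm i b a] at this
  linarith

theorem B_pos : 0 < X.B := by linarith [X.B_ge]
theorem one_le_B : 1 ≤ X.B := by linarith [X.B_ge]
theorem r_nonneg (i : Fin 3) (k : ℤ × ℤ) : 0 ≤ X.r i k := (X.r_pos i k).le
theorem Bpow_mono {m n : ℕ} (h : m ≤ n) : X.B ^ m ≤ X.B ^ n := pow_le_pow_right₀ X.one_le_B h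
theorem one_le_Bpow (m : ℕ) : 1 ≤ X.B ^ m := one_le_pow₀ X.one_le_B
theorem Bpow_pos (m : ℕ) : 0 < X.B ^ m := pow_pos X.B_pos m
theorem Bpow_nonneg (m : ℕ) : 0 ≤ X.B ^ m := (X.Bpow_pos m).le

theorem red_rt (s : ℕ) {l : List α} (h : X.Red l) : X.Red (rt s l) := by
  unfold rt
  generalize l.length - s = n
  induction n generalizing l with
  | zero => simpa using h
  | succ n ih =>
    cases l with
    | nil => simpa using h
    | cons a l => simpa using ih (X.red_tail _ _ h)

theorem red_nil : X.Red [] := X.vtx_one ▸ X.red_vtx 1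

theorem r_zero (i : Fin 3) : X.r i 0 = 1 := by
  have h := X.r_add i 0 0
  have := X.r_pos i 0
  simp only [add_zero] at h
  nlinarith

theorem r_nsmul (i : Fin 3) (n : ℕ) (k : ℤ × ℤ) : X.r i (n • k) = X.r i k ^ n := by
  induction n with
  | zero => simp [X.r_zero]
  | succ n ih => rw [succ_nsmul, X.r_add, ih, pow_succ]

theorem r_neg (i : Fin 3) (k : ℤ × ℤ) : X.r i (-k) = (X.r i k)⁻¹ := by
  have := X.r_add i k (-k)
  rw [add_neg_cancel, X.r_zero] at this
  exact eq_inv_of_mul_eq_one_right this.symm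

theorem r_neg_tau {i j : Fin 3} (h : i ≠ j) (n : ℕ) : X.r i (-(n • X.τ j)) ≤ (X.B ^ n)⁻¹ := by
  rw [X.r_neg, X.r_nsmul]
  exact inv_anti₀ (X.Bpow_pos n) (pow_le_pow_left₀ X.B_pos.le (X.r_tau i j h) n)

/-- `g` approximates the descriptor `(l, k, c)` -/
def Apx (l : List α) (k : ℤ × ℤ) (c : Fin 3 → V) (g : G) : Prop :=
  X.vtx g = l ∧ X.κ g = k ∧ ∀ i, X.dist i X.o (g⁻¹ • c i) ≤ X.T0

def S (D : ℕ) : Set G :=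
  {s : G | (X.vtx s).length ≤ 1 ∧ nk (X.κ s) ≤ D ∧ ∀ i, X.dist i X.o (s • X.o) ≤ D}

theorem S_mono {D D' : ℕ} (h : D ≤ D') : X.S D ⊆ X.S D' := by
  rintro s ⟨h1, h2, h3⟩
  exact ⟨h1, h2.trans h, fun i => (h3 i).trans (by exact_mod_cast h)⟩

theorem one_mem_S (D : ℕ) : (1 : G) ∈ X.S D := by
  refine ⟨by simp [X.vtx_one], by simp [X.κ_one, nk_zero], fun i => ?_⟩
  rw [one_smul, X.dist_self]; positivity

theorem Bd_r {D0 : ℕ} {k : ℤ × ℤ} (i : Fin 3) (h : nk k ≤ D0) : X.r i k ≤ X.B ^ D0 :=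
  (X.r_le i k).trans (X.Bpow_mono h)

theorem step {l l' : List α} {k k' : ℤ × ℤ} {c c' : Fin 3 → V} {g g' : G} {D0 m : ℕ} {D1 : ℝ}
    (h : X.Apx l k c g) (h' : X.Apx l' k' c' g') (hl : Adj l l') (hk : nk (k - k') ≤ D0)
    (hc : ∀ i, X.dist i (g⁻¹ • c i) (g⁻¹ • c' i) ≤ D1) (hD : D0 ≤ m)
    (hm : X.T0 + D1 + X.B ^ (1 + D0) * X.T0 ≤ m) : g⁻¹ * g' ∈ X.S m := by
  obtain ⟨rfl, rfl, h3⟩ := h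
  obtain ⟨rfl, rfl, h3'⟩ := h'
  have e1 := X.of_adj _ _ hl
  have e2 : nk (X.κ (g⁻¹ * g')) ≤ D0 := by
    rw [X.κ_mul, X.κ_inv, neg_add_eq_sub, nk_symm]; exact hk
  refine ⟨e1, e2.trans hD, fun i => le_trans ?_ hm⟩
  have t1 := X.dist_tri i X.o (g⁻¹ • c i) ((g⁻¹ * g') • X.o)
  have t2 := X.dist_tri i (g⁻¹ • c i) (g⁻¹ • c' i) ((g⁻¹ * g') • X.o)
  have t3 := X.lip i (g⁻¹ * g') (g'⁻¹ • c' i) X.o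
  rw [smul_smul, inv_mul_cancel_right_of] at t3
  have t4 : X.B ^ (X.vtx (g⁻¹ * g')).length * X.r i (X.κ (g⁻¹ * g')) * X.dist i (g'⁻¹ • c' i) X.o ≤
      X.B ^ (1 + D0) * X.T0 := by
    rw [X.dist_symm i _ X.o, pow_add]
    apply mul_le_mul _ (h3' i) (X.dist_nonneg _ _ _) (by have := X.B_pos; positivity)
    exact mul_le_mul (X.Bpow_mono e1) (X.Bd_r i e2) (X.r_nonneg _ _) (X.Bpow_nonneg 1)
  linarith [h3 i, hc i]
where inv_mul_cancel_right_of {g g' : G} : g⁻¹ * g' * g'⁻¹ = g⁻¹ := by group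

open Classical in
noncomputable def pi' (d : List α × (ℤ × ℤ) × (Fin 3 → V)) : G :=
  if h : X.Red d.1 then (X.pi d.1 h d.2.1 d.2.2).choose else 1

theorem pi'_apx {l : List α} (hl : X.Red l) (k : ℤ × ℤ) (c : Fin 3 → V) :
    X.Apx l k c (X.pi' (l, k, c)) := by
  have := (X.pi l hl k c).choose_spec
  simp only [pi', hl, dite_true]
  exact this

def Tube (j : Fin 3) (c : V) (g : G) : Prop := X.dist j X.o (g⁻¹ • c) ≤ X.T0

theorem Tube_smul {j : Fin 3} {c : V} {g : G} (h : G) (hg : X.Tube j c g) :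
    X.Tube j (h • c) (h * g) := by
  unfold Tube at *
  rwa [mul_inv_rev, mul_smul, inv_smul_smul]

def Bd (m : ℕ) (p : G) : Prop :=
  (X.vtx p).length ≤ m ∧ nk (X.κ p) ≤ m ∧ ∀ i, X.dist i X.o (p⁻¹ • X.o) ≤ X.B ^ m

theorem Bd.mono {m m' : ℕ} {p : G} (h : X.Bd m p) (hm : m ≤ m') : X.Bd m' p :=
  ⟨h.1.trans hm, h.2.1.trans hm, fun i => (h.2.2 i).trans (X.Bpow_mono hm)⟩

end Geo
end CP

namespace CP
namespace Geo
variable {G : Type} [Group G] {V : Type} [MulAction G V] {α : Type} (X : Geo G V α)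

noncomputable def D0 : ℕ := 2 + ∑ i, nk (X.τ i)
noncomputable def D1 : ℕ := ⌈X.T0 + 1 + X.B ^ (1 + X.D0) * X.T0⌉₊ + X.D0
noncomputable def D2 : ℕ := ⌈X.T0 + X.D1 + X.B ^ (1 + X.D1) * X.T0⌉₊ + X.D1

theorem nk_tau (i : Fin 3) : nk (X.τ i) ≤ X.D0 := by
  have := Finset.single_le_sum (f := fun i => nk (X.τ i)) (fun _ _ => Nat.zero_le _)
    (Finset.mem_univ i)
  unfold D0; omega

theorem D0_le : X.D0 ≤ X.D1 := by unfold D1; omega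
theorem D1_le : X.D1 ≤ X.D2 := by unfold D2; omega
theorem two_le_D0 : 2 ≤ X.D0 := by unfold D0; omega

theorem step1 {l l' : List α} {k k' : ℤ × ℤ} {c c' : Fin 3 → V} {g g' : G}
    (h : X.Apx l k c g) (h' : X.Apx l' k' c' g') (hl : Adj l l') (hk : nk (k - k') ≤ X.D0)
    (hc : ∀ i, X.dist i (g⁻¹ • c i) (g⁻¹ • c' i) ≤ 1) : g⁻¹ * g' ∈ X.S X.D1 := by
  refine X.step h h' hl hk hc X.D0_le ?_
  unfold D1
  push_cast
  have := Nat.le_ceil (X.T0 + 1 + X.B ^ (1 + X.D0) * X.T0)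
  have : (0:ℝ) ≤ X.D0 := by positivity
  linarith

theorem step2 {l l' : List α} {k k' : ℤ × ℤ} {c c' : Fin 3 → V} {g g' : G}
    (h : X.Apx l k c g) (h' : X.Apx l' k' c' g') (hl : Adj l l') (hk : nk (k - k') ≤ X.D1)
    (hc : ∀ i, X.dist i (g⁻¹ • c i) (g⁻¹ • c' i) ≤ X.D1) : g⁻¹ * g' ∈ X.S X.D2 := by
  refine X.step h h' hl hk hc X.D1_le ?_
  conv_rhs => unfold D2
  push_cast
  have := Nat.le_ceil (X.T0 + X.D1 + X.B ^ (1 + X.D1) * X.T0)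
  have : (0:ℝ) ≤ X.D1 := by positivity
  linarith

/-- a marking: letters for the elements of the finite set `S D2`, with square relators -/
structure Pres (F : Type) [Group F] where
  ev : F →* G
  ℓ : G → F
  R : Set F
  ev_ℓ : ∀ s ∈ X.S X.D2, ev (ℓ s) = s
  ℓ_one : ℓ 1 = 1
  one_mem : 1 ∈ R
  inv_mem : ∀ r ∈ R, r⁻¹ ∈ R
  sq : ∀ s₁ ∈ X.S X.D2, ∀ s₂ ∈ X.S X.D2, ∀ s₃ ∈ X.S X.D2, ∀ s₄ ∈ X.S X.D2,
    s₁ * s₂ = s₃ * s₄ → ℓ s₁ * ℓ s₂ * (ℓ s₃ * ℓ s₄)⁻¹ ∈ R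

variable {X}
namespace Pres
variable {F : Type} [Group F] (P : X.Pres F)

def W (f : ℕ → G) : ℕ → F
  | 0 => 1
  | n + 1 => W f n * P.ℓ ((f n)⁻¹ * f (n + 1))

theorem grid (f f' : ℕ → G) (N : ℕ)
    (h1 : ∀ i < N, (f i)⁻¹ * f (i + 1) ∈ X.S X.D2)
    (h2 : ∀ i < N, (f' i)⁻¹ * f' (i + 1) ∈ X.S X.D2)
    (h3 : ∀ i ≤ N, (f i)⁻¹ * f' i ∈ X.S X.D2) :
    Sim P.R N (P.ℓ ((f 0)⁻¹ * f' 0) * P.W f' N) (P.W f N * P.ℓ ((f N)⁻¹ * f' N)) := by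
  induction N with
  | zero => simpa [W] using Sim.refl _
  | succ N ih =>
    have ih := ih (fun i hi => h1 i (by omega)) (fun i hi => h2 i (by omega))
      (fun i hi => h3 i (by omega))
    have sq := P.sq _ (h3 N (by omega)) _ (h2 N (by omega)) _ (h1 N (by omega)) _
      (h3 (N + 1) le_rfl) (by group)
    have sq' : Sim P.R 1 _ _ := Ar.of_mem sq
    have := (ih.mul_right (P.ℓ ((f' N)⁻¹ * f' (N + 1)))).trans
      (by rw [mul_assoc]; exact sq'.mul_left (P.W f N))
    simpa [W, mul_assoc] using this

inductive Pth (Q : G → Prop) : ℕ → G → G → F → Prop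
  | nil (p : G) (h : Q p) : Pth Q 0 p p 1
  | cons {n : ℕ} (p p' : G) {q : G} {x : F} (h : Q p) (hs : p⁻¹ * p' ∈ X.S X.D1)
      (t : Pth Q n p' q x) : Pth Q (n + 1) p q (P.ℓ (p⁻¹ * p') * x)

variable {P}
theorem Pth.mono {Q Q' : G → Prop} {n : ℕ} {p q : G} {x : F} (h : P.Pth Q n p q x)
    (hQ : ∀ p, Q p → Q' p) : P.Pth Q' n p q x := by
  induction h with
  | nil p h => exact .nil p (hQ _ h)
  | cons p p' h hs t ih => exact .cons p p' (hQ _ h) hs ih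

theorem Pth.trans {Q : G → Prop} {n m : ℕ} {p q r : G} {x y : F} (h : P.Pth Q n p q x)
    (h' : P.Pth Q m q r y) : P.Pth Q (n + m) p r (x * y) := by
  induction h with
  | nil p h => simpa using h'
  | cons p p' h hs t ih =>
    have := Pth.cons p p' h hs (ih h')
    rw [← mul_assoc] at this
    convert this using 1
    omega

theorem Pth.smul {Q Q' : G → Prop} {n : ℕ} {p q : G} {x : F} (g : G) (h : P.Pth Q n p q x)
    (hQ : ∀ p, Q p → Q' (g * p)) : P.Pth Q' n (g * p) (g * q) x := by
  induction h with
  | nil p h => exact .nil _ (hQ _ h)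
  | cons p p' h hs t ih =>
    have e : (g * p)⁻¹ * (g * p') = p⁻¹ * p' := by group
    have := Pth.cons (P := P) (g * p) (g * p') (hQ _ h) (by rw [e]; exact hs) ih
    rwa [e] at this

theorem Pth.ev {Q : G → Prop} {n : ℕ} {p q : G} {x : F} (h : P.Pth Q n p q x) :
    P.ev x = p⁻¹ * q := by
  induction h with
  | nil p h => simp
  | cons p p' h hs t ih =>
    rw [map_mul, ih, P.ev_ℓ _ (X.S_mono X.D1_le hs)]; group

theorem Pth.start {Q : G → Prop} {n : ℕ} {p q : G} {x : F} (h : P.Pth Q n p q x) : Q p := by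
  cases h <;> assumption

theorem Pth.fin {Q : G → Prop} {n : ℕ} {p q : G} {x : F} (h : P.Pth Q n p q x) : Q q := by
  induction h <;> assumption

theorem Pth.of_seq {Q : G → Prop} (f : ℕ → G) (N : ℕ) (hQ : ∀ i ≤ N, Q (f i))
    (hs : ∀ i < N, (f i)⁻¹ * f (i + 1) ∈ X.S X.D1) : ∃ x, P.Pth Q N (f 0) (f N) x := by
  induction N with
  | zero => exact ⟨1, .nil _ (hQ 0 le_rfl)⟩
  | succ N ih =>
    obtain ⟨x, hx⟩ := ih (fun i hi => hQ i (by omega)) (fun i hi => hs i (by omega))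
    have := Pth.cons (P := P) (f N) (f (N + 1)) (hQ N (by omega)) (hs N (by omega))
      (.nil _ (hQ (N + 1) le_rfl))
    exact ⟨_, hx.trans this⟩

/-- path along a sequence of descriptors -/
theorem Pth.of_desc {Q : G → Prop} (d : ℕ → List α × (ℤ × ℤ) × (Fin 3 → V)) (N : ℕ) (hN : 0 < N)
    {p q : G} (hp : X.Apx (d 0).1 (d 0).2.1 (d 0).2.2 p) (hq : X.Apx (d N).1 (d N).2.1 (d N).2.2 q)
    (hr : ∀ i, X.Red (d i).1)
    (hQ : ∀ i ≤ N, ∀ g, X.Apx (d i).1 (d i).2.1 (d i).2.2 g → Q g)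
    (hl : ∀ i < N, Adj (d i).1 (d (i + 1)).1)
    (hk : ∀ i < N, nk ((d i).2.1 - (d (i + 1)).2.1) ≤ X.D0)
    (hc : ∀ i < N, ∀ j, X.B ^ (d i).1.length * X.r j (-(d i).2.1) *
      X.dist j ((d i).2.2 j) ((d (i + 1)).2.2 j) ≤ 1) :
    ∃ x, P.Pth Q N p q x := by
  classical
  set f : ℕ → G := fun i => if i = 0 then p else if i = N then q else X.pi' (d i) with hf
  have hA : ∀ i, X.Apx (d i).1 (d i).2.1 (d i).2.2 (f i) := by
    intro i
    simp only [hf]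
    split_ifs with h h'
    · rw [h]; exact hp
    · rw [h']; exact hq
    · exact X.pi'_apx (hr i) _ _
  have e0 : f 0 = p := by simp [hf]
  have eN : f N = q := by simp [hf, hN.ne']
  rw [← e0, ← eN]
  refine Pth.of_seq f N (fun i hi => hQ i hi _ (hA i)) fun i hi => ?_
  refine X.step1 (hA i) (hA (i + 1)) (hl i hi) (hk i hi) fun j => ?_
  refine le_trans (X.lip' _ _ _ _) ?_
  rw [(hA i).1, (hA i).2.1]
  exact hc i hi j

/-! ### Filling loops inside a tube -/

open Classical in
noncomputable def desc (X : Geo G V α) (j : Fin 3) (c : V) (m : ℕ) (p : G) (s : ℕ) :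
    List α × (ℤ × ℤ) × (Fin 3 → V) :=
  if s ≤ m then (X.vtx p, X.κ p + s • X.τ j, fun i => if i = j then c else p • X.o)
  else (rt (2 * m + 1 - s) (X.vtx p), cl (2 * m + 1 - s) (X.κ p) + m • X.τ j,
    fun i => if i = j then c else X.o)

noncomputable def col (X : Geo G V α) (j : Fin 3) (c : V) (m : ℕ) (p : G) (s : ℕ) : G :=
  if s = 0 then p else X.pi' (desc X j c m p s)

theorem col_apx {j : Fin 3} {c : V} {m : ℕ} {p : G} (hp : X.Tube j c p) (s : ℕ) :
    X.Apx (desc X j c m p s).1 (desc X j c m p s).2.1 (desc X j c m p s).2.2 (col X j c m p s) := by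
  unfold col
  split_ifs with h
  · subst h
    simp only [desc, Nat.zero_le, if_true]
    refine ⟨rfl, by simp, fun i => ?_⟩
    by_cases hi : i = j
    · subst hi; simpa [Tube] using hp
    · simp only [hi, if_false, inv_smul_smul, X.dist_self]; exact X.T0_ge
  · refine X.pi'_apx ?_ _ _
    unfold desc
    split_ifs
    · exact X.red_vtx p
    · exact X.red_rt _ (X.red_vtx p)

theorem shrink {j i : Fin 3} (hi : i ≠ j) {g p : G} {n : ℕ} (h1 : X.vtx g = X.vtx p)
    (h2 : X.κ g = X.κ p + n • X.τ j) (a b : V) :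
    X.dist i (g⁻¹ • a) (g⁻¹ • b) ≤ (X.B ^ n)⁻¹ * X.dist i (p⁻¹ • a) (p⁻¹ • b) := by
  have := X.lip i (g⁻¹ * p) (p⁻¹ • a) (p⁻¹ • b)
  have e : X.κ (g⁻¹ * p) = -(n • X.τ j) := by
    rw [X.κ_mul, X.κ_inv, h2]; abel
  rw [X.of_eq _ _ h1, e, smul_smul, smul_smul, mul_assoc, mul_inv_cancel, mul_one] at this
  refine this.trans ?_
  simp only [List.length_nil, pow_zero, one_mul]
  exact mul_le_mul_of_nonneg_right (X.r_neg_tau hi n) (X.dist_nonneg _ _ _)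

theorem col_vert {j : Fin 3} {c : V} {m : ℕ} {p : G} (hp : X.Tube j c p) (hb : X.Bd m p) (s : ℕ)
    (hs : s < 2 * m + 1) : (col X j c m p s)⁻¹ * col X j c m p (s + 1) ∈ X.S X.D2 := by
  apply X.S_mono X.D1_le
  have A := col_apx (m := m) hp s
  have A' := col_apx (m := m) hp (s + 1)
  refine X.step1 A A' ?_ ?_ ?_
  · unfold desc
    split_ifs with h1 h2
    · exact Or.inl rfl
    · have : 2 * m + 1 - (s + 1) = m := by omega
      rw [this, rt_eq hb.1]; exact Or.inl rfl
    · omega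
    · have : 2 * m + 1 - s = 2 * m + 1 - (s + 1) + 1 := by omega
      simp only [this]
      exact (rt_succ _ _).symm
  · unfold desc
    split_ifs with h1 h2
    · have : X.κ p + s • X.τ j - (X.κ p + (s + 1) • X.τ j) = -X.τ j := by
        rw [succ_nsmul]; abel
      simp only [this, nk_neg]; exact X.nk_tau j
    · have : 2 * m + 1 - (s + 1) = m := by omega
      have e2 : s = m := by omega
      simp only [this, cl_eq hb.2.1]
      rw [e2, sub_self, nk_zero]; omega
    · omega
    · have : 2 * m + 1 - s = 2 * m + 1 - (s + 1) + 1 := by omega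
      simp only [this, add_sub_add_right_eq_sub]
      rw [nk_symm]
      exact (cl_succ _ _).trans X.two_le_D0
  · intro i
    by_cases hi : i = j
    · have : (desc X j c m p s).2.2 i = (desc X j c m p (s + 1)).2.2 i := by
        unfold desc; split_ifs <;> simp [hi]
      rw [this, X.dist_self]; norm_num
    · by_cases h1 : s = m
      · have hA1 : X.vtx (col X j c m p s) = X.vtx p := by
          rw [A.1]; simp [desc, h1]
        have hA2 : X.κ (col X j c m p s) = X.κ p + s • X.τ j := by
          rw [A.2.1]; simp [desc, h1]
        refine (shrink hi hA1 hA2 _ _).trans ?_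
        have e1 : (desc X j c m p s).2.2 i = p • X.o := by simp [desc, h1, hi]
        have e2 : (desc X j c m p (s + 1)).2.2 i = X.o := by simp [desc, h1, hi]
        rw [e1, e2, inv_smul_smul, h1]
        rw [inv_mul_le_iff₀ (X.Bpow_pos m), mul_one]
        exact hb.2.2 i
      · have : (desc X j c m p s).2.2 i = (desc X j c m p (s + 1)).2.2 i := by
          unfold desc; split_ifs <;> first | rfl | omega
        rw [this, X.dist_self]; norm_num

theorem col_horiz {j : Fin 3} {c : V} {m : ℕ} {p p' : G} (hp : X.Tube j c p) (hp' : X.Tube j c p')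
    (hs : p⁻¹ * p' ∈ X.S X.D1) (s : ℕ) :
    (col X j c m p s)⁻¹ * col X j c m p' s ∈ X.S X.D2 := by
  have A := col_apx (m := m) hp s
  have A' := col_apx (m := m) hp' s
  have hadj : Adj (X.vtx p) (X.vtx p') := by
    have := X.adj_of p _ hs.1
    rwa [mul_inv_cancel_left] at this
  have hκ : nk (X.κ p - X.κ p') ≤ X.D1 := by
    have := hs.2.1
    rwa [X.κ_mul, X.κ_inv, neg_add_eq_sub, nk_symm] at this
  refine X.step2 A A' ?_ ?_ ?_
  · unfold desc
    split_ifs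
    · exact hadj
    · exact rt_adj _ hadj
  · unfold desc
    split_ifs
    · simpa using hκ
    · simp only [add_sub_add_right_eq_sub]
      exact (cl_sub _ _ _).trans hκ
  · intro i
    by_cases hi : i = j
    · have : (desc X j c m p s).2.2 i = (desc X j c m p' s).2.2 i := by
        unfold desc; split_ifs <;> simp [hi]
      rw [this, X.dist_self]; positivity
    · by_cases h1 : s ≤ m
      · have hA1 : X.vtx (col X j c m p s) = X.vtx p := by
          rw [A.1]; simp [desc, h1]
        have hA2 : X.κ (col X j c m p s) = X.κ p + s • X.τ j := by
          rw [A.2.1]; simp [desc, h1]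
        refine (shrink hi hA1 hA2 _ _).trans ?_
        have e1 : (desc X j c m p s).2.2 i = p • X.o := by simp [desc, h1, hi]
        have e2 : (desc X j c m p' s).2.2 i = p' • X.o := by simp [desc, h1, hi]
        rw [e1, e2, inv_smul_smul, smul_smul]
        rw [inv_mul_le_iff₀ (X.Bpow_pos s)]
        refine (hs.2.2 i).trans (le_mul_of_one_le_left (by positivity) (X.one_le_Bpow s))
      · have : (desc X j c m p s).2.2 i = (desc X j c m p' s).2.2 i := by
          unfold desc; split_ifs <;> rfl
        rw [this, X.dist_self]; positivity

theorem col_end (X : Geo G V α) (j : Fin 3) (c : V) (m : ℕ) (p p' : G) :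
    col X j c m p (2 * m + 1) = col X j c m p' (2 * m + 1) := by
  have : ¬ (2 * m + 1 ≤ m) := by omega
  simp [col, desc, this, rt_zero, cl_zero]

theorem lemA1 {j : Fin 3} {c : V} {m n : ℕ} {p q : G} {x : F}
    (h : P.Pth (fun g => X.Bd m g ∧ X.Tube j c g) n p q x) :
    Sim P.R (n * (2 * m + 1)) (x * P.W (col X j c m q) (2 * m + 1))
      (P.W (col X j c m p) (2 * m + 1)) := by
  induction h with
  | nil p h => simpa using Sim.refl _
  | cons p p' h hs t ih =>
    have h' := t.start
    have g := P.grid (col X j c m p) (col X j c m p') (2 * m + 1)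
      (fun i hi => col_vert h.2 h.1 i hi) (fun i hi => col_vert h'.2 h'.1 i hi)
      (fun i _ => col_horiz h.2 h'.2 hs i)
    rw [col_end X j c m p p', inv_mul_cancel, P.ℓ_one, mul_one] at g
    have e : ∀ p : G, col X j c m p 0 = p := fun p => by simp [col]
    rw [e, e] at g
    have := (ih.mul_left (P.ℓ (p⁻¹ * p'))).trans g
    rw [← mul_assoc] at this
    convert this using 1
    ring

theorem lemA (j : Fin 3) (c : V) {m n n' : ℕ} {p q : G} {x y : F}
    (h : P.Pth (fun g => X.Bd m g ∧ X.Tube j c g) n p q x)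
    (h' : P.Pth (fun g => X.Bd m g ∧ X.Tube j c g) n' p q y) :
    Sim P.R ((n + n') * (2 * m + 1)) x y := by
  have := (lemA1 h).trans ((lemA1 h').symm P.inv_mem)
  have := this.mul_right (P.W (col X j c m q) (2 * m + 1))⁻¹
  simp only [mul_inv_cancel_right] at this
  convert this using 1
  ring

end Pres
end Geo
end CP

namespace CP
namespace Geo
variable {G : Type} [Group G] {V : Type} [MulAction G V] {α : Type} (X : Geo G V α)

theorem exists_t : ∃ t : ℕ, X.T0 ≤ X.B ^ t := by
  obtain ⟨t, ht⟩ := pow_unbounded_of_one_lt X.T0 (show 1 < X.B by linarith [X.B_ge])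
  exact ⟨t, ht.le⟩

noncomputable def t : ℕ := X.exists_t.choose
theorem T0_le : X.T0 ≤ X.B ^ X.t := X.exists_t.choose_spec

theorem Bpow_add {a b c : ℕ} {x y : ℝ} (hx : x ≤ X.B ^ a) (hy : y ≤ X.B ^ b) (ha : a + 1 ≤ c)
    (hb : b + 1 ≤ c) : x + y ≤ X.B ^ c := by
  obtain ⟨c, rfl⟩ : ∃ d, c = d + 1 := ⟨c - 1, by omega⟩
  have h1 := hx.trans (X.Bpow_mono (show a ≤ c by omega))
  have h2 := hy.trans (X.Bpow_mono (show b ≤ c by omega))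
  have := X.B_ge
  have h3 := X.Bpow_nonneg c
  rw [pow_succ]
  nlinarith

theorem lipB (i : Fin 3) (s : G) (a b : V) {M : ℕ} (h : (X.vtx s).length + nk (X.κ s) ≤ M) :
    X.dist i (s • a) (s • b) ≤ X.B ^ M * X.dist i a b := by
  refine (X.lip i s a b).trans (mul_le_mul_of_nonneg_right ?_ (X.dist_nonneg _ _ _))
  refine le_trans ?_ (X.Bpow_mono h)
  rw [pow_add]
  exact mul_le_mul_of_nonneg_left (X.r_le _ _) (X.Bpow_nonneg _)

theorem lipB' (i : Fin 3) (s : G) (a b : V) {M : ℕ} (h : (X.vtx s).length + nk (X.κ s) ≤ M) :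
    X.dist i (s⁻¹ • a) (s⁻¹ • b) ≤ X.B ^ M * X.dist i a b := by
  refine (X.lip' i s a b).trans (mul_le_mul_of_nonneg_right ?_ (X.dist_nonneg _ _ _))
  refine le_trans ?_ (X.Bpow_mono h)
  rw [pow_add, ← nk_neg (X.κ s)]
  exact mul_le_mul_of_nonneg_left (X.r_le _ _) (X.Bpow_nonneg _)

theorem Bd_apx {l : List α} {k : ℤ × ℤ} {c : Fin 3 → V} {g : G} (h : X.Apx l k c g) {M N E : ℕ}
    (h1 : l.length + nk k ≤ M) (h2 : ∀ i, X.dist i X.o (c i) ≤ X.B ^ N) (hE : X.t + 1 + M + N ≤ E) :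
    X.Bd E g := by
  obtain ⟨rfl, rfl, h3⟩ := h
  refine ⟨by omega, by omega, fun i => ?_⟩
  have t1 := X.dist_tri i X.o (g⁻¹ • c i) (g⁻¹ • X.o)
  have t2 := X.lipB' i g (c i) X.o h1
  refine t1.trans (X.Bpow_add ((h3 i).trans X.T0_le) (t2.trans ?_) (b := M + N) (by omega)
    (by omega))
  rw [pow_add, X.dist_symm]
  exact mul_le_mul_of_nonneg_left (h2 i) (X.Bpow_nonneg _)

/-- size bound -/
def Sz (M : ℕ) (h : G) : Prop :=
  (X.vtx h).length + nk (X.κ h) ≤ M ∧ ∀ i, X.dist i X.o (h • X.o) + 1 ≤ X.B ^ M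

theorem Sz.mono {X : Geo G V α} {M M' : ℕ} {h : G} (hh : X.Sz M h) (hM : M ≤ M') : X.Sz M' h :=
  ⟨hh.1.trans hM, fun i => (hh.2 i).trans (X.Bpow_mono hM)⟩

theorem Sz.mul {X : Geo G V α} {M M' : ℕ} {h h' : G} (hh : X.Sz M h) (hh' : X.Sz M' h') :
    X.Sz (M + M') (h * h') := by
  constructor
  · have := X.len_mul h h'
    have := nk_add (X.κ h) (X.κ h')
    rw [X.κ_mul]
    have := hh.1; have := hh'.1
    omega
  · intro i
    have t1 := X.dist_tri i X.o (h • X.o) ((h * h') • X.o)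
    have t2 := X.lipB i h X.o (h' • X.o) hh.1
    rw [smul_smul] at t2
    have a1 := hh.2 i
    have a2 := hh'.2 i
    have a3 : X.B ^ M * X.dist i X.o (h' • X.o) ≤ X.B ^ M * (X.B ^ M' - 1) :=
      mul_le_mul_of_nonneg_left (by linarith) (X.Bpow_nonneg _)
    rw [pow_add]
    linarith

theorem Sz_one : X.Sz 0 1 := by
  refine ⟨by simp [X.vtx_one, X.κ_one, nk_zero], fun i => by simp [X.dist_self]⟩

theorem Sz.Bd {X : Geo G V α} {M m E : ℕ} {h p : G} (hh : X.Sz M h) (hp : X.Bd m p)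
    (hE : 2 * m + 2 * M + 1 ≤ E) : X.Bd E (h * p) := by
  have b1 := hh.1; have b2 := hp.1; have b3 := hp.2.1
  refine ⟨?_, ?_, fun i => ?_⟩
  · have := X.len_mul h p
    omega
  · have := nk_add (X.κ h) (X.κ p)
    rw [X.κ_mul]
    omega
  · have t1 := X.dist_tri i X.o (p⁻¹ • X.o) (p⁻¹ • h⁻¹ • X.o)
    have t2 := X.lipB' i p X.o (h⁻¹ • X.o) (M := 2 * m) (by omega)
    have t3 := X.lipB' i h (h • X.o) X.o b1
    rw [inv_smul_smul] at t3
    rw [mul_inv_rev, mul_smul]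
    refine t1.trans (X.Bpow_add (hp.2.2 i) (t2.trans ?_)
      (b := 2 * m + 2 * M) (by omega) (by omega))
    rw [pow_add]
    refine mul_le_mul_of_nonneg_left (t3.trans ?_) (X.Bpow_nonneg _)
    rw [two_mul, pow_add, X.dist_symm]
    exact mul_le_mul_of_nonneg_left (by linarith [hh.2 i]) (X.Bpow_nonneg _)

theorem Apx.smul {X : Geo G V α} {l : List α} {k : ℤ × ℤ} {c : Fin 3 → V} {g : G}
    (h : X.Apx l k c g) (s : G) :
    X.Apx (X.vtx (s * g)) (X.κ (s * g)) (fun i => s • c i) (s * g) := by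
  refine ⟨rfl, rfl, fun i => ?_⟩
  rw [mul_inv_rev, mul_smul, inv_smul_smul]
  exact h.2.2 i

variable {X}
namespace Pres
variable {F : Type} [Group F] {P : X.Pres F}

variable (P) in
/-- path with bounded length -/
def PL (Q : G → Prop) (N : ℕ) (p q : G) (x : F) : Prop := ∃ n ≤ N, P.Pth Q n p q x

theorem PL.mono {Q Q' : G → Prop} {n n' : ℕ} {p q : G} {x : F} (h : P.PL Q n p q x)
    (hQ : ∀ p, Q p → Q' p) (hn : n ≤ n') : P.PL Q' n' p q x := by
  obtain ⟨m, hm, h⟩ := h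
  exact ⟨m, hm.trans hn, h.mono hQ⟩

theorem PL.trans {Q : G → Prop} {n m : ℕ} {p q r : G} {x y : F} (h : P.PL Q n p q x)
    (h' : P.PL Q m q r y) : P.PL Q (n + m) p r (x * y) := by
  obtain ⟨a, ha, h⟩ := h
  obtain ⟨b, hb, h'⟩ := h'
  exact ⟨a + b, by omega, h.trans h'⟩

theorem PL.smul {Q Q' : G → Prop} {n : ℕ} {p q : G} {x : F} (g : G) (h : P.PL Q n p q x)
    (hQ : ∀ p, Q p → Q' (g * p)) : P.PL Q' n (g * p) (g * q) x := by
  obtain ⟨a, ha, h⟩ := h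
  exact ⟨a, ha, h.smul g hQ⟩

/-- excursion changing one centre -/
theorem exc (j : Fin 3) {c c' : Fin 3 → V} {N E L : ℕ} {p q : G}
    (hp : X.Apx [] 0 c p) (hq : X.Apx [] 0 c' q) (hcc : ∀ i, i ≠ j → c i = c' i)
    (hj : X.dist j (c j) (c' j) ≤ X.B ^ N)
    (h1 : ∀ i, X.dist i X.o (c i) ≤ X.B ^ N) (h2 : ∀ i, X.dist i X.o (c' i) ≤ X.B ^ N)
    (hE : X.t + 1 + (X.D0 + 1) * N ≤ E) (hL : 2 * N + 1 ≤ L) :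
    ∃ x, P.PL (fun g => X.Bd E g ∧ ∀ i, i ≠ j → X.Tube i (c i) g) L p q x := by
  have hne : j ≠ j + 1 := by clear hj hcc; revert j; decide
  set d : ℕ → List α × (ℤ × ℤ) × (Fin 3 → V) := fun s =>
    if s ≤ N then ([], s • X.τ (j + 1), c) else ([], (2 * N + 1 - s) • X.τ (j + 1), c') with hd
  have hd1 : ∀ s, (d s).1 = [] := fun s => by simp only [hd]; split_ifs <;> rfl
  have hd0 : d 0 = ([], 0, c) := by simp [hd]
  have hdN : d (2 * N + 1) = ([], 0, c') := by
    have : ¬ (2 * N + 1 ≤ N) := by omega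
    simp [hd, this]
  suffices H : ∃ x, P.Pth (fun g => X.Bd E g ∧ ∀ i, i ≠ j → X.Tube i (c i) g) (2 * N + 1) p q x by
    obtain ⟨x, hx⟩ := H
    exact ⟨x, _, hL, hx⟩
  refine Pth.of_desc (P := P) (Q := fun g => X.Bd E g ∧ ∀ i, i ≠ j → X.Tube i (c i) g)
    d (2 * N + 1) (by omega) (p := p) (q := q) (by rw [hd0]; exact hp) (by rw [hdN]; exact hq)
    (fun i => by rw [hd1]; exact X.red_nil) ?_ ?_ ?_ ?_
  · intro s hs g hg
    have hk : nk (d s).2.1 ≤ X.D0 * N := by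
      have := X.nk_tau (j + 1)
      simp only [hd]
      split_ifs with h
      · rw [nk_nsmul, mul_comm]; exact Nat.mul_le_mul this h
      · rw [nk_nsmul, mul_comm]; exact Nat.mul_le_mul this (by omega)
    constructor
    · refine X.Bd_apx hg (M := X.D0 * N) (N := N) ?_ ?_ ?_
      · rw [hd1]; simpa using hk
      · intro i; simp only [hd]; split_ifs
        · exact h1 i
        · exact h2 i
      · rw [add_mul, one_mul] at hE; omega
    · intro i hi
      have := hg.2.2 i
      have e : (d s).2.2 i = c i := by
        simp only [hd]; split_ifs
        · rfl
        · exact (hcc i hi).symm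
      rwa [e] at this
  · intro i _; rw [hd1, hd1]; exact Or.inl rfl
  · intro s hs
    have hz : ∀ n : ℕ, nk (n • X.τ (j + 1) - (n + 1) • X.τ (j + 1)) ≤ X.D0 := by
      intro n
      have : n • X.τ (j + 1) - (n + 1) • X.τ (j + 1) = -X.τ (j + 1) := by rw [succ_nsmul]; abel
      rw [this, nk_neg]; exact X.nk_tau _
    simp only [hd]
    split_ifs with a b
    · exact hz s
    · have : 2 * N + 1 - (s + 1) = s := by omega
      simp only [this, sub_self, nk_zero]; omega
    · omega
    · have : 2 * N + 1 - s = 2 * N + 1 - (s + 1) + 1 := by omega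
      rw [nk_symm]; simp only [this]; exact hz _
  · intro s hs i
    by_cases hi : i = j
    · by_cases hsN : s = N
      · have e1 : (d s).2.1 = N • X.τ (j + 1) := by simp [hd, hsN]
        have e2 : (d s).2.2 i = c j := by simp [hd, hsN, hi]
        have e3 : (d (s + 1)).2.2 i = c' j := by simp [hd, hsN, hi]
        rw [hd1, e1, e2, e3, hi]
        simp only [List.length_nil, pow_zero, one_mul]
        have := X.r_neg_tau hne N
        calc _ ≤ (X.B ^ N)⁻¹ * X.B ^ N :=
              mul_le_mul this hj (X.dist_nonneg _ _ _) (inv_nonneg.2 (X.Bpow_nonneg _))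
          _ = 1 := inv_mul_cancel₀ (X.Bpow_pos N).ne'
      · have : (d s).2.2 i = (d (s + 1)).2.2 i := by
          simp only [hd]; split_ifs <;> first | rfl | omega
        rw [this, X.dist_self]; simp
    · have : (d s).2.2 i = (d (s + 1)).2.2 i := by
        simp only [hd]; split_ifs <;> first | rfl | exact hcc i hi | omega
      rw [this, X.dist_self]; simp

/-- moving the base -/
theorem basemove {l : List α} {k : ℤ × ℤ} {c : Fin 3 → V} {N E : ℕ} {p q : G} (hN : 0 < N)
    (hp : X.Apx [] 0 c p) (hq : X.Apx l k c q) (hl : l.length + nk k ≤ N)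
    (h1 : ∀ i, X.dist i X.o (c i) ≤ X.B ^ N) (hE : X.t + 1 + 2 * N ≤ E) :
    ∃ x, P.PL (fun g => X.Bd E g ∧ ∀ i, X.Tube i (c i) g) N p q x := by
  have hred : X.Red l := hq.1 ▸ X.red_vtx q
  suffices H : ∃ x, P.Pth (fun g => X.Bd E g ∧ ∀ i, X.Tube i (c i) g) N p q x by
    obtain ⟨x, hx⟩ := H
    exact ⟨x, _, le_rfl, hx⟩
  refine Pth.of_desc (P := P) (Q := fun g => X.Bd E g ∧ ∀ i, X.Tube i (c i) g)
    (fun s => (rt s l, cl s k, c)) N hN (p := p) (q := q)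
    (by simpa [rt_zero, cl_zero] using hp)
    (by simpa [rt_eq (show l.length ≤ N by omega), cl_eq (show nk k ≤ N by omega)] using hq)
    (fun i => X.red_rt _ hred) ?_ ?_ ?_ ?_
  · intro s hs g hg
    refine ⟨X.Bd_apx hg (M := N) (N := N) ?_ h1 (by omega), fun i => hg.2.2 i⟩
    have := rt_len s l
    have := cl_le s k
    simp only
    omega
  · intro s _; exact rt_succ s l
  · intro s _; exact (cl_succ s k).trans X.two_le_D0
  · intro s _ i; simp [X.dist_self]

variable (P) in
structure Omega (N : ℕ) (h : G) (x : F) where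
  a₁ : G
  a₂ : G
  a₃ : G
  x₁ : F
  x₂ : F
  x₃ : F
  x₄ : F
  eq : x = x₁ * x₂ * x₃ * x₄
  A₁ : X.Apx [] 0 ![h • X.o, X.o, X.o] a₁
  A₂ : X.Apx [] 0 ![h • X.o, h • X.o, X.o] a₂
  A₃ : X.Apx [] 0 ![h • X.o, h • X.o, h • X.o] a₃
  P₁ : P.PL (fun g => X.Bd N g ∧ X.Tube 1 X.o g ∧ X.Tube 2 X.o g) N 1 a₁ x₁
  P₂ : P.PL (fun g => X.Bd N g ∧ X.Tube 0 (h • X.o) g ∧ X.Tube 2 X.o g) N a₁ a₂ x₂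
  P₃ : P.PL (fun g => X.Bd N g ∧ X.Tube 0 (h • X.o) g ∧ X.Tube 1 (h • X.o) g) N a₂ a₃ x₃
  P₄ : P.PL (fun g => X.Bd N g ∧ X.Tube 0 (h • X.o) g ∧ X.Tube 1 (h • X.o) g ∧
    X.Tube 2 (h • X.o) g) N a₃ h x₄

theorem apx_nil (X : Geo G V α) (c : Fin 3 → V) : X.Apx [] 0 c (X.pi' ([], 0, c)) :=
  X.pi'_apx X.red_nil 0 c

theorem apx_one (X : Geo G V α) : X.Apx [] 0 ![X.o, X.o, X.o] 1 := by
  refine ⟨X.vtx_one, X.κ_one, fun i => ?_⟩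
  have : (![X.o, X.o, X.o] : Fin 3 → V) i = X.o := by fin_cases i <;> rfl
  rw [this, inv_one, one_smul, X.dist_self]; exact X.T0_ge

theorem apx_self (X : Geo G V α) (h : G) :
    X.Apx (X.vtx h) (X.κ h) ![h • X.o, h • X.o, h • X.o] h := by
  refine ⟨rfl, rfl, fun i => ?_⟩
  have : (![h • X.o, h • X.o, h • X.o] : Fin 3 → V) i = h • X.o := by fin_cases i <;> rfl
  rw [this, inv_smul_smul, X.dist_self]; exact X.T0_ge

variable (X) in
noncomputable def C1 : ℕ := X.t + X.D0 + 20

theorem exists_omega {M : ℕ} (hM : 0 < M) {h : G} (hh : X.Sz M h) :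
    ∃ x, Nonempty (P.Omega (C1 X * M) h x) := by
  set u := h • X.o with hu
  have h0 : ∀ i, X.dist i X.o X.o ≤ X.B ^ M := fun i => by
    rw [X.dist_self]; exact X.Bpow_nonneg M
  have h1 : ∀ i, X.dist i X.o u ≤ X.B ^ M := fun i => by linarith [hh.2 i]
  have h1' : ∀ i, X.dist i u X.o ≤ X.B ^ M := fun i => by rw [X.dist_symm]; exact h1 i
  have hE : X.t + 1 + (X.D0 + 1) * M ≤ C1 X * M := by unfold C1; nlinarith
  have hL : 2 * M + 1 ≤ C1 X * M := by unfold C1; nlinarith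
  have hE' : X.t + 1 + 2 * M ≤ C1 X * M := by unfold C1; nlinarith
  have hL' : M ≤ C1 X * M := by unfold C1; nlinarith
  have A0 := apx_one X
  have A1 := apx_nil X ![u, X.o, X.o]
  have A2 := apx_nil X ![u, u, X.o]
  have A3 := apx_nil X ![u, u, u]
  obtain ⟨x1, p1⟩ := exc (P := P) 0 A0 A1 (by intro i hi; fin_cases i <;> simp_all) (h1 0)
    (by intro i; fin_cases i <;> exact h0 _)
    (by intro i; fin_cases i <;> first | exact h1 _ | exact h0 _) hE hL
  obtain ⟨x2, p2⟩ := exc (P := P) 1 A1 A2 (by intro i hi; fin_cases i <;> simp_all) (h1 1)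
    (by intro i; fin_cases i <;> first | exact h1 _ | exact h0 _)
    (by intro i; fin_cases i <;> first | exact h1 _ | exact h0 _) hE hL
  obtain ⟨x3, p3⟩ := exc (P := P) 2 A2 A3 (by intro i hi; fin_cases i <;> simp_all) (h1 2)
    (by intro i; fin_cases i <;> first | exact h1 _ | exact h0 _)
    (by intro i; fin_cases i <;> exact h1 _) hE hL
  obtain ⟨x4, p4⟩ := basemove (P := P) hM A3 (apx_self X h) hh.1
    (by intro i; fin_cases i <;> exact h1 _) hE'
  exact ⟨_, ⟨⟨_, _, _, x1, x2, x3, x4, rfl, A1, A2, A3,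
    p1.mono (fun p hp => ⟨hp.1, hp.2 1 (by decide), hp.2 2 (by decide)⟩) le_rfl,
    p2.mono (fun p hp => ⟨hp.1, hp.2 0 (by decide), hp.2 2 (by decide)⟩) le_rfl,
    p3.mono (fun p hp => ⟨hp.1, hp.2 0 (by decide), hp.2 1 (by decide)⟩) le_rfl,
    p4.mono (fun p hp => ⟨hp.1, hp.2 0, hp.2 1, hp.2 2⟩) hL'⟩⟩⟩

theorem lemA' {E L : ℕ} (j : Fin 3) (c : V) {p q : G} {x y : F} {n n' : ℕ}
    (h : P.PL (fun g => X.Bd E g ∧ X.Tube j c g) n p q x)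
    (h' : P.PL (fun g => X.Bd E g ∧ X.Tube j c g) n' p q y) (hL : (n + n') * (2 * E + 1) ≤ L) :
    Sim P.R L x y := by
  obtain ⟨a, ha, h⟩ := h
  obtain ⟨b, hb, h'⟩ := h'
  exact (lemA j c h h').mono P.one_mem ((Nat.mul_le_mul (by omega) le_rfl).trans hL)

theorem triangle {N : ℕ} (hN : 0 < N) {h h' : G} {x x' y : F} (hh : X.Sz N h) (hh' : X.Sz N h')
    (ω : P.Omega N h x) (ω' : P.Omega N h' x') (η : P.Omega N (h * h') y) :
    Sim P.R (1500 * C1 X * N ^ 2) (x * x') y := by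
  obtain ⟨a1, a2, a3, x1, x2, x3, x4, rfl, A1, A2, A3, p1, p2, p3, p4⟩ := ω
  obtain ⟨a1', a2', a3', x1', x2', x3', x4', rfl, A1', A2', A3', p1', p2', p3', p4'⟩ := ω'
  obtain ⟨e1, e2, e3, y1, y2, y3, y4, rfl, B1, B2, B3, q1, q2, q3, q4⟩ := η
  set u := h • X.o with hu
  set w := (h * h') • X.o with hw
  have hw' : h • h' • X.o = w := by rw [hw, mul_smul]
  have hhh := hh.mul hh'
  have h0 : ∀ i, X.dist i X.o X.o ≤ X.B ^ (3 * N) := fun i => by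
    rw [X.dist_self]; exact X.Bpow_nonneg _
  have hu1 : ∀ i, X.dist i X.o u ≤ X.B ^ N := fun i => by linarith [hh.2 i]
  have hw1 : ∀ i, X.dist i X.o w ≤ X.B ^ (N + N) := fun i => by linarith [hhh.2 i]
  have hu2 : ∀ i, X.dist i X.o u ≤ X.B ^ (3 * N) := fun i =>
    (hu1 i).trans (X.Bpow_mono (by omega))
  have hw2 : ∀ i, X.dist i X.o w ≤ X.B ^ (3 * N) := fun i =>
    (hw1 i).trans (X.Bpow_mono (by omega))
  have huw : ∀ i, X.dist i u w ≤ X.B ^ (3 * N) := fun i => by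
    refine (X.dist_tri i u X.o w).trans ?_
    rw [X.dist_symm i u]
    exact X.Bpow_add (hu1 i) (hw1 i) (by omega) (by omega)
  -- bounds
  set E := 3 * C1 X * N with hEdef
  have hE : X.t + 1 + (X.D0 + 1) * (3 * N) ≤ E := by simp only [hEdef]; unfold C1; nlinarith
  have hE2 : X.t + 1 + 2 * (3 * N) ≤ E := by simp only [hEdef]; unfold C1; nlinarith
  have hE3 : 2 * N + 2 * N + 1 ≤ E := by simp only [hEdef]; unfold C1; nlinarith
  have hE4 : N ≤ E := by omega
  have hL : 2 * (3 * N) + 1 ≤ 7 * N := by omega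
  have bE : ∀ p, X.Bd N p → X.Bd E p := fun p hp => hp.mono _ hE4
  have bE' : ∀ p, X.Bd N p → X.Bd E (h * p) := fun p hp => hh.Bd hp hE3
  -- new points
  have Ab1 := apx_nil X ![w, u, u]
  have Ab2 := apx_nil X ![w, w, u]
  have Ad1 := apx_nil X ![w, u, X.o]
  set b1 := X.pi' ([], 0, ![w, u, u])
  set b2 := X.pi' ([], 0, ![w, w, u])
  set d1 := X.pi' ([], 0, ![w, u, X.o])
  obtain ⟨z_ab, r_ab⟩ := exc (P := P) 0 A3 Ab1 (by intro i hi; fin_cases i <;> simp_all) (huw 0)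
    (by intro i; fin_cases i <;> first | exact h0 _ | exact hu2 _ | exact hw2 _)
    (by intro i; fin_cases i <;> first | exact h0 _ | exact hu2 _ | exact hw2 _) hE hL
  obtain ⟨z_b12, r_b12⟩ := exc (P := P) 1 Ab1 Ab2 (by intro i hi; fin_cases i <;> simp_all) (huw 1)
    (by intro i; fin_cases i <;> first | exact h0 _ | exact hu2 _ | exact hw2 _)
    (by intro i; fin_cases i <;> first | exact h0 _ | exact hu2 _ | exact hw2 _) hE hL
  obtain ⟨z_b23, r_b23⟩ := exc (P := P) 2 Ab2 B3 (by intro i hi; fin_cases i <;> simp_all) (huw 2)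
    (by intro i; fin_cases i <;> first | exact h0 _ | exact hu2 _ | exact hw2 _)
    (by intro i; fin_cases i <;> first | exact h0 _ | exact hu2 _ | exact hw2 _) hE hL
  obtain ⟨z_ad, r_ad⟩ := exc (P := P) 0 A2 Ad1 (by intro i hi; fin_cases i <;> simp_all) (huw 0)
    (by intro i; fin_cases i <;> first | exact h0 _ | exact hu2 _ | exact hw2 _)
    (by intro i; fin_cases i <;> first | exact h0 _ | exact hu2 _ | exact hw2 _) hE hL
  obtain ⟨z_db, r_db⟩ := exc (P := P) 2 Ad1 Ab1 (by intro i hi; fin_cases i <;> simp_all) (hu2 2)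
    (by intro i; fin_cases i <;> first | exact h0 _ | exact hu2 _ | exact hw2 _)
    (by intro i; fin_cases i <;> first | exact h0 _ | exact hu2 _ | exact hw2 _) hE hL
  obtain ⟨z_de, r_de⟩ := exc (P := P) 1 Ad1 B2 (by intro i hi; fin_cases i <;> simp_all) (huw 1)
    (by intro i; fin_cases i <;> first | exact h0 _ | exact hu2 _ | exact hw2 _)
    (by intro i; fin_cases i <;> first | exact h0 _ | exact hu2 _ | exact hw2 _) hE hL
  have Aha : X.Apx (X.vtx (h * a2')) (X.κ (h * a2')) ![w, w, u] (h * a2') := by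
    have := A2'.smul h
    convert this using 1
    funext i
    fin_cases i
    · exact hw'.symm
    · exact hw'.symm
    · rfl
  have hlen : (X.vtx (h * a2')).length + nk (X.κ (h * a2')) ≤ 3 * N := by
    have := X.len_mul h a2'
    rw [A2'.1] at this
    rw [X.κ_mul, A2'.2.1, add_zero]
    have := hh.1
    simp only [List.length_nil, add_zero] at *
    omega
  obtain ⟨z_base, r_base⟩ := basemove (P := P) (by omega) Ab2 Aha hlen
    (by intro i; fin_cases i <;> first | exact hu2 _ | exact hw2 _) hE2
  have hfin : ∀ n : ℕ, n ≤ 42 * N → n * (2 * E + 1) ≤ 300 * C1 X * N ^ 2 := by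
    intro n hn
    have hC : 1 ≤ C1 X := by unfold C1; omega
    have h2 : 2 * E + 1 ≤ 7 * (C1 X * N) := by
      have : 1 ≤ C1 X * N := Nat.mul_pos hC hN
      simp only [hEdef]; nlinarith
    calc n * (2 * E + 1) ≤ (42 * N) * (7 * (C1 X * N)) := Nat.mul_le_mul hn h2
      _ = 294 * C1 X * N ^ 2 := by ring
      _ ≤ _ := by gcongr; norm_num
  have tw : ∀ (i : Fin 3) (g : G), X.Tube i (h' • X.o) g → X.Tube i w (h * g) := fun i g hg => by
    rw [← hw']; exact X.Tube_smul h hg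
  have tu : ∀ (i : Fin 3) (g : G), X.Tube i X.o g → X.Tube i u (h * g) := fun i g hg =>
    X.Tube_smul h hg
  have s1 := p1'.smul h (Q' := fun g => X.Bd E g ∧ X.Tube 2 u g)
    (fun p hp => ⟨bE' p hp.1, tu _ _ hp.2.2⟩)
  rw [mul_one] at s1
  have s2 := p2'.smul h (Q' := fun g => X.Bd E g ∧ X.Tube 2 u g)
    (fun p hp => ⟨bE' p hp.1, tu _ _ hp.2.2⟩)
  have s3 := p3'.smul h (Q' := fun g => X.Bd E g ∧ X.Tube 0 w g)
    (fun p hp => ⟨bE' p hp.1, tw _ _ hp.2.1⟩)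
  have s4 := p4'.smul h (Q' := fun g => X.Bd E g ∧ X.Tube 0 w g)
    (fun p hp => ⟨bE' p hp.1, tw _ _ hp.2.1⟩)
  have L1 : Sim P.R (300 * C1 X * N ^ 2) (x4 * x1' * x2') (z_ab * z_b12 * z_base) :=
    lemA' 2 u (((p4.mono (fun p hp => ⟨bE p hp.1, hp.2.2.2⟩) le_rfl).trans s1).trans s2)
      (((r_ab.mono (fun p hp => ⟨hp.1, hp.2 2 (by decide)⟩) le_rfl).trans
        (r_b12.mono (fun p hp => ⟨hp.1, hp.2 2 (by decide)⟩) le_rfl)).trans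
        (r_base.mono (fun p hp => ⟨hp.1, hp.2 2⟩) le_rfl)) (hfin _ (by omega))
  have L2 : Sim P.R (300 * C1 X * N ^ 2) (z_base * x3' * x4') (z_b23 * y4) :=
    lemA' 0 w (((r_base.mono (fun p hp => ⟨hp.1, hp.2 0⟩) le_rfl).trans s3).trans s4)
      ((r_b23.mono (fun p hp => ⟨hp.1, hp.2 0 (by decide)⟩) le_rfl).trans
        (q4.mono (fun p hp => ⟨bE p hp.1, hp.2.1⟩) le_rfl)) (hfin _ (by omega))
  have L3 : Sim P.R (300 * C1 X * N ^ 2) (x3 * z_ab) (z_ad * z_db) :=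
    lemA' 1 u ((p3.mono (fun p hp => ⟨bE p hp.1, hp.2.2⟩) le_rfl).trans
        (r_ab.mono (fun p hp => ⟨hp.1, hp.2 1 (by decide)⟩) le_rfl))
      ((r_ad.mono (fun p hp => ⟨hp.1, hp.2 1 (by decide)⟩) le_rfl).trans
        (r_db.mono (fun p hp => ⟨hp.1, hp.2 1 (by decide)⟩) le_rfl)) (hfin _ (by omega))
  have L4 : Sim P.R (300 * C1 X * N ^ 2) (z_db * z_b12 * z_b23) (z_de * y3) :=
    lemA' 0 w (((r_db.mono (fun p hp => ⟨hp.1, hp.2 0 (by decide)⟩) le_rfl).trans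
        (r_b12.mono (fun p hp => ⟨hp.1, hp.2 0 (by decide)⟩) le_rfl)).trans
        (r_b23.mono (fun p hp => ⟨hp.1, hp.2 0 (by decide)⟩) le_rfl))
      ((r_de.mono (fun p hp => ⟨hp.1, hp.2 0 (by decide)⟩) le_rfl).trans
        (q3.mono (fun p hp => ⟨bE p hp.1, hp.2.1⟩) le_rfl)) (hfin _ (by omega))
  have L5 : Sim P.R (300 * C1 X * N ^ 2) (x1 * x2 * z_ad * z_de) (y1 * y2) :=
    lemA' 2 X.o ((((p1.mono (fun p hp => ⟨bE p hp.1, hp.2.2⟩) le_rfl).trans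
        (p2.mono (fun p hp => ⟨bE p hp.1, hp.2.2⟩) le_rfl)).trans
        (r_ad.mono (fun p hp => ⟨hp.1, hp.2 2 (by decide)⟩) le_rfl)).trans
        (r_de.mono (fun p hp => ⟨hp.1, hp.2 2 (by decide)⟩) le_rfl))
      ((q1.mono (fun p hp => ⟨bE p hp.1, hp.2.2⟩) le_rfl).trans
        (q2.mono (fun p hp => ⟨bE p hp.1, hp.2.2⟩) le_rfl)) (hfin _ (by omega))
  have t1 := (L1.mul_left (x1 * x2 * x3)).mul_right (x3' * x4')
  have t2 := L2.mul_left (x1 * x2 * x3 * z_ab * z_b12)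
  have t3 := (L3.mul_left (x1 * x2)).mul_right (z_b12 * z_b23 * y4)
  have t4 := (L4.mul_left (x1 * x2 * z_ad)).mul_right y4
  have t5 := L5.mul_right (y3 * y4)
  simp only [mul_assoc] at t1 t2 t3 t4 t5
  have := (((t1.trans t2).trans t3).trans t4).trans t5
  simp only [mul_assoc]
  convert this using 1
  ring

end Pres
end Geo
end CP

namespace CP
namespace Geo
variable {G : Type} [Group G] {V : Type} [MulAction G V] {α : Type} (X : Geo G V α)

theorem exists_Sz (h : G) : ∃ M, X.Sz M h := by
  have H : ∀ i : Fin 3, ∃ M : ℕ, X.dist i X.o (h • X.o) + 1 ≤ X.B ^ M := fun i => by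
    obtain ⟨t, ht⟩ := pow_unbounded_of_one_lt (X.dist i X.o (h • X.o) + 1)
      (show 1 < X.B by linarith [X.B_ge])
    exact ⟨t, ht.le⟩
  choose M hM using H
  refine ⟨(X.vtx h).length + nk (X.κ h) + ∑ i, M i, by omega, fun i => ?_⟩
  refine (hM i).trans (X.Bpow_mono ?_)
  have := Finset.single_le_sum (f := M) (fun _ _ => Nat.zero_le _) (Finset.mem_univ i)
  omega

theorem Pres.Omega.mono {F : Type} [Group F] {X : Geo G V α} {P : X.Pres F} {N N' : ℕ} {h : G}
    {x : F} (hN : N ≤ N') (ω : P.Omega N h x) : Nonempty (P.Omega N' h x) := by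
  obtain ⟨a1, a2, a3, x1, x2, x3, x4, rfl, A1, A2, A3, p1, p2, p3, p4⟩ := ω
  exact ⟨⟨a1, a2, a3, x1, x2, x3, x4, rfl, A1, A2, A3,
    p1.mono (fun p hp => ⟨hp.1.mono _ hN, hp.2⟩) hN,
    p2.mono (fun p hp => ⟨hp.1.mono _ hN, hp.2⟩) hN,
    p3.mono (fun p hp => ⟨hp.1.mono _ hN, hp.2⟩) hN,
    p4.mono (fun p hp => ⟨hp.1.mono _ hN, hp.2⟩) hN⟩⟩

theorem Pres.Omega.ev {F : Type} [Group F] {X : Geo G V α} {P : X.Pres F} {N : ℕ} {h : G}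
    {x : F} (ω : P.Omega N h x) : P.ev x = h := by
  obtain ⟨a1, a2, a3, x1, x2, x3, x4, rfl, A1, A2, A3, ⟨_, _, p1⟩, ⟨_, _, p2⟩, ⟨_, _, p3⟩,
    ⟨_, _, p4⟩⟩ := ω
  simp only [map_mul, p1.ev, p2.ev, p3.ev, p4.ev]
  group

theorem quad (X : Geo G V α) : ∃ (a : ℕ) (ev : FreeGroup (Fin a) →* G) (R : Finset (FreeGroup (Fin a))) (K : ℕ),
    Function.Surjective ev ∧ (∀ r ∈ R, ev r = 1) ∧
    ∀ w : List (Fin a × Bool), ev (FreeGroup.mk w) = 1 →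
      Ar (R : Set (FreeGroup (Fin a))) (K * (2 * w.length + 1) ^ 2) (FreeGroup.mk w) := by
  classical
  have hfin : (X.S X.D2).Finite := X.fin X.D2
  have : Finite (X.S X.D2) := hfin
  obtain ⟨a, ⟨e⟩⟩ := Finite.exists_equiv_fin (X.S X.D2)
  set ev : FreeGroup (Fin a) →* G := FreeGroup.lift (fun i => (e.symm i : G)) with hev
  set ℓ : G → FreeGroup (Fin a) := fun s =>
    if s = 1 then 1 else if h : s ∈ X.S X.D2 then FreeGroup.of (e ⟨s, h⟩) else 1 with hℓ
  have evℓ : ∀ s ∈ X.S X.D2, ev (ℓ s) = s := by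
    intro s hs
    simp only [hℓ]
    split_ifs with h1
    · rw [map_one, h1]
    · simp [hev]
  have ℓw : ∀ s, ∃ w : List (Fin a × Bool), w.length ≤ 1 ∧ FreeGroup.mk w = ℓ s := by
    intro s
    simp only [hℓ]
    split_ifs with h1 h2
    · exact ⟨[], by simp, rfl⟩
    · exact ⟨[(e ⟨s, h2⟩, true)], by simp, rfl⟩
    · exact ⟨[], by simp, rfl⟩
  -- letter sizes
  obtain ⟨M0, hM0, hSz⟩ : ∃ M0 : ℕ, 0 < M0 ∧ ∀ x : Fin a × Bool,
      X.Sz M0 (ev (FreeGroup.mk [x])) := by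
    choose M hM using fun x : Fin a × Bool => X.exists_Sz (ev (FreeGroup.mk [x]))
    refine ⟨∑ x, M x + 1, by omega, fun x => (hM x).mono ?_⟩
    have := Finset.single_le_sum (f := M) (fun _ _ => Nat.zero_le _) (Finset.mem_univ x)
    omega
  have hSzw : ∀ w : List (Fin a × Bool), X.Sz (w.length * M0) (ev (FreeGroup.mk w)) := by
    intro w
    induction w with
    | nil => simpa [← FreeGroup.one_eq_mk] using X.Sz_one
    | cons x w ih =>
      have : FreeGroup.mk (x :: w) = FreeGroup.mk [x] * FreeGroup.mk w := by
        rw [FreeGroup.mul_mk]; rfl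
      rw [this, map_mul]
      refine ((hSz x).mul ih).mono ?_
      simp only [List.length_cons]; linarith [hM0]
  set L : ℕ := 4 * (Pres.C1 X * M0) + 4 with hL
  set R : Set (FreeGroup (Fin a)) :=
    {z | ∃ w : List (Fin a × Bool), w.length ≤ L ∧ FreeGroup.mk w = z ∧ ev z = 1} with hR
  have Rfin : R.Finite := by
    refine ((List.finite_length_le (Fin a × Bool) L).image FreeGroup.mk).subset ?_
    rintro z ⟨w, h1, h2, -⟩
    exact ⟨w, h1, h2⟩
  have wmul : ∀ {x y : FreeGroup (Fin a)} {n m : ℕ},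
      (∃ w : List (Fin a × Bool), w.length ≤ n ∧ FreeGroup.mk w = x) →
      (∃ w : List (Fin a × Bool), w.length ≤ m ∧ FreeGroup.mk w = y) →
      ∃ w : List (Fin a × Bool), w.length ≤ n + m ∧ FreeGroup.mk w = x * y := by
    rintro x y n m ⟨w, h1, rfl⟩ ⟨v, h2, rfl⟩
    exact ⟨w ++ v, by simp; omega, by rw [FreeGroup.mul_mk]⟩
  have winv : ∀ {x : FreeGroup (Fin a)} {n : ℕ},
      (∃ w : List (Fin a × Bool), w.length ≤ n ∧ FreeGroup.mk w = x) →
      ∃ w : List (Fin a × Bool), w.length ≤ n ∧ FreeGroup.mk w = x⁻¹ := by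
    rintro x n ⟨w, h1, rfl⟩
    exact ⟨FreeGroup.invRev w, by simpa using h1, by rw [FreeGroup.inv_mk]⟩
  let P : X.Pres (FreeGroup (Fin a)) :=
    { ev := ev
      ℓ := ℓ
      R := R
      ev_ℓ := evℓ
      ℓ_one := by simp [hℓ]
      one_mem := ⟨[], by simp, rfl, map_one ev⟩
      inv_mem := by
        rintro r ⟨w, h1, h2, h3⟩
        obtain ⟨w', h1', h2'⟩ := winv ⟨w, h1, h2⟩
        exact ⟨w', h1', h2', by rw [map_inv, h3, inv_one]⟩
      sq := by
        intro s₁ m₁ s₂ m₂ s₃ m₃ s₄ m₄ hs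
        obtain ⟨w, h1, h2⟩ := wmul (wmul (ℓw s₁) (ℓw s₂)) (winv (wmul (ℓw s₃) (ℓw s₄)))
        refine ⟨w, by omega, h2, ?_⟩
        rw [map_mul, map_inv, map_mul, map_mul, evℓ _ m₁, evℓ _ m₂, evℓ _ m₃, evℓ _ m₄, hs,
          mul_inv_cancel] }
  have pthw : ∀ {Q : G → Prop} {n : ℕ} {p q : G} {x}, P.Pth Q n p q x →
      ∃ w : List (Fin a × Bool), w.length ≤ n ∧ FreeGroup.mk w = x := by
    intro Q n p q x h
    induction h with
    | nil p h => exact ⟨[], by simp, rfl⟩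
    | cons p p' h hs t ih =>
      rw [add_comm]
      exact wmul (ℓw _) ih
  have omw : ∀ {N : ℕ} {h : G} {x}, P.Omega N h x →
      ∃ w : List (Fin a × Bool), w.length ≤ 4 * N ∧ FreeGroup.mk w = x := by
    rintro N h x ⟨a1, a2, a3, x1, x2, x3, x4, rfl, A1, A2, A3, ⟨_, l1, p1⟩, ⟨_, l2, p2⟩,
      ⟨_, l3, p3⟩, ⟨_, l4, p4⟩⟩
    obtain ⟨w, h1, h2⟩ := wmul (wmul (wmul (pthw p1) (pthw p2)) (pthw p3)) (pthw p4)
    exact ⟨w, by omega, h2⟩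
  set C := Pres.C1 X with hC
  have hC1 : 1 ≤ C := by rw [hC]; unfold Pres.C1; omega
  set K : ℕ := 1500 * C * (C * M0) ^ 2 * 4 with hK
  have hCM : 1 ≤ C * M0 := Nat.mul_pos hC1 hM0
  have hK1 : 1 ≤ K := by
    rw [hK]
    have : 1 ≤ (C * M0) ^ 2 := Nat.one_le_pow _ _ hCM
    have : 1 ≤ C * (C * M0) ^ 2 := Nat.mul_pos hC1 this
    nlinarith
  have main : ∀ s : ℕ, ∀ w : List (Fin a × Bool), w.length ≤ 2 ^ s →
      ∃ x, Nonempty (P.Omega (C * M0 * 2 ^ s) (ev (FreeGroup.mk w)) x) ∧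
        Sim P.R (K * 4 ^ s) (FreeGroup.mk w) x := by
    intro s
    induction s with
    | zero =>
      intro w hw
      simp only [pow_zero, mul_one] at hw ⊢
      have sz : X.Sz M0 (ev (FreeGroup.mk w)) := (hSzw w).mono (by nlinarith)
      obtain ⟨x, ⟨ω⟩⟩ := Pres.exists_omega (P := P) hM0 sz
      refine ⟨x, ⟨ω⟩, ?_⟩
      obtain ⟨v, h1, h2⟩ := wmul ⟨w, hw, rfl⟩ (winv (omw ω))
      have : FreeGroup.mk w * x⁻¹ ∈ R := by
        refine ⟨v, by omega, h2, ?_⟩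
        rw [map_mul, map_inv]
        have : ev x = _ := ω.ev
        rw [this, mul_inv_cancel]
      exact (Ar.of_mem this).mono P.one_mem hK1
    | succ s ih =>
      intro w hw
      have e : w = w.take (2 ^ s) ++ w.drop (2 ^ s) := (List.take_append_drop _ _).symm
      obtain ⟨x, ⟨ω⟩, hx⟩ := ih (w.take (2 ^ s)) (by simp)
      obtain ⟨x', ⟨ω'⟩, hx'⟩ := ih (w.drop (2 ^ s)) (by
        rw [List.length_drop, pow_succ] at *; omega)
      have hle : C * M0 * 2 ^ s ≤ C * M0 * 2 ^ (s + 1) :=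
        Nat.mul_le_mul le_rfl (Nat.pow_le_pow_right (by norm_num) (by omega))
      obtain ⟨ω⟩ := ω.mono hle
      obtain ⟨ω'⟩ := ω'.mono hle
      have hpos : 0 < M0 * 2 ^ (s + 1) := by positivity
      have szz : ∀ v : List (Fin a × Bool), v.length ≤ 2 ^ (s + 1) →
          X.Sz (M0 * 2 ^ (s + 1)) (ev (FreeGroup.mk v)) := fun v hv =>
        (hSzw v).mono (by rw [mul_comm]; exact Nat.mul_le_mul le_rfl hv)
      have szz' : ∀ v : List (Fin a × Bool), v.length ≤ 2 ^ (s + 1) →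
          X.Sz (C * M0 * 2 ^ (s + 1)) (ev (FreeGroup.mk v)) := fun v hv =>
        (szz v hv).mono (by
          rw [mul_assoc]; exact Nat.le_mul_of_pos_left _ hC1)
      obtain ⟨y, ⟨η⟩⟩ := Pres.exists_omega (P := P) hpos (szz w hw)
      rw [← hC, ← mul_assoc] at η
      refine ⟨y, ⟨η⟩, ?_⟩
      have emk : FreeGroup.mk w = FreeGroup.mk (w.take (2 ^ s)) * FreeGroup.mk (w.drop (2 ^ s)) := by
        rw [FreeGroup.mul_mk, ← e]
      rw [emk, map_mul] at η
      have tri := Pres.triangle (by positivity) (szz' _ (by simp; omega))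
        (szz' _ (by rw [List.length_drop]; omega)) ω ω' η
      rw [emk]
      refine ((hx.mul hx').trans tri).mono P.one_mem ?_
      have e2 : (2 ^ (s + 1)) ^ 2 = 4 * 4 ^ s := by
        rw [← pow_mul, mul_comm (s + 1) 2, pow_mul]; norm_num [pow_succ]; ring
      have : 1500 * C * (C * M0 * 2 ^ (s + 1)) ^ 2 = K * 4 ^ s := by
        rw [mul_pow, e2, hK]; ring
      rw [← hC, this, pow_succ]
      nlinarith
  refine ⟨a, ev, Rfin.toFinset, 2 * K, ?_, ?_, ?_⟩
  · intro g
    obtain ⟨M, hM⟩ := X.exists_Sz g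
    obtain ⟨x, ⟨ω⟩⟩ := Pres.exists_omega (P := P) (Nat.succ_pos M) (hM.mono (Nat.le_succ M))
    exact ⟨x, ω.ev⟩
  · intro r hr
    rw [Set.Finite.mem_toFinset] at hr
    obtain ⟨w, -, -, h⟩ := hr
    exact h
  · intro w hw
    rw [Set.Finite.coe_toFinset]
    obtain ⟨s, hs1, hs2⟩ : ∃ s : ℕ, w.length ≤ 2 ^ s ∧ 2 ^ s ≤ 2 * w.length + 1 := by
      rcases Nat.eq_zero_or_pos w.length with h | h
      · exact ⟨0, by omega, by omega⟩
      · refine ⟨Nat.clog 2 w.length, Nat.le_pow_clog (by norm_num) _, ?_⟩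
        rcases Nat.eq_zero_or_pos (Nat.clog 2 w.length) with h0 | h0
        · rw [h0]; omega
        · have : 1 < w.length := by
            by_contra hcon
            rw [Nat.clog_of_right_le_one (by omega)] at h0; omega
          have := Nat.pow_pred_clog_lt_self (b := 2) (by norm_num) this
          obtain ⟨k, hk⟩ : ∃ k, Nat.clog 2 w.length = k + 1 := ⟨_, (Nat.succ_pred_eq_of_pos h0).symm⟩
          rw [hk] at this ⊢
          simp only [Nat.pred_succ] at this
          rw [pow_succ]; omega
    obtain ⟨x, ⟨ω⟩, hx⟩ := main s w hs1
    rw [hw] at ω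
    have tri := Pres.triangle (N := C * M0 * 2 ^ s) (P := P) (h := 1) (h' := 1) (x := x) (x' := x)
      (y := x) (by positivity) (X.Sz_one.mono (by omega)) (X.Sz_one.mono (by omega)) ω ω
      (by rw [mul_one]; exact ω)
    have hx1 : Sim P.R (1500 * C * (C * M0 * 2 ^ s) ^ 2) x 1 := by
      have := tri.mul_right x⁻¹
      simpa using this
    have := hx.trans hx1
    have h3 : Ar R (K * 4 ^ s + 1500 * C * (C * M0 * 2 ^ s) ^ 2) (FreeGroup.mk w) := by
      unfold Sim at this
      rwa [inv_one, mul_one] at this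
    refine h3.mono P.one_mem ?_
    have e2 : (2 ^ s) ^ 2 = 4 ^ s := by
      rw [← pow_mul, mul_comm s 2, pow_mul]; norm_num
    have h4 : 4 ^ s ≤ (2 * w.length + 1) ^ 2 := by
      rw [← e2]; exact Nat.pow_le_pow_left hs2 2
    have h5 : 1500 * C * (C * M0 * 2 ^ s) ^ 2 * 4 = K * 4 ^ s := by
      rw [mul_pow, e2, hK]; ring
    have h6 : K * 4 ^ s ≤ K * (2 * w.length + 1) ^ 2 := Nat.mul_le_mul le_rfl h4
    rw [mul_assoc 2 K]
    omega

end Geo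
end CP

namespace CP

/-! ### Lower bound via the Heisenberg group -/

@[ext] structure Heis where
  a : ℤ
  b : ℤ
  c : ℤ

namespace Heis
instance : Mul Heis := ⟨fun x y => ⟨x.a + y.a, x.b + y.b, x.c + y.c + x.a * y.b⟩⟩
instance : One Heis := ⟨⟨0, 0, 0⟩⟩
instance : Inv Heis := ⟨fun x => ⟨-x.a, -x.b, -x.c + x.a * x.b⟩⟩
@[simp] theorem mul_a (x y : Heis) : (x * y).a = x.a + y.a := rfl
@[simp] theorem mul_b (x y : Heis) : (x * y).b = x.b + y.b := rfl
@[simp] theorem mul_c (x y : Heis) : (x * y).c = x.c + y.c + x.a * y.b := rfl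
@[simp] theorem one_a : (1 : Heis).a = 0 := rfl
@[simp] theorem one_b : (1 : Heis).b = 0 := rfl
@[simp] theorem one_c : (1 : Heis).c = 0 := rfl
@[simp] theorem inv_a (x : Heis) : (x⁻¹).a = -x.a := rfl
@[simp] theorem inv_b (x : Heis) : (x⁻¹).b = -x.b := rfl
@[simp] theorem inv_c (x : Heis) : (x⁻¹).c = -x.c + x.a * x.b := rfl
instance : Group Heis :=
  Group.ofLeftAxioms (fun x y z => by ext <;> simp <;> ring) (fun x => by ext <;> simp)
    (fun x => by ext <;> simp)

theorem pow_a (x : Heis) (n : ℕ) : (x ^ n).a = n * x.a := by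
  induction n with
  | zero => simp
  | succ n ih => rw [pow_succ, mul_a, ih]; push_cast; ring
theorem pow_b (x : Heis) (n : ℕ) : (x ^ n).b = n * x.b := by
  induction n with
  | zero => simp
  | succ n ih => rw [pow_succ, mul_b, ih]; push_cast; ring
end Heis

theorem Ar.mem_nc {F : Type} [Group F] {R : Set F} {n : ℕ} {z : F} (h : Ar R n z) :
    z ∈ Subgroup.normalClosure R := by
  induction h with
  | one => exact one_mem _
  | step h g r hr ih =>
    exact mul_mem (Subgroup.normalClosure_normal.conj_mem _ (Subgroup.subset_normalClosure hr) g) ih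

theorem mk_flatten {a : ℕ} (w : List (Fin a × Bool)) (n : ℕ) :
    FreeGroup.mk (List.replicate n w).flatten = FreeGroup.mk w ^ n := by
  induction n with
  | zero => rfl
  | succ n ih => rw [List.replicate_succ, List.flatten_cons, ← FreeGroup.mul_mk, ih, pow_succ']

theorem prod_heis {a : ℕ} {φ : FreeGroup (Fin a) →* Heis} {R : Finset (FreeGroup (Fin a))} {M : ℤ}
    (hM : ∀ r ∈ R, (φ r).a = 0 ∧ (φ r).b = 0 ∧ |(φ r).c| ≤ M) (l : List (FreeGroup (Fin a)))
    (hl : ∀ z ∈ l, ∃ g r, (r ∈ R ∨ r⁻¹ ∈ R) ∧ z = g * r * g⁻¹) :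
    (φ l.prod).a = 0 ∧ (φ l.prod).b = 0 ∧ |(φ l.prod).c| ≤ l.length * M := by
  induction l with
  | nil => simp
  | cons z l ih =>
    obtain ⟨i1, i2, i3⟩ := ih (fun z hz => hl z (List.mem_cons_of_mem _ hz))
    obtain ⟨g, r, hr, rfl⟩ := hl z List.mem_cons_self
    have hr' : (φ r).a = 0 ∧ (φ r).b = 0 ∧ |(φ r).c| ≤ M := by
      rcases hr with h | h
      · exact hM r h
      · obtain ⟨j1, j2, j3⟩ := hM _ h
        simp only [map_inv, Heis.inv_a, Heis.inv_b, Heis.inv_c, neg_eq_zero] at j1 j2 j3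
        rw [j1, j2] at j3
        exact ⟨j1, j2, by simpa using j3⟩
    obtain ⟨j1, j2, j3⟩ := hr'
    have key : (φ (g * r * g⁻¹)).a = 0 ∧ (φ (g * r * g⁻¹)).b = 0 ∧
        (φ (g * r * g⁻¹)).c = (φ r).c := by
      simp only [map_mul, map_inv, Heis.mul_a, Heis.mul_b, Heis.mul_c, Heis.inv_a, Heis.inv_b,
        Heis.inv_c, j1, j2]
      refine ⟨by ring, by ring, by ring⟩
    obtain ⟨k1, k2, k3⟩ := key
    rw [List.prod_cons, map_mul]
    simp only [Heis.mul_a, Heis.mul_b, Heis.mul_c, i1, i2, k1, k2, k3, List.length_cons]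
    refine ⟨by simp, by simp, ?_⟩
    push_cast
    have := abs_add_le (φ r).c (φ l.prod).c
    simp only [add_zero]
    linarith

theorem conclude {G : Type} [Group G] {a : ℕ} (ev : FreeGroup (Fin a) →* G)
    (R : Finset (FreeGroup (Fin a))) (K : ℕ) (hs : Function.Surjective ev) (hR : ∀ r ∈ R, ev r = 1)
    (hq : ∀ w : List (Fin a × Bool), ev (FreeGroup.mk w) = 1 →
      Ar (R : Set (FreeGroup (Fin a))) (K * (2 * w.length + 1) ^ 2) (FreeGroup.mk w))
    (κ : G → ℤ × ℤ) (hκ : ∀ g h, κ (g * h) = κ g + κ h) (gx gy : G) (hx : κ gx = (1, 0))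
    (hy : κ gy = (0, 1)) (hcomm : Commute gx gy) :
    FunEquiv (dehn R) (fun n => n ^ 2) ∧
    ∀ u v : List (Fin a × Bool), IsConj
            ((QuotientGroup.mk (FreeGroup.mk u) :
              PresentedGroup (R : Set (FreeGroup (Fin a)))))
            (QuotientGroup.mk (FreeGroup.mk v)) ↔
      IsConj (ev (FreeGroup.mk u)) (ev (FreeGroup.mk v)) := by
  have hmk : ∀ z : FreeGroup (Fin a), ∃ w, FreeGroup.mk w = z := fun z => ⟨z.toWord, FreeGroup.mk_toWord⟩
  have hker : Subgroup.normalClosure (R : Set (FreeGroup (Fin a))) = ev.ker := by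
    apply le_antisymm
    · exact Subgroup.normalClosure_le_normal (fun r hr => hR r hr)
    · intro z hz
      obtain ⟨w, rfl⟩ := hmk z
      exact (hq w hz).mem_nc
  have hmem : ∀ z, z ∈ Subgroup.normalClosure (R : Set (FreeGroup (Fin a))) ↔ ev z = 1 := by
    intro z; rw [hker]; rfl
  have hup : ∀ w : List (Fin a × Bool), ev (FreeGroup.mk w) = 1 →
      AreaLE R w (wordArea R w) ∧ wordArea R w ≤ K * (2 * w.length + 1) ^ 2 := by
    intro w hw
    have h1 : AreaLE R w (K * (2 * w.length + 1) ^ 2) := (hq w hw).areaLE w rfl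
    exact ⟨Nat.sInf_mem (s := {N | AreaLE R w N}) ⟨_, h1⟩, Nat.sInf_le h1⟩
  have hset : ∀ n, ∀ N ∈ {N | ∃ w : List (Fin a × Bool), w.length ≤ n ∧
    FreeGroup.mk w ∈ Subgroup.normalClosure (R : Set (FreeGroup (Fin a))) ∧
    N = wordArea R w}, N ≤ K * (2 * n + 1) ^ 2 := by
    rintro n N ⟨w, h1, h2, rfl⟩
    refine (hup w ((hmem _).1 h2)).2.trans ?_
    gcongr
  have hdle : ∀ n, dehn R n ≤ K * (2 * n + 1) ^ 2 := by
    intro n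
    refine csSup_le ⟨wordArea R [], [], by simp, one_mem _, rfl⟩ (hset n)
  have hled : ∀ n (w : List (Fin a × Bool)), w.length ≤ n → ev (FreeGroup.mk w) = 1 →
      wordArea R w ≤ dehn R n := fun n w h1 h2 =>
    le_csSup ⟨_, fun N hN => hset n N hN⟩ ⟨w, h1, (hmem _).2 h2, rfl⟩
  -- the Heisenberg representation
  have κ1 : κ 1 = 0 := by simpa using hκ 1 1
  have κi : ∀ g, κ g⁻¹ = -κ g := fun g => by
    have := hκ g g⁻¹
    rw [mul_inv_cancel, κ1] at this
    exact (neg_eq_of_add_eq_zero_right this.symm).symm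
  set φ : FreeGroup (Fin a) →* Heis := FreeGroup.lift
    (fun i => ⟨(κ (ev (FreeGroup.of i))).1, (κ (ev (FreeGroup.of i))).2, 0⟩) with hφ
  have hφκ : ∀ z, (φ z).a = (κ (ev z)).1 ∧ (φ z).b = (κ (ev z)).2 := by
    intro z
    induction z using FreeGroup.induction_on with
    | C1 => simp [κ1]
    | of i => simp [hφ]
    | inv_of i h => simp only [map_inv, Heis.inv_a, Heis.inv_b, κi, h, Prod.fst_neg, Prod.snd_neg, and_self]
    | mul x y h1 h2 => simp only [map_mul, Heis.mul_a, Heis.mul_b, hκ, h1, h2, Prod.fst_add, Prod.snd_add, and_self]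
  obtain ⟨zx, hzx⟩ := hs gx
  obtain ⟨zy, hzy⟩ := hs gy
  set M : ℤ := ∑ r ∈ R, |(φ r).c| with hMdef
  have hM : ∀ r ∈ R, (φ r).a = 0 ∧ (φ r).b = 0 ∧ |(φ r).c| ≤ M := by
    intro r hr
    refine ⟨by rw [(hφκ r).1, hR r hr, κ1]; rfl, by rw [(hφκ r).2, hR r hr, κ1]; rfl, ?_⟩
    exact Finset.single_le_sum (f := fun r => |(φ r).c|) (fun _ _ => abs_nonneg _) hr
  have hlow : ∀ w N, AreaLE R w N → |(φ (FreeGroup.mk w)).c| ≤ N * M := by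
    rintro w N ⟨g, r, h1, h2⟩
    have := (prod_heis hM (List.ofFn fun i => g i * r i * (g i)⁻¹) (by
      intro z hz
      rw [List.mem_ofFn] at hz
      obtain ⟨i, rfl⟩ := hz
      exact ⟨g i, r i, h1 i, rfl⟩)).2.2
    rw [← h2] at this
    simpa using this
  have hM0 : 0 ≤ M := Finset.sum_nonneg (fun _ _ => abs_nonneg _)
  set wx := zx.toWord
  set wy := zy.toWord
  set wx' := (zx⁻¹).toWord
  set wy' := (zy⁻¹).toWord
  set B := wx.length + wy.length + wx'.length + wy'.length + 1 with hB
  set cw : ℕ → List (Fin a × Bool) := fun n => (List.replicate n wx).flatten ++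
    (List.replicate n wy).flatten ++ (List.replicate n wx').flatten ++
    (List.replicate n wy').flatten with hcw
  have hlen : ∀ n, (cw n).length ≤ B * n := by
    intro n
    simp only [hcw, List.length_append, List.length_flatten, List.map_replicate,
      List.sum_replicate, smul_eq_mul, hB]
    nlinarith
  have hmkw : ∀ n, FreeGroup.mk (cw n) = zx ^ n * zy ^ n * (zx⁻¹) ^ n * (zy⁻¹) ^ n := by
    intro n
    simp only [hcw, ← FreeGroup.mul_mk, mk_flatten, wx, wy, wx', wy', FreeGroup.mk_toWord]
  have hφcw : ∀ n : ℕ, (φ (FreeGroup.mk (cw n))).a = 0 ∧ (φ (FreeGroup.mk (cw n))).b = 0 ∧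
      (φ (FreeGroup.mk (cw n))).c = (n : ℤ) ^ 2 := by
    intro n
    have ax : (φ zx).a = 1 := by rw [(hφκ zx).1, hzx, hx]
    have bx : (φ zx).b = 0 := by rw [(hφκ zx).2, hzx, hx]
    have ay : (φ zy).a = 0 := by rw [(hφκ zy).1, hzy, hy]
    have by' : (φ zy).b = 1 := by rw [(hφκ zy).2, hzy, hy]
    rw [hmkw, inv_pow, inv_pow]
    simp only [map_mul, map_inv, map_pow, Heis.mul_a, Heis.mul_b, Heis.mul_c, Heis.inv_a,
      Heis.inv_b, Heis.inv_c, Heis.pow_a, Heis.pow_b, ax, bx, ay, by']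
    refine ⟨by ring, by ring, by ring⟩
  have hevcw : ∀ n, ev (FreeGroup.mk (cw n)) = 1 := by
    intro n
    rw [hmkw, inv_pow, inv_pow]
    simp only [map_mul, map_inv, map_pow, hzx, hzy]
    rw [(hcomm.pow_pow n n).eq]
    group
  constructor
  · refine ⟨9 * K + M.toNat + 1, B, 1, 1, by omega, by omega, le_rfl, le_rfl, fun n => ⟨?_, ?_⟩⟩
    · have h1 : n / B ≤ n := Nat.div_le_self n B
      have h2 := hdle (n / B)
      have h3 : K * (2 * (n / B) + 1) ^ 2 ≤ K * (2 * n + 1) ^ 2 := by gcongr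
      have h4 : (2 * n + 1) ^ 2 ≤ 9 * (n ^ 2 + 1 * n + 1) := by nlinarith
      have h5 : K * (2 * n + 1) ^ 2 ≤ K * (9 * (n ^ 2 + 1 * n + 1)) := Nat.mul_le_mul_left _ h4
      show _ < _ * (n ^ 2 + 1 * n + 1)
      nlinarith [Nat.zero_le (M.toNat * (n ^ 2 + 1 * n + 1))]
    · have h1 := hled (B * n) (cw n) (hlen n) (hevcw n)
      have h2 := hlow _ _ (hup _ (hevcw n)).1
      rw [(hφcw n).2.2] at h2
      have h3 : ((n:ℤ) ^ 2) ≤ dehn R (B * n) * M := by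
        refine (le_abs_self _).trans (h2.trans ?_)
        exact mul_le_mul_of_nonneg_right (by exact_mod_cast h1) hM0
      have h4 : n ^ 2 ≤ dehn R (B * n) * M.toNat := by
        zify
        rwa [Int.toNat_of_nonneg hM0]
      show n ^ 2 < _
      nlinarith
  · intro u v
    let e : PresentedGroup (R : Set (FreeGroup (Fin a))) ≃* G :=
      (QuotientGroup.quotientMulEquivOfEq hker).trans
        (QuotientGroup.quotientKerEquivOfSurjective ev hs)
    have he : ∀ z : FreeGroup (Fin a),
        e (QuotientGroup.mk z : PresentedGroup (R : Set (FreeGroup (Fin a)))) = ev z := fun z => rfl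
    rw [← he, ← he]
    constructor
    · intro h; exact e.toMonoidHom.map_isConj h
    · intro h
      obtain ⟨c, hc⟩ := isConj_iff.1 h
      obtain ⟨z, rfl⟩ := hs c
      rw [he, he, ← map_mul, ← map_inv, ← map_mul, ← he, ← he] at hc
      refine isConj_iff.2 ⟨QuotientGroup.mk z, ?_⟩
      exact e.injective hc

end CP

namespace CP

/-! ### Multiple HNN extensions and normal forms -/

structure HD (H J : Type) [Group H] where
  bar : J → J
  bar_bar : ∀ j, bar (bar j) = j
  D : J → Subgroup H
  φ : J → H → H
  φ_mem : ∀ j h, h ∈ D j → φ j h ∈ D (bar j)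
  φ_bar : ∀ j h, h ∈ D j → φ (bar j) (φ j h) = h
  φ_mul : ∀ j h h', h ∈ D j → h' ∈ D j → φ j (h * h') = φ j h * φ j h'

namespace HD
variable {H J : Type} [Group H] (X : HD H J)

open Classical in
noncomputable def rp (j : J) (h : H) : H :=
  if h ∈ X.D j then 1 else (Quotient.mk (QuotientGroup.rightRel (X.D j)) h).out

theorem rp_of_mem {j : J} {h : H} (hh : h ∈ X.D j) : X.rp j h = 1 := if_pos hh

theorem rp_spec (j : J) (h : H) : h * (X.rp j h)⁻¹ ∈ X.D j := by
  unfold rp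
  split_ifs with hh
  · simpa using hh
  · have := Quotient.mk_out (s := QuotientGroup.rightRel (X.D j)) h
    exact QuotientGroup.rightRel_apply.1 this

theorem rp_mul {j : J} {d : H} (hd : d ∈ X.D j) (h : H) : X.rp j (d * h) = X.rp j h := by
  have h1 : d * h ∈ X.D j ↔ h ∈ X.D j := (X.D j).mul_mem_cancel_left hd
  unfold rp
  split_ifs with h2 h3 h3
  · rfl
  · exact absurd (h1.1 h2) h3
  · exact absurd (h1.2 h3) h2
  · congr 1
    apply Quotient.sound
    apply QuotientGroup.rightRel_apply.2
    have : h * (d * h)⁻¹ = d⁻¹ := by group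
    rw [this]
    exact inv_mem hd

theorem rp_rp (j : J) (h : H) : X.rp j (X.rp j h) = X.rp j h := by
  have := X.rp_mul (inv_mem (X.rp_spec j h)) h
  have e : (h * (X.rp j h)⁻¹)⁻¹ * h = X.rp j h := by group
  rwa [e] at this

theorem rp_mem_iff (j : J) (h : H) : X.rp j h ∈ X.D j ↔ h ∈ X.D j := by
  have := (X.D j).mul_mem_cancel_left (X.rp_spec j h) (y := X.rp j h)
  rw [← this]
  simp

/-- reduced lists -/
def Red : List (J × H) → Prop
  | [] => True
  | (j, r) :: l => X.rp j r = r ∧ (r ∈ X.D j → ∀ r' l', l ≠ (X.bar j, r') :: l') ∧ Red l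

theorem Red.tail {a : J × H} {l : List (J × H)} (h : X.Red (a :: l)) : X.Red l := h.2.2

def NF : Type := {p : List (J × H) × H // X.Red p.1}

open Classical in
/-- the stable letter action -/
noncomputable def tact (j : J) (p : List (J × H) × H) : List (J × H) × H :=
  if p.2 ∈ X.D j then
    match p.1 with
    | [] => ([(j, 1)], X.φ j p.2)
    | (j', r) :: l => if j' = X.bar j then (l, X.φ j p.2 * r) else
        ((j, 1) :: (j', r) :: l, X.φ j p.2)
  else ((j, X.rp j p.2) :: p.1, X.φ j (p.2 * (X.rp j p.2)⁻¹))

theorem tact_cancel {j : J} {h : H} (hh : h ∈ X.D j) (r : H) (l : List (J × H)) :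
    X.tact j ((X.bar j, r) :: l, h) = (l, X.φ j h * r) := by
  simp [tact, hh]

theorem tact_cons {j : J} {h : H} {l : List (J × H)}
    (hh : h ∈ X.D j → ∀ r' l', l ≠ (X.bar j, r') :: l') :
    X.tact j (l, h) = ((j, X.rp j h) :: l, X.φ j (h * (X.rp j h)⁻¹)) := by
  unfold tact
  split_ifs with h1
  · simp only at h1
    rw [X.rp_of_mem h1]
    rcases l with _ | ⟨⟨j', r⟩, l⟩
    · simp
    · have : j' ≠ X.bar j := by
        rintro rfl
        exact hh h1 r l rfl
      simp [this]
  · rfl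

theorem cases' (j : J) (p : List (J × H) × H) :
    (∃ h r l, p = ((X.bar j, r) :: l, h) ∧ h ∈ X.D j) ∨
    (p.2 ∈ X.D j → ∀ r' l', p.1 ≠ (X.bar j, r') :: l') := by
  by_cases h : ∃ h r l, p = ((X.bar j, r) :: l, h) ∧ h ∈ X.D j
  · exact Or.inl h
  · right
    intro h1 r l h2
    exact h ⟨p.2, r, l, by rw [← h2], h1⟩

theorem tact_red (j : J) (p : List (J × H) × H) (hp : X.Red p.1) : X.Red (X.tact j p).1 := by
  rcases X.cases' j p with ⟨h, r, l, rfl, hh⟩ | h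
  · rw [X.tact_cancel hh]; exact hp.2.2
  · obtain ⟨l, u⟩ := p
    rw [X.tact_cons h]
    refine ⟨X.rp_rp j u, ?_, hp⟩
    rw [rp_mem_iff]
    exact h

theorem tact_inv (j : J) (p : List (J × H) × H) (hp : X.Red p.1) :
    X.tact (X.bar j) (X.tact j p) = p := by
  rcases X.cases' j p with ⟨h, r, l, rfl, hh⟩ | h
  · rw [X.tact_cancel hh]
    have h1 : X.rp (X.bar j) (X.φ j h * r) = r := by
      rw [X.rp_mul (X.φ_mem j h hh)]; exact hp.1
    rw [X.tact_cons]
    · rw [h1]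
      simp [X.φ_bar j h hh]
    · rw [(X.D _).mul_mem_cancel_left (X.φ_mem j h hh)]
      exact hp.2.1
  · obtain ⟨l, u⟩ := p
    rw [X.tact_cons h]
    have h1 := X.φ_mem j _ (X.rp_spec j u)
    have h2 := X.tact_cancel h1 (X.rp j u) l
    rw [X.bar_bar] at h2
    rw [h2, X.φ_bar j _ (X.rp_spec j u)]
    simp

def hact (u : H) (p : List (J × H) × H) : List (J × H) × H := (p.1, u * p.2)

theorem φ_one (j : J) : X.φ j 1 = 1 := by
  have := X.φ_mul j 1 1 (one_mem _) (one_mem _)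
  simpa using this

theorem tact_hact (j : J) {u : H} (hu : u ∈ X.D j) (p : List (J × H) × H) :
    X.tact j (hact u p) = hact (X.φ j u) (X.tact j p) := by
  rcases X.cases' j p with ⟨h, r, l, rfl, hh⟩ | h
  · rw [X.tact_cancel hh, hact, X.tact_cancel (mul_mem hu hh), hact, X.φ_mul j u h hu hh, mul_assoc]
  · obtain ⟨l, v⟩ := p
    rw [X.tact_cons h, hact, X.tact_cons, hact]
    · rw [X.rp_mul hu, mul_assoc, X.φ_mul j _ _ hu (X.rp_spec j v)]
    · rw [(X.D _).mul_mem_cancel_left hu]; exact h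

noncomputable def hperm (u : H) : Equiv.Perm X.NF where
  toFun p := ⟨hact u p.1, p.2⟩
  invFun p := ⟨hact u⁻¹ p.1, p.2⟩
  left_inv p := by apply Subtype.ext; simp [hact]
  right_inv p := by apply Subtype.ext; simp [hact]

noncomputable def tperm (j : J) : Equiv.Perm X.NF where
  toFun p := ⟨X.tact j p.1, X.tact_red j p.1 p.2⟩
  invFun p := ⟨X.tact (X.bar j) p.1, X.tact_red _ p.1 p.2⟩
  left_inv p := Subtype.ext (X.tact_inv j p.1 p.2)
  right_inv p := by
    apply Subtype.ext
    have := X.tact_inv (X.bar j) p.1 p.2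
    rwa [X.bar_bar] at this

noncomputable def hhom : H →* Equiv.Perm X.NF where
  toFun := X.hperm
  map_one' := by
    apply Equiv.ext; intro p; apply Subtype.ext
    change hact 1 p.1 = p.1
    simp [hact]
  map_mul' u v := by
    apply Equiv.ext; intro p; apply Subtype.ext
    change hact (u * v) p.1 = hact u (hact v p.1)
    simp [hact, mul_assoc]

/-- relators -/
inductive Rel : FreeGroup (H ⊕ J) → Prop
  | hmul (u v : H) : Rel (FreeGroup.of (.inl u) * FreeGroup.of (.inl v) *
      (FreeGroup.of (.inl (u * v)))⁻¹)
  | conj (j : J) (u : H) (hu : u ∈ X.D j) : Rel (FreeGroup.of (.inr j) * FreeGroup.of (.inl u) *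
      (FreeGroup.of (.inr j))⁻¹ * (FreeGroup.of (.inl (X.φ j u)))⁻¹)
  | inv (j : J) : Rel (FreeGroup.of (.inr j) * FreeGroup.of (.inr (X.bar j)))

def Grp : Type := PresentedGroup {z | X.Rel z}
instance : Group X.Grp := inferInstanceAs (Group (PresentedGroup {z | X.Rel z}))

def t (j : J) : X.Grp := PresentedGroup.of (rels := {z | X.Rel z}) (Sum.inr j)

theorem rel_one {z : FreeGroup (H ⊕ J)} (hz : X.Rel z) :
    (PresentedGroup.mk {z | X.Rel z} z) = 1 := PresentedGroup.one_of_mem hz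

def ofH : H →* X.Grp := MonoidHom.mk'
  (fun u => (PresentedGroup.of (rels := {z | X.Rel z}) (Sum.inl u) : PresentedGroup {z | X.Rel z}))
  (by
    intro u v
    have := X.rel_one (Rel.hmul u v)
    rw [map_mul, map_inv, map_mul, mul_inv_eq_one] at this
    exact this.symm)

theorem t_conj (j : J) {u : H} (hu : u ∈ X.D j) :
    X.t j * X.ofH u * (X.t j)⁻¹ = X.ofH (X.φ j u) := by
  have := X.rel_one (Rel.conj j u hu)
  rw [map_mul, map_inv, map_mul, map_mul, map_inv, mul_inv_eq_one] at this
  exact this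

theorem t_bar (j : J) : X.t (X.bar j) = (X.t j)⁻¹ := by
  have := X.rel_one (Rel.inv j)
  rw [map_mul] at this
  exact (inv_eq_of_mul_eq_one_right this).symm

def lift {K : Type} [Group K] (f : H →* K) (s : J → K)
    (h1 : ∀ j u, u ∈ X.D j → s j * f u * (s j)⁻¹ = f (X.φ j u))
    (h2 : ∀ j, s (X.bar j) = (s j)⁻¹) : X.Grp →* K :=
  PresentedGroup.toGroup (f := Sum.elim f s) (rels := {z | X.Rel z}) (by
    intro z hz
    cases hz with
    | hmul u v => simp
    | conj j u hu => simp [h1 j u hu]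
    | inv j => simp [h2 j])

section
variable {K : Type} [Group K] (f : H →* K) (s : J → K)
    (h1 : ∀ j u, u ∈ X.D j → s j * f u * (s j)⁻¹ = f (X.φ j u))
    (h2 : ∀ j, s (X.bar j) = (s j)⁻¹)
theorem lift_ofH (u : H) : X.lift f s h1 h2 (X.ofH u) = f u :=
  PresentedGroup.toGroup.of (f := Sum.elim f s) (rels := {z | X.Rel z}) _ (x := Sum.inl u)
theorem lift_t (j : J) : X.lift f s h1 h2 (X.t j) = s j :=
  PresentedGroup.toGroup.of (f := Sum.elim f s) (rels := {z | X.Rel z}) _ (x := Sum.inr j)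
end

theorem gen_le {S : Subgroup X.Grp} (h1 : ∀ u, X.ofH u ∈ S) (h2 : ∀ j, X.t j ∈ S) (g : X.Grp) :
    g ∈ S := by
  have := PresentedGroup.closure_range_of {z | X.Rel z}
  have h3 : Subgroup.closure (Set.range (PresentedGroup.of (rels := {z | X.Rel z}))) ≤ S := by
    refine (Subgroup.closure_le (G := PresentedGroup {z | X.Rel z}) (K := S)).2 ?_
    rintro _ ⟨x | x, rfl⟩
    · exact h1 x
    · exact h2 x
  rw [this] at h3
  exact h3 (Subgroup.mem_top g)

noncomputable def act : X.Grp →* Equiv.Perm X.NF :=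
  X.lift X.hhom X.tperm
    (by
      intro j u hu
      rw [mul_inv_eq_iff_eq_mul]
      ext p
      apply Subtype.ext
      exact X.tact_hact j hu p.1)
    (by intro j; apply Equiv.ext; intro p; rfl)

noncomputable instance : MulAction X.Grp X.NF := MulAction.compHom X.NF X.act

theorem ofH_smul (u : H) (p : X.NF) : ((X.ofH u) • p).1 = hact u p.1 := by
  change (X.act (X.ofH u) p).1 = _
  rw [act, lift_ofH]; rfl
theorem t_smul (j : J) (p : X.NF) : ((X.t j) • p).1 = X.tact j p.1 := by
  change (X.act (X.t j) p).1 = _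
  rw [act, lift_t]; rfl

def n : List (J × H) → X.Grp
  | [] => 1
  | (j, r) :: l => X.t j * X.ofH r * n l

def nfp (p : List (J × H) × H) : X.Grp := X.ofH p.2 * X.n p.1

theorem nfp_tact (j : J) (p : List (J × H) × H) : X.nfp (X.tact j p) = X.t j * X.nfp p := by
  rcases X.cases' j p with ⟨h, r, l, rfl, hh⟩ | h
  · rw [X.tact_cancel hh]
    simp only [nfp, n, map_mul, t_bar, ← X.t_conj j hh]
    group
  · obtain ⟨l, u⟩ := p
    rw [X.tact_cons h]
    simp only [nfp, n, ← X.t_conj j (X.rp_spec j u), map_mul, map_inv]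
    group

theorem nfp_smul (g : X.Grp) : ∀ p : X.NF, X.nfp (g • p).1 = g * X.nfp p.1 := by
  let S : Subgroup X.Grp :=
    { carrier := {g | ∀ p : X.NF, X.nfp (g • p).1 = g * X.nfp p.1}
      one_mem' := by intro p; simp
      mul_mem' := by
        intro a b ha hb p
        rw [mul_smul, ha, hb, mul_assoc]
      inv_mem' := by
        intro a ha p
        have := ha (a⁻¹ • p)
        rw [smul_inv_smul] at this
        rw [this]; group }
  refine X.gen_le (S := S) ?_ ?_ g
  · intro u p
    rw [ofH_smul, nfp, hact, map_mul, nfp, mul_assoc]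
  · intro j p
    rw [t_smul, nfp_tact]

def base : X.NF := ⟨([], 1), trivial⟩

theorem eq_nfp (g : X.Grp) : g = X.ofH (g • X.base).1.2 * X.n (g • X.base).1.1 := by
  have := X.nfp_smul g X.base
  simpa [base, nfp, n] using this.symm

theorem n_smul_base (l : List (J × H)) (hl : X.Red l) : (X.n l • X.base).1 = (l, 1) := by
  induction l with
  | nil => rw [n, one_smul]; rfl
  | cons a l ih =>
    obtain ⟨j, r⟩ := a
    rw [n, mul_smul, mul_smul, t_smul, ofH_smul, ih hl.2.2, hact, mul_one, X.tact_cons hl.2.1, hl.1]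
    simp [φ_one]

theorem nfp_smul_base (l : List (J × H)) (hl : X.Red l) (u : H) :
    ((X.ofH u * X.n l) • X.base).1 = (l, u) := by
  rw [mul_smul, ofH_smul, n_smul_base X l hl]
  simp [hact]

theorem ofH_injective : Function.Injective X.ofH := by
  intro u v h
  have h1 := X.nfp_smul_base [] trivial u
  have h2 := X.nfp_smul_base [] trivial v
  rw [h, h2] at h1
  simpa using h1.symm

/-- vertex of the Bass–Serre tree attached to a group element -/
noncomputable def vtx (g : X.Grp) : List (J × H) := (g⁻¹ • X.base).1.1
noncomputable def hp (g : X.Grp) : H := (g⁻¹ • X.base).1.2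

theorem inv_eq (g : X.Grp) : g⁻¹ = X.ofH (X.hp g) * X.n (X.vtx g) := X.eq_nfp g⁻¹

theorem vtx_one : X.vtx 1 = [] := by rw [vtx, inv_one, one_smul]; rfl
theorem red_vtx (g : X.Grp) : X.Red (X.vtx g) := (g⁻¹ • X.base).2

theorem tact_adj (j : J) (p : List (J × H) × H) : Adj p.1 (X.tact j p).1 := by
  rcases X.cases' j p with ⟨h, r, l, rfl, hh⟩ | h
  · rw [X.tact_cancel hh]; exact Or.inr (Or.inr ⟨_, rfl⟩)
  · obtain ⟨l, u⟩ := p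
    rw [X.tact_cons h]; exact Or.inr (Or.inl ⟨_, rfl⟩)

theorem tact_len (j : J) (p : List (J × H) × H) : (X.tact j p).1.length ≤ p.1.length + 1 := by
  rcases X.tact_adj j p with h | ⟨a, h⟩ | ⟨a, h⟩
  · rw [← h]; omega
  · rw [h]; simp
  · rw [h]; simp; omega

theorem n_len (l : List (J × H)) (p : X.NF) : (X.n l • p).1.1.length ≤ l.length + p.1.1.length := by
  induction l with
  | nil => simp [n]
  | cons a l ih =>
    obtain ⟨j, r⟩ := a
    rw [n, mul_smul, mul_smul, t_smul, ofH_smul]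
    refine (X.tact_len _ _).trans ?_
    simp only [hact, List.length_cons]
    omega

theorem len_mul (g g' : X.Grp) : (X.vtx (g * g')).length ≤ (X.vtx g).length + (X.vtx g').length := by
  have : X.vtx (g * g') = (g'⁻¹ • (g⁻¹ • X.base)).1.1 := by rw [vtx, mul_inv_rev, mul_smul]
  rw [this, X.inv_eq g', mul_smul, ofH_smul]
  simp only [hact]
  have := X.n_len (X.vtx g') (g⁻¹ • X.base)
  rw [add_comm]
  exact this

theorem adj_of (g s : X.Grp) (hs : (X.vtx s).length ≤ 1) : Adj (X.vtx g) (X.vtx (g * s)) := by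
  have : X.vtx (g * s) = (s⁻¹ • (g⁻¹ • X.base)).1.1 := by rw [vtx, mul_inv_rev, mul_smul]
  rw [this, X.inv_eq s, mul_smul, ofH_smul]
  simp only [hact]
  rcases h : X.vtx s with _ | ⟨⟨j, r⟩, l⟩
  · left; simp [n, vtx]
  · have hl : l = [] := by
      rw [h] at hs
      simpa using hs
    subst hl
    rw [n, n, mul_one, mul_smul, t_smul, ofH_smul]
    exact X.tact_adj j (hact r _)

theorem vtx_aux (u v : H) : X.vtx (X.ofH u * X.ofH v)⁻¹ = [] := by
  rw [vtx, inv_inv, mul_smul, ofH_smul, ofH_smul]; simp [hact, base]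

theorem vtx_aux' (u v : H) (j : J) : (X.vtx (X.ofH u * X.t j * X.ofH v)⁻¹).length ≤ 1 := by
  rw [vtx, inv_inv, mul_smul, mul_smul, ofH_smul, t_smul, ofH_smul]
  simp only [hact]
  exact (X.tact_len _ _).trans (by simp [base])

theorem inv_inv_mul (g g' : X.Grp) : g⁻¹ * (g'⁻¹)⁻¹ = g⁻¹ * g' := by rw [inv_inv]

theorem of_eq (g g' : X.Grp) (h : X.vtx g = X.vtx g') : X.vtx (g⁻¹ * g') = [] := by
  have e : g⁻¹ * g' = (X.ofH (X.hp g') * X.ofH (X.hp g)⁻¹)⁻¹ := by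
    rw [← X.inv_inv_mul g g', X.inv_eq g', X.inv_eq g, h, map_inv]
    group
  rw [e, X.vtx_aux]

theorem of_adj (g g' : X.Grp) (h : Adj (X.vtx g) (X.vtx g')) :
    (X.vtx (g⁻¹ * g')).length ≤ 1 := by
  rcases h with h | ⟨⟨j, r⟩, h⟩ | ⟨⟨j, r⟩, h⟩
  · rw [X.of_eq g g' h]; simp
  · have e : g⁻¹ * g' = (X.ofH (X.hp g') * X.t j * X.ofH (r * (X.hp g)⁻¹))⁻¹ := by
      rw [← X.inv_inv_mul g g', X.inv_eq g', X.inv_eq g, h, map_mul,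
        map_inv, n]
      group
    rw [e]
    exact X.vtx_aux' _ _ _
  · have e : g⁻¹ * g' = (X.ofH (X.hp g' * r⁻¹) * X.t (X.bar j) * X.ofH (X.hp g)⁻¹)⁻¹ := by
      rw [← X.inv_inv_mul g g', X.inv_eq g', X.inv_eq g, h, map_mul,
        map_inv, map_inv, n, t_bar]
      group
    rw [e]
    exact X.vtx_aux' _ _ _

theorem exists_vtx (l : List (J × H)) (hl : X.Red l) (u : H) :
    X.vtx (X.ofH u * X.n l)⁻¹ = l := by
  rw [vtx, inv_inv, X.nfp_smul_base l hl]

theorem rp_finite (j : J) {Q : Type} [Finite Q] (q : H → Q)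
    (hq : ∀ h h', q h = q h' → h * h'⁻¹ ∈ X.D j) : (Set.range (X.rp j)).Finite := by
  have : ∀ h, X.rp j h = X.rp j (Function.invFun q (q h)) := by
    intro h
    have h1 : q (Function.invFun q (q h)) = q h := Function.invFun_eq ⟨h, rfl⟩
    have := X.rp_mul (hq _ _ h1.symm) (Function.invFun q (q h))
    rw [← this]; congr 1; group
  refine (Set.finite_range (fun x : Q => X.rp j (Function.invFun q x))).subset ?_
  rintro _ ⟨h, rfl⟩
  exact ⟨q h, (this h).symm⟩

/-- conjugacy of elements of `H` -/
theorem conj_inv (p : H → Prop) (hH : ∀ u v, p u → p (v * u * v⁻¹))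
    (hD : ∀ j u, u ∈ X.D j → p u → p (X.φ j u)) (l : List (J × H)) (hl : X.Red l) :
    ∀ u h, X.n l * X.ofH u = X.ofH h * X.n l → p u → p h := by
  induction l with
  | nil =>
    intro u h e hp
    simp only [n, one_mul, mul_one] at e
    rwa [← X.ofH_injective e]
  | cons a l ih =>
    obtain ⟨j, r⟩ := a
    intro u h e hp
    have h1 := X.nfp_smul_base _ hl h
    rw [← e, mul_smul] at h1
    have h2 : ((X.n l * X.ofH u) • X.base).1.1.length ≤ l.length := by
      rw [mul_smul]
      refine (X.n_len _ _).trans ?_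
      rw [ofH_smul]; simp [hact, base]
    rw [n, mul_smul, mul_smul, ← mul_smul (X.n l), t_smul, ofH_smul] at h1
    set y := (X.n l * X.ofH u) • X.base with hy
    rcases X.cases' j (hact r y.1) with ⟨h', r', l', e', hh'⟩ | h'
    · have h3 := congrArg (fun z => z.1.length) h1
      have h5 := congrArg (fun z => z.1.length) e'
      simp only at h3
      rw [e', X.tact_cancel hh'] at h3
      simp only [hact, List.length_cons] at h5 h3
      omega
    · have h3 : hact r y.1 = (y.1.1, r * y.1.2) := rfl
      rw [h3] at h1 h'
      rw [X.tact_cons h'] at h1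
      simp only [Prod.mk.injEq, List.cons.injEq, true_and] at h1
      obtain ⟨⟨h4, h5⟩, h6⟩ := h1
      have h7 : X.n l * X.ofH u = X.ofH y.1.2 * X.n l := by
        have := X.eq_nfp (X.n l * X.ofH u)
        rw [← hy, h5] at this
        exact this
      have h8 := ih hl.2.2 u y.1.2 h7 hp
      have h9 := X.rp_spec j (r * y.1.2)
      rw [h4] at h9 h6
      rw [← h6]
      exact hD j _ h9 (hH _ r h8)

theorem conj_pred (p : H → Prop) (hH : ∀ u v, p u → p (v * u * v⁻¹))
    (hD : ∀ j u, u ∈ X.D j → p u → p (X.φ j u)) {u h : H} (hc : IsConj (X.ofH u) (X.ofH h))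
    (hp : p u) : p h := by
  obtain ⟨c, hc⟩ := isConj_iff.1 hc
  have e := X.inv_eq c⁻¹
  rw [inv_inv] at e
  set v := X.hp c⁻¹
  have h1 : X.n (X.vtx c⁻¹) * X.ofH u = X.ofH (v⁻¹ * h * v) * X.n (X.vtx c⁻¹) := by
    have : X.n (X.vtx c⁻¹) = (X.ofH v)⁻¹ * c := by rw [eq_inv_mul_iff_mul_eq, ← e]
    rw [this, map_mul, map_mul, map_inv, ← hc]; group
  have h2 := X.conj_inv p hH hD _ (X.red_vtx c⁻¹) u _ h1 hp
  have h3 := hH _ v h2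
  convert h3 using 1
  group

end HD
end CP

namespace CP

/-! ### The ring `ℤ[1/6]` and its three places -/

def A6 : Subring ℚ where
  carrier := {x | ∃ (n : ℕ) (a : ℤ), x * 6 ^ n = a}
  mul_mem' := by
    rintro x y ⟨n, a, h⟩ ⟨m, b, h'⟩
    exact ⟨n + m, a * b, by push_cast; rw [← h, ← h']; ring⟩
  one_mem' := ⟨0, 1, by simp⟩
  add_mem' := by
    rintro x y ⟨n, a, h⟩ ⟨m, b, h'⟩
    exact ⟨n + m, a * 6 ^ m + b * 6 ^ n, by push_cast; rw [← h, ← h']; ring⟩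
  zero_mem' := ⟨0, 0, by simp⟩
  neg_mem' := by
    rintro x ⟨n, a, h⟩
    exact ⟨n, -a, by push_cast; rw [← h]; ring⟩

theorem mem_A6 {x : ℚ} : x ∈ A6 ↔ ∃ (n : ℕ) (a : ℤ), x * 6 ^ n = a := Iff.rfl

def lam (k : ℤ × ℤ) : ℚ := 2 ^ k.1 * 3 ^ k.2

theorem lam_add (k k' : ℤ × ℤ) : lam (k + k') = lam k * lam k' := by
  simp only [lam, Prod.fst_add, Prod.snd_add]
  rw [zpow_add₀ (by norm_num), zpow_add₀ (by norm_num)]; ring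
@[simp] theorem lam_zero : lam 0 = 1 := by simp [lam]
theorem lam_pos (k : ℤ × ℤ) : 0 < lam k := by unfold lam; positivity
theorem lam_ne (k : ℤ × ℤ) : lam k ≠ 0 := (lam_pos k).ne'
theorem lam_neg (k : ℤ × ℤ) : lam (-k) = (lam k)⁻¹ := by
  apply eq_inv_of_mul_eq_one_left
  rw [← lam_add]; simp

theorem half_mem : (2 : ℚ)⁻¹ ∈ A6 := ⟨1, 3, by norm_num⟩
theorem third_mem : (3 : ℚ)⁻¹ ∈ A6 := ⟨1, 2, by norm_num⟩
theorem lam_mem (k : ℤ × ℤ) : lam k ∈ A6 := by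
  apply mul_mem
  · obtain ⟨n, h | h⟩ := k.1.eq_nat_or_neg
    · rw [h, zpow_natCast]; exact pow_mem (natCast_mem A6 2) n
    · rw [h, zpow_neg, zpow_natCast, ← inv_pow]; exact pow_mem half_mem n
  · obtain ⟨n, h | h⟩ := k.2.eq_nat_or_neg
    · rw [h, zpow_natCast]; exact pow_mem (natCast_mem A6 3) n
    · rw [h, zpow_neg, zpow_natCast, ← inv_pow]; exact pow_mem third_mem n

/-- residues -/
theorem exists_res {M : ℕ} (hM : Nat.Coprime M 6) (h0 : 0 < M) {x : ℚ} (hx : x ∈ A6) :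
    ∃ d : ℕ, d < M ∧ ∃ a ∈ A6, x = d + M * a := by
  obtain ⟨n, a, h⟩ := hx
  have hc : IsCoprime ((6 : ℤ) ^ n) (M : ℤ) := by
    apply IsCoprime.pow_left
    have := Nat.isCoprime_iff_coprime.2 hM
    exact_mod_cast this.symm
  obtain ⟨p, q, hpq⟩ := hc
  have hm : 0 ≤ (a * p) % M := Int.emod_nonneg _ (by omega)
  have hl : (a * p) % M < M := Int.emod_lt_of_pos _ (by omega)
  refine ⟨((a * p) % M).toNat, by omega, (x - ((a * p) % M).toNat) / M, ?_, ?_⟩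
  · refine ⟨n, a * q + 6 ^ n * ((a * p) / M), ?_⟩
    have h1 : ((((a * p) % M).toNat : ℕ) : ℚ) = (a * p : ℚ) - M * ((a * p) / M : ℤ) := by
      have e : ((((a * p) % M).toNat : ℕ) : ℤ) = a * p - M * ((a * p) / M) := by
        rw [Int.toNat_of_nonneg hm, Int.emod_def]
      exact_mod_cast congrArg (Int.cast : ℤ → ℚ) e
    have hM' : (M : ℚ) ≠ 0 := by positivity
    rw [h1, div_mul_eq_mul_div, div_eq_iff hM']
    have h2 : (p : ℚ) * 6 ^ n + q * M = 1 := by exact_mod_cast congrArg (Int.cast : ℤ → ℚ) hpq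
    push_cast
    linear_combination h - (a : ℚ) * h2
  · field_simp; ring

theorem res_unique {M : ℕ} (hM : Nat.Coprime M 6) {d d' : ℕ} (hd : d < M) (hd' : d' < M)
    {a : ℚ} (ha : a ∈ A6) (h : (d : ℚ) - d' = M * a) : d = d' := by
  obtain ⟨n, b, hb⟩ := ha
  have h1 : ((d : ℤ) - d') * 6 ^ n = M * b := by
    have : (((d : ℤ) - d') * 6 ^ n : ℚ) = M * b := by
      push_cast; rw [h, ← hb]; ring
    exact_mod_cast this
  have hc : IsCoprime (M : ℤ) ((6 : ℤ) ^ n) := by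
    apply IsCoprime.pow_right
    exact_mod_cast Nat.isCoprime_iff_coprime.2 hM
  have h2 : (M : ℤ) ∣ (d : ℤ) - d' := hc.dvd_of_dvd_mul_right ⟨b, h1⟩
  have := Int.eq_zero_of_abs_lt_dvd h2 (by rw [abs_lt]; constructor <;> omega)
  omega

instance fact2 : Fact (Nat.Prime 2) := ⟨Nat.prime_two⟩
instance fact3 : Fact (Nat.Prime 3) := ⟨Nat.prime_three⟩

/-- the three absolute values -/
def nv (i : Fin 3) (x : ℚ) : ℚ :=
  match i with
  | 0 => |x|
  | 1 => padicNorm 2 x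
  | 2 => padicNorm 3 x

theorem nv_nonneg (i : Fin 3) (x : ℚ) : 0 ≤ nv i x := by
  fin_cases i
  · exact abs_nonneg x
  · exact padicNorm.nonneg x
  · exact padicNorm.nonneg x
@[simp] theorem nv_zero (i : Fin 3) : nv i 0 = 0 := by
  fin_cases i
  · exact abs_zero
  · exact padicNorm.zero
  · exact padicNorm.zero
theorem nv_mul (i : Fin 3) (x y : ℚ) : nv i (x * y) = nv i x * nv i y := by
  fin_cases i
  · exact abs_mul x y
  · exact padicNorm.mul x y
  · exact padicNorm.mul x y
theorem nv_neg (i : Fin 3) (x : ℚ) : nv i (-x) = nv i x := by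
  fin_cases i
  · exact abs_neg x
  · exact padicNorm.neg x
  · exact padicNorm.neg x
theorem nv_add (i : Fin 3) (x y : ℚ) : nv i (x + y) ≤ nv i x + nv i y := by
  fin_cases i
  · exact abs_add_le x y
  · exact padicNorm.triangle_ineq x y
  · exact padicNorm.triangle_ineq x y
theorem nv_pos (i : Fin 3) {x : ℚ} (hx : x ≠ 0) : 0 < nv i x := by
  fin_cases i
  · exact abs_pos.2 hx
  · exact lt_of_le_of_ne (padicNorm.nonneg x) (padicNorm.nonzero hx).symm
  · exact lt_of_le_of_ne (padicNorm.nonneg x) (padicNorm.nonzero hx).symm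
@[simp] theorem nv_one (i : Fin 3) : nv i 1 = 1 := by
  fin_cases i
  · exact abs_one
  · exact padicNorm.one
  · exact padicNorm.one
theorem nv_inv (i : Fin 3) (x : ℚ) : nv i x⁻¹ = (nv i x)⁻¹ := by
  by_cases hx : x = 0
  · simp [hx]
  · apply eq_inv_of_mul_eq_one_left
    rw [← nv_mul, inv_mul_cancel₀ hx, nv_one]
theorem nv_zpow (i : Fin 3) (x : ℚ) (n : ℤ) : nv i (x ^ n) = nv i x ^ n := by
  let f : ℚ →*₀ ℚ := ⟨⟨nv i, nv_zero i⟩, nv_one i, nv_mul i⟩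
  exact map_zpow₀ f x n
theorem nv_sum {ι : Type} (i : Fin 3) (s : Finset ι) (f : ι → ℚ) :
    nv i (∑ c ∈ s, f c) ≤ ∑ c ∈ s, nv i (f c) := by
  classical
  induction s using Finset.induction_on with
  | empty => simp
  | insert a s ha ih =>
    rw [Finset.sum_insert ha, Finset.sum_insert ha]
    linarith [nv_add i (f a) (∑ c ∈ s, f c)]

theorem nv2 (i : Fin 3) : nv i 2 = if i = 0 then 2 else if i = 1 then 1 / 2 else 1 := by
  fin_cases i
  · simp [nv]
  · have := padicNorm.padicNorm_p_of_prime (p := 2)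
    simpa [nv] using this
  · have := padicNorm.padicNorm_of_prime_of_ne (p := 3) (q := 2) (by norm_num)
    simpa [nv] using this
theorem nv3 (i : Fin 3) : nv i 3 = if i = 0 then 3 else if i = 1 then 1 else 1 / 3 := by
  fin_cases i
  · simp [nv]
  · have := padicNorm.padicNorm_of_prime_of_ne (p := 2) (q := 3) (by norm_num)
    simpa [nv] using this
  · have := padicNorm.padicNorm_p_of_prime (p := 3)
    simpa [nv] using this

theorem nv_lam (i : Fin 3) (k : ℤ × ℤ) : nv i (lam k) = nv i 2 ^ k.1 * nv i 3 ^ k.2 := by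
  rw [lam, nv_mul, nv_zpow, nv_zpow]

theorem zpow_bd {x b : ℚ} (hx : 0 < x) (h1 : x ≤ b) (h2 : x⁻¹ ≤ b) (n : ℤ) :
    x ^ n ≤ b ^ n.natAbs := by
  obtain ⟨m, rfl | rfl⟩ := n.eq_nat_or_neg
  · rw [zpow_natCast, Int.natAbs_natCast]
    exact pow_le_pow_left₀ hx.le h1 m
  · rw [zpow_neg, zpow_natCast, Int.natAbs_neg, Int.natAbs_natCast, ← inv_pow]
    exact pow_le_pow_left₀ (inv_pos.2 hx).le h2 m

theorem nv_lam_le (i : Fin 3) (k : ℤ × ℤ) : nv i (lam k) ≤ 3 ^ nk k := by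
  rw [nv_lam, nk, pow_add]
  refine mul_le_mul (zpow_bd ?_ ?_ ?_ _) (zpow_bd ?_ ?_ ?_ _)
    (zpow_nonneg (nv_nonneg _ _) _) (by positivity)
  all_goals first | rw [nv2] | rw [nv3]
  all_goals fin_cases i <;> norm_num

def tau0 (j : Fin 3) : ℤ × ℤ := if j = 0 then (-1, -1) else if j = 1 then (3, -1) else (-1, 2)

theorem nv_tau (i j : Fin 3) (h : i ≠ j) : 2 ≤ nv i (lam (tau0 j)) := by
  rw [nv_lam, nv2, nv3]
  fin_cases i <;> fin_cases j <;> simp [tau0] at h ⊢ <;> norm_num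

theorem padic_int (p : ℕ) [Fact p.Prime] (z : ℤ) : padicNorm p z ≤ 1 := padicNorm.of_int z

theorem nv_int (i : Fin 3) (hi : i ≠ 0) (z : ℤ) : nv i z ≤ 1 := by
  fin_cases i
  · exact absurd rfl hi
  · exact padic_int 2 z
  · exact padic_int 3 z

theorem padic_approx (p : ℕ) [hp : Fact p.Prime] (x : ℚ) :
    ∃ (s : ℕ) (z : ℤ), padicNorm p (x - z / p ^ s) ≤ 1 := by
  obtain ⟨s, q, hq, hd⟩ := Nat.exists_eq_pow_mul_and_not_dvd x.den_nz p hp.out.ne_one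
  have hc : IsCoprime (q : ℤ) ((p : ℤ) ^ s) := by
    apply IsCoprime.pow_right
    rw [Nat.isCoprime_iff_coprime]
    exact ((Nat.Prime.coprime_iff_not_dvd hp.out).2 hq).symm
  obtain ⟨a, b, hab⟩ := hc
  refine ⟨s, x.num * a, ?_⟩
  have hp0 : (p : ℚ) ≠ 0 := by exact_mod_cast hp.out.ne_zero
  have hq0 : (q : ℚ) ≠ 0 := by
    rintro h
    have : q = 0 := by exact_mod_cast h
    exact hq (this ▸ dvd_zero p)
  have hx : x = x.num / (p ^ s * q) := by
    conv_lhs => rw [← Rat.num_div_den x, hd]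
    push_cast; rfl
  have hab' : (a : ℚ) * q + b * p ^ s = 1 := by exact_mod_cast congrArg (Int.cast : ℤ → ℚ) hab
  have e : x - (x.num * a : ℤ) / p ^ s = (x.num * b : ℤ) / (q : ℕ) := by
    have hx' : x * p ^ s * q = x.num := by
      rw [mul_assoc]
      have : (p : ℚ) ^ s * q ≠ 0 := mul_ne_zero (pow_ne_zero _ hp0) hq0
      exact (eq_div_iff this).1 hx
    push_cast
    field_simp
    linear_combination -(x.num : ℚ) * hab' + hx'
  rw [e, padicNorm.div, (padicNorm.nat_eq_one_iff q).2 hq, div_one]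
  exact padic_int p _

theorem approx (x : Fin 3 → ℚ) : ∃ a ∈ A6, ∀ i, nv i (x i + a) ≤ 1 := by
  obtain ⟨s, z, h1⟩ := padic_approx 2 (x 1)
  obtain ⟨s', z', h2⟩ := padic_approx 3 (x 2)
  have m1 : (z / 2 ^ s : ℚ) ∈ A6 := by
    rw [div_eq_mul_inv, ← inv_pow]
    exact mul_mem (intCast_mem _ _) (pow_mem half_mem _)
  have m2 : (z' / 3 ^ s' : ℚ) ∈ A6 := by
    rw [div_eq_mul_inv, ← inv_pow]
    exact mul_mem (intCast_mem _ _) (pow_mem third_mem _)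
  have n1 : padicNorm 3 (z / 2 ^ s : ℚ) ≤ 1 := by
    have e : padicNorm 3 ((2 : ℚ) ^ s) = 1 := by
      have := (padicNorm.nat_eq_one_iff (p := 3) (2 ^ s)).2 (by
        intro h; have := Nat.Prime.dvd_of_dvd_pow Nat.prime_three h; omega)
      exact_mod_cast this
    rw [padicNorm.div, e, div_one]; exact padic_int 3 _
  have n2 : padicNorm 2 (z' / 3 ^ s' : ℚ) ≤ 1 := by
    have e : padicNorm 2 ((3 : ℚ) ^ s') = 1 := by
      have := (padicNorm.nat_eq_one_iff (p := 2) (3 ^ s')).2 (by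
        intro h; have := Nat.Prime.dvd_of_dvd_pow Nat.prime_two h; omega)
      exact_mod_cast this
    rw [padicNorm.div, e, div_one]; exact padic_int 2 _
  set b : ℚ := z / 2 ^ s
  set b' : ℚ := z' / 3 ^ s'
  have h1' : padicNorm 2 (x 1 - b) ≤ 1 := by simpa using h1
  have h2' : padicNorm 3 (x 2 - b') ≤ 1 := by simpa using h2
  set w : ℤ := ⌊x 0 - b - b'⌋ with hw
  have ult : ∀ (p : ℕ) [Fact p.Prime] (x y : ℚ), padicNorm p x ≤ 1 → padicNorm p y ≤ 1 →
      padicNorm p (x - y) ≤ 1 := by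
    intro p _ x y hx hy
    exact padicNorm.sub.trans (max_le hx hy)
  refine ⟨-b - b' - w, sub_mem (sub_mem (neg_mem m1) m2) (intCast_mem _ _), ?_⟩
  intro i
  fin_cases i
  · change |x 0 + (-b - b' - w)| ≤ 1
    have f1 := Int.floor_le (x 0 - b - b')
    have f2 := Int.lt_floor_add_one (x 0 - b - b')
    rw [← hw] at f1 f2
    rw [abs_le]; constructor <;> linarith
  · change padicNorm 2 (x 1 + (-b - b' - w)) ≤ 1
    have e : x 1 + (-b - b' - w) = x 1 - b - b' - w := by ring
    rw [e]
    exact ult 2 _ _ (ult 2 _ _ h1' n2) (padic_int 2 w)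
  · change padicNorm 3 (x 2 + (-b - b' - w)) ≤ 1
    have e : x 2 + (-b - b' - w) = x 2 - b' - b - w := by ring
    rw [e]
    exact ult 3 _ _ (ult 3 _ _ h2' n1) (padic_int 3 w)

theorem not_dvd_den (p : ℕ) [hp : Fact p.Prime] (y : ℚ) (hy : padicNorm p y ≤ 1) : ¬ p ∣ y.den := by
  intro h
  have h1 : padicNorm p y.den < 1 := (padicNorm.nat_lt_one_iff _).2 h
  have h2 : padicNorm p y.num = 1 := by
    rw [padicNorm.int_eq_one_iff]
    intro h3
    have h4 : p ∣ y.num.natAbs := Int.natCast_dvd.1 h3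
    exact hp.out.not_dvd_one (by have := Nat.dvd_gcd h4 h; rwa [y.reduced] at this)
  have h3 : y * y.den = y.num := Rat.mul_den_eq_num y
  have h4 : padicNorm p y * padicNorm p y.den = 1 := by rw [← padicNorm.mul, h3, h2]
  have h5 := padicNorm.nonneg (p := p) (y.den : ℚ)
  nlinarith

theorem A6_int {y : ℚ} (hy : y ∈ A6) (h2 : padicNorm 2 y ≤ 1) (h3 : padicNorm 3 y ≤ 1) :
    ∃ z : ℤ, y = z := by
  obtain ⟨n, a, h⟩ := hy
  have hd : y.den ∣ 6 ^ n := by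
    have h1 : (y.num : ℚ) * 6 ^ n = a * y.den := by
      rw [← h, ← Rat.mul_den_eq_num y]; ring
    have h1' : y.num * 6 ^ n = a * y.den := by exact_mod_cast h1
    have h4 : (y.den : ℤ) ∣ y.num * 6 ^ n := ⟨a, by rw [h1']; ring⟩
    have h5 : IsCoprime (y.den : ℤ) y.num := by
      have := Nat.isCoprime_iff_coprime.2 y.reduced
      rw [Int.isCoprime_iff_gcd_eq_one]
      have := y.reduced
      rw [Nat.Coprime, Nat.gcd_comm] at this
      simpa [Int.gcd] using this
    have h6 := h5.dvd_of_dvd_mul_left h4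
    exact_mod_cast h6
  have hc : Nat.Coprime y.den (6 ^ n) := by
    apply Nat.Coprime.pow_right
    have a2 := (Nat.Prime.coprime_iff_not_dvd Nat.prime_two).2 (not_dvd_den 2 y h2)
    have a3 := (Nat.Prime.coprime_iff_not_dvd Nat.prime_three).2 (not_dvd_den 3 y h3)
    exact Nat.Coprime.mul_right a2.symm a3.symm
  have := Nat.Coprime.eq_one_of_dvd hc hd
  refine ⟨y.num, ?_⟩
  rw [← Rat.mul_den_eq_num y, this]; simp

theorem A6_finite (D : ℕ) : {x : ℚ | x ∈ A6 ∧ ∀ i, nv i x ≤ D}.Finite := by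
  have hf : (Set.Icc (-(6 ^ D * D : ℤ)) (6 ^ D * D)).Finite := Set.finite_Icc _ _
  refine (hf.image (fun z : ℤ => (z : ℚ) / 6 ^ D)).subset ?_
  rintro x ⟨hx, hn⟩
  have hm : x * 6 ^ D ∈ A6 := mul_mem hx (pow_mem (natCast_mem A6 6) D)
  have e6 : (6 : ℚ) = 2 * 3 := by norm_num
  have hv : ∀ i : Fin 3, i ≠ 0 → nv i (x * 6 ^ D) ≤ 1 := by
    intro i hi
    have h6 : nv i (6 ^ D) ≤ (1 / 2) ^ D := by
      have := nv_zpow i 6 D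
      rw [zpow_natCast, zpow_natCast] at this
      rw [this]
      refine pow_le_pow_left₀ (nv_nonneg _ _) ?_ D
      rw [e6, nv_mul, nv2, nv3]
      fin_cases i <;> simp at hi ⊢ ; norm_num
    rw [nv_mul]
    have h7 : (D : ℚ) ≤ 2 ^ D := by exact_mod_cast (Nat.lt_two_pow_self (n := D)).le
    calc nv i x * nv i (6 ^ D) ≤ 2 ^ D * (1 / 2) ^ D :=
          mul_le_mul ((hn i).trans h7) h6 (nv_nonneg _ _) (by positivity)
      _ = 1 := by rw [← mul_pow]; norm_num
  obtain ⟨z, hz⟩ := A6_int hm (hv 1 (by decide)) (hv 2 (by decide))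
  refine ⟨z, ?_, ?_⟩
  · have h1 : |x * 6 ^ D| ≤ 6 ^ D * D := by
      rw [abs_mul, abs_of_pos (show (0 : ℚ) < 6 ^ D by positivity), mul_comm]
      exact mul_le_mul_of_nonneg_left (hn 0) (by positivity)
    rw [hz, abs_le] at h1
    constructor
    · exact_mod_cast h1.1
    · exact_mod_cast h1.2
  · simp only
    rw [← hz]; field_simp

end CP

namespace CP

/-! ### The group attached to a system of affine rules -/

structure AM (κ J : Type) where
  P : ℕ
  hP : Nat.Coprime P 6
  P_pos : 0 < P
  bar : J → J
  bar_bar : ∀ j, bar (bar j) = j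
  ρ : J → κ → ℤ
  e : J → κ → ℕ

abbrev VV (κ : Type) : Type := Option κ → ℚ

@[ext] structure HH (κ : Type) where
  u : VV κ
  k : ℤ × ℤ
  hu : ∀ c, u c ∈ A6

namespace HH
variable {κ : Type}
instance : Mul (HH κ) := ⟨fun x y => ⟨x.u + lam x.k • y.u, x.k + y.k, fun c =>
  add_mem (x.hu c) (mul_mem (lam_mem _) (y.hu c))⟩⟩
instance : One (HH κ) := ⟨⟨0, 0, fun _ => zero_mem _⟩⟩
instance : Inv (HH κ) := ⟨fun x => ⟨-(lam (-x.k) • x.u), -x.k, fun c =>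
  neg_mem (mul_mem (lam_mem _) (x.hu c))⟩⟩
@[simp] theorem mul_u (x y : HH κ) : (x * y).u = x.u + lam x.k • y.u := rfl
@[simp] theorem mul_k (x y : HH κ) : (x * y).k = x.k + y.k := rfl
@[simp] theorem one_u : (1 : HH κ).u = 0 := rfl
@[simp] theorem one_k : (1 : HH κ).k = 0 := rfl
@[simp] theorem inv_u (x : HH κ) : (x⁻¹).u = -(lam (-x.k) • x.u) := rfl
@[simp] theorem inv_k (x : HH κ) : (x⁻¹).k = -x.k := rfl
instance : Group (HH κ) :=
  Group.ofLeftAxioms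
    (fun x y z => by
      apply HH.ext
      · simp [lam_add, mul_smul, add_assoc]
      · simp [add_assoc])
    (fun x => by apply HH.ext <;> simp)
    (fun x => by apply HH.ext <;> simp)

def perm (h : HH κ) : Equiv.Perm (VV κ) where
  toFun x := lam h.k • x + h.u
  invFun x := lam (-h.k) • (x - h.u)
  left_inv x := by simp [smul_smul, ← lam_add]
  right_inv x := by simp [smul_smul, ← lam_add]

def hom : HH κ →* Equiv.Perm (VV κ) where
  toFun := perm
  map_one' := by
    apply Equiv.ext; intro x; simp [perm]
  map_mul' h h' := by
    apply Equiv.ext; intro x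
    simp only [perm, HH.mul_k, HH.mul_u, lam_add, mul_smul, Equiv.coe_fn_mk, Equiv.Perm.coe_mul,
      Function.comp_apply, smul_add]
    abel

def kap : HH κ →* Multiplicative (ℤ × ℤ) where
  toFun h := Multiplicative.ofAdd h.k
  map_one' := rfl
  map_mul' _ _ := rfl

def vec (u : VV κ) (hu : ∀ c, u c ∈ A6) : HH κ := ⟨u, 0, hu⟩
end HH

namespace AM
variable {κ J : Type} (M : AM κ J)

theorem P_ne : (M.P : ℚ) ≠ 0 := by exact_mod_cast M.P_pos.ne'

def Ls (j : J) : VV κ →ₗ[ℚ] VV κ where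
  toFun x c := match c with
    | none => x none
    | some c => M.ρ (M.bar j) c * x none +
        M.P ^ (M.e (M.bar j) c) / M.P ^ (M.e j c) * (x (some c) - M.ρ j c * x none)
  map_add' x y := by
    ext c; rcases c with _ | c
    · rfl
    · simp only [Pi.add_apply]; ring
  map_smul' a x := by
    ext c; rcases c with _ | c
    · rfl
    · simp only [Pi.smul_apply, smul_eq_mul, RingHom.id_apply]; ring

@[simp] theorem Ls_none (j : J) (x : VV κ) : M.Ls j x none = x none := rfl
theorem Ls_some (j : J) (x : VV κ) (c : κ) : M.Ls j x (some c) = M.ρ (M.bar j) c * x none +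
        M.P ^ (M.e (M.bar j) c) / M.P ^ (M.e j c) * (x (some c) - M.ρ j c * x none) := rfl

theorem Ls_bar (j : J) (x : VV κ) : M.Ls (M.bar j) (M.Ls j x) = x := by
  ext c; rcases c with _ | c
  · rfl
  · rw [Ls_some, Ls_some, Ls_none, M.bar_bar]
    have := M.P_ne
    field_simp
    ring

def Dom (j : J) (x : VV κ) : Prop :=
  ∀ c, ∃ a ∈ A6, x (some c) = M.ρ j c * x none + M.P ^ (M.e j c) * a

theorem Ls_dom {j : J} {x : VV κ} (h : M.Dom j x) : M.Dom (M.bar j) (M.Ls j x) := by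
  intro c
  obtain ⟨a, ha, h⟩ := h c
  refine ⟨a, ha, ?_⟩
  rw [Ls_some, h, Ls_none]
  have := M.P_ne
  field_simp
  ring

theorem Dom.mem {j : J} {x : VV κ} (h : M.Dom j x) (h0 : x none ∈ A6) (c : Option κ) : x c ∈ A6 := by
  rcases c with _ | c
  · exact h0
  · obtain ⟨a, ha, h⟩ := h c
    rw [h]
    exact add_mem (mul_mem (intCast_mem _ _) h0) (mul_mem (pow_mem (natCast_mem _ _) _) ha)

theorem Dom.add {j : J} {x y : VV κ} (h : M.Dom j x) (h' : M.Dom j y) : M.Dom j (x + y) := by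
  intro c
  obtain ⟨a, ha, e⟩ := h c
  obtain ⟨b, hb, e'⟩ := h' c
  exact ⟨a + b, add_mem ha hb, by simp only [Pi.add_apply, e, e']; ring⟩
theorem Dom.smul {j : J} {x : VV κ} (h : M.Dom j x) {b : ℚ} (hb : b ∈ A6) : M.Dom j (b • x) := by
  intro c
  obtain ⟨a, ha, e⟩ := h c
  exact ⟨b * a, mul_mem hb ha, by simp only [Pi.smul_apply, smul_eq_mul, e]; ring⟩

def D (j : J) : Subgroup (HH κ) where
  carrier := {h | M.Dom j h.u}
  mul_mem' := by
    intro a b ha hb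
    exact Dom.add M ha (Dom.smul M hb (lam_mem _))
  one_mem' := by intro c; exact ⟨0, zero_mem _, by simp⟩
  inv_mem' := by
    intro a ha
    have := Dom.smul M ha (neg_mem (lam_mem (-a.k)))
    rw [neg_smul] at this
    exact this

theorem mem_D {j : J} {h : HH κ} : h ∈ M.D j ↔ M.Dom j h.u := Iff.rfl

open Classical in
noncomputable def φ (j : J) (h : HH κ) : HH κ :=
  if hh : M.Dom j h.u then ⟨M.Ls j h.u, h.k, Dom.mem M (M.Ls_dom hh) (h.hu none)⟩ else 1

theorem φ_u {j : J} {h : HH κ} (hh : h ∈ M.D j) : (M.φ j h).u = M.Ls j h.u := by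
  rw [φ, dif_pos (show M.Dom j h.u from hh)]
theorem φ_k {j : J} {h : HH κ} (hh : h ∈ M.D j) : (M.φ j h).k = h.k := by
  rw [φ, dif_pos (show M.Dom j h.u from hh)]

noncomputable def hd : HD (HH κ) J where
  bar := M.bar
  bar_bar := M.bar_bar
  D := M.D
  φ := M.φ
  φ_mem j h hh := by rw [mem_D, M.φ_u hh]; exact M.Ls_dom hh
  φ_bar j h hh := by
    have h1 : M.φ j h ∈ M.D (M.bar j) := by rw [mem_D, M.φ_u hh]; exact M.Ls_dom hh
    apply HH.ext
    · rw [M.φ_u h1, M.φ_u hh, Ls_bar]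
    · rw [M.φ_k h1, M.φ_k hh]
  φ_mul j h h' hh hh' := by
    apply HH.ext
    · rw [M.φ_u (mul_mem hh hh'), HH.mul_u, HH.mul_u, M.φ_u hh, M.φ_u hh', M.φ_k hh, map_add, map_smul]
    · rw [M.φ_k (mul_mem hh hh'), HH.mul_k, HH.mul_k, M.φ_k hh, M.φ_k hh']

abbrev Gp : Type := M.hd.Grp

def tperm (j : J) : Equiv.Perm (VV κ) where
  toFun := M.Ls j
  invFun := M.Ls (M.bar j)
  left_inv x := M.Ls_bar j x
  right_inv x := by have := M.Ls_bar (M.bar j) x; rwa [M.bar_bar] at this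

noncomputable def act : M.Gp →* Equiv.Perm (VV κ) :=
  M.hd.lift HH.hom M.tperm
    (by
      intro j u hu
      rw [mul_inv_eq_iff_eq_mul]
      apply Equiv.ext; intro x
      change M.Ls j (lam u.k • x + u.u) = lam (M.φ j u).k • M.Ls j x + (M.φ j u).u
      have hu' : u ∈ M.D j := hu
      rw [M.φ_u hu', M.φ_k hu', map_add, map_smul])
    (by intro j; apply Equiv.ext; intro x; rfl)

noncomputable instance : MulAction M.Gp (VV κ) := MulAction.compHom (VV κ) M.act

theorem ofH_smul (h : HH κ) (x : VV κ) : (M.hd.ofH h : M.Gp) • x = lam h.k • x + h.u := by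
  change M.act (M.hd.ofH h) x = _
  rw [act, HD.lift_ofH]; rfl
theorem t_smul (j : J) (x : VV κ) : (M.hd.t j : M.Gp) • x = M.Ls j x := by
  change M.act (M.hd.t j) x = _
  rw [act, HD.lift_t]; rfl

noncomputable def kapM : M.Gp →* Multiplicative (ℤ × ℤ) :=
  M.hd.lift HH.kap (fun _ => 1)
    (by
      intro j u hu
      have hu' : u ∈ M.D j := hu
      have : HH.kap (M.φ j u) = HH.kap u := congrArg Multiplicative.ofAdd (M.φ_k hu')
      change 1 * HH.kap u * 1⁻¹ = HH.kap (M.φ j u)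
      rw [this]; simp)
    (by simp)
noncomputable def kap (g : M.Gp) : ℤ × ℤ := (M.kapM g).toAdd
theorem kap_mul (g h : M.Gp) : M.kap (g * h) = M.kap g + M.kap h := by
  simp [kap]
theorem kap_inv (g : M.Gp) : M.kap g⁻¹ = -M.kap g := by
  simp [kap]
theorem kap_ofH (h : HH κ) : M.kap (M.hd.ofH h) = h.k := by
  rw [kap, kapM, HD.lift_ofH]; rfl
theorem kap_t (j : J) : M.kap (M.hd.t j) = 0 := by
  rw [kap, kapM, HD.lift_t]; rfl

variable [Fintype κ]

def nrm (i : Fin 3) (x : VV κ) : ℚ := ∑ c, nv i (x c)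

theorem nrm_nonneg (i : Fin 3) (x : VV κ) : 0 ≤ nrm i x := Finset.sum_nonneg fun _ _ => nv_nonneg _ _
theorem nv_le_nrm (i : Fin 3) (x : VV κ) (c : Option κ) : nv i (x c) ≤ nrm i x :=
  Finset.single_le_sum (f := fun c => nv i (x c)) (fun _ _ => nv_nonneg _ _) (Finset.mem_univ c)
theorem nrm_smul (i : Fin 3) (a : ℚ) (x : VV κ) : nrm i (a • x) = nv i a * nrm i x := by
  simp only [nrm, Finset.mul_sum, Pi.smul_apply, smul_eq_mul, nv_mul]
theorem nrm_add (i : Fin 3) (x y : VV κ) : nrm i (x + y) ≤ nrm i x + nrm i y := by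
  rw [nrm, nrm, nrm, ← Finset.sum_add_distrib]
  exact Finset.sum_le_sum fun c _ => nv_add i _ _
theorem nrm_neg (i : Fin 3) (x : VV κ) : nrm i (-x) = nrm i x := by
  simp [nrm, nv_neg]

theorem lin_bd (i : Fin 3) (L : VV κ →ₗ[ℚ] VV κ) : ∃ C : ℚ, ∀ x, nrm i (L x) ≤ C * nrm i x := by
  classical
  refine ⟨∑ c, ∑ d, nv i (L (Pi.single d 1) c), fun x => ?_⟩
  rw [nrm, Finset.sum_mul]
  refine Finset.sum_le_sum fun c _ => ?_
  have e : L x c = ∑ d, x d * L (Pi.single d 1) c := by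
    conv_lhs => rw [LinearMap.pi_apply_eq_sum_univ L x]
    rw [Finset.sum_apply]
    apply Finset.sum_congr rfl
    intro d _
    rw [Pi.smul_apply, smul_eq_mul]
    have e3 : (fun j => if d = j then (1 : ℚ) else 0) = Pi.single d 1 := by
      ext a
      simp [Pi.single_apply, eq_comm]
    rw [e3]
  rw [e, Finset.sum_mul]
  refine (nv_sum i _ _).trans (Finset.sum_le_sum fun d _ => ?_)
  rw [nv_mul, mul_comm]
  exact mul_le_mul_of_nonneg_left (nv_le_nrm i x d) (nv_nonneg _ _)

variable [Finite J]
set_option linter.unusedSectionVars false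

theorem exists_B : ∃ B : ℕ, 3 ≤ B ∧ ∀ i j x, nrm i (M.Ls j x) ≤ B * nrm i x := by
  choose C hC using fun (p : Fin 3 × J) => lin_bd p.1 (M.Ls p.2)
  cases nonempty_fintype J
  obtain ⟨N, hN⟩ := exists_nat_ge (∑ p, |C p|)
  refine ⟨N + 3, by omega, fun i j x => (hC (i, j) x).trans ?_⟩
  refine mul_le_mul_of_nonneg_right ?_ (nrm_nonneg _ _)
  push_cast
  have := Finset.single_le_sum (f := fun p => |C p|) (fun _ _ => abs_nonneg _) (Finset.mem_univ (i, j))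
  have h2 := le_abs_self (C (i, j))
  linarith

noncomputable def B : ℕ := M.exists_B.choose
theorem B_ge : 3 ≤ M.B := M.exists_B.choose_spec.1
theorem Ls_bd (i : Fin 3) (j : J) (x : VV κ) : nrm i (M.Ls j x) ≤ M.B * nrm i x :=
  M.exists_B.choose_spec.2 i j x

def ds (i : Fin 3) (a b : VV κ) : ℚ := nrm i (a - b)

theorem ds_ofH (i : Fin 3) (h : HH κ) (a b : VV κ) :
    ds i ((M.hd.ofH h : M.Gp) • a) ((M.hd.ofH h : M.Gp) • b) = nv i (lam h.k) * ds i a b := by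
  rw [M.ofH_smul, M.ofH_smul, ds, ds, ← nrm_smul]
  congr 1
  rw [smul_sub]; abel

theorem ds_t (i : Fin 3) (j : J) (a b : VV κ) :
    ds i ((M.hd.t j : M.Gp) • a) ((M.hd.t j : M.Gp) • b) ≤ M.B * ds i a b := by
  rw [M.t_smul, M.t_smul, ds, ds, ← map_sub]
  exact M.Ls_bd i j _

theorem ds_nonneg (i : Fin 3) (a b : VV κ) : 0 ≤ ds i a b := nrm_nonneg _ _

theorem ds_n (i : Fin 3) (l : List (J × HH κ)) : ∀ (a b : VV κ),
    ds i ((M.hd.n l : M.Gp) • a) ((M.hd.n l : M.Gp) • b) ≤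
      (M.B : ℚ) ^ l.length * nv i (lam (M.kap (M.hd.n l))) * ds i a b ∧
    ds i ((M.hd.n l : M.Gp)⁻¹ • a) ((M.hd.n l : M.Gp)⁻¹ • b) ≤
      (M.B : ℚ) ^ l.length * nv i (lam (-M.kap (M.hd.n l))) * ds i a b := by
  induction l with
  | nil => intro a b; simp [HD.n, kap]
  | cons x l ih =>
    obtain ⟨j, r⟩ := x
    intro a b
    rw [HD.n, kap_mul, kap_mul, kap_t, kap_ofH, zero_add, mul_inv_rev, mul_inv_rev, ← HD.t_bar,
      ← map_inv]
    simp only [mul_smul, neg_add, lam_add, nv_mul, List.length_cons, pow_succ]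
    have hB : (0 : ℚ) ≤ M.B := by positivity
    constructor
    · refine (M.ds_t i j _ _).trans ?_
      rw [M.ds_ofH]
      have := mul_le_mul_of_nonneg_left (ih a b).1
        (mul_nonneg hB (nv_nonneg i (lam r.k)))
      refine le_trans (le_of_eq (by ring)) (this.trans (le_of_eq (by ring)))
    · refine (ih _ _).2.trans ?_
      rw [M.ds_ofH]
      have h1 := M.ds_t i (M.hd.bar j) a b
      rw [HH.inv_k]
      have := mul_le_mul_of_nonneg_left h1 (mul_nonneg (mul_nonneg (pow_nonneg hB l.length)
        (nv_nonneg i (lam (-M.kap (M.hd.n l))))) (nv_nonneg i (lam (-r.k))))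
      refine le_trans (le_of_eq (by ring)) (this.trans (le_of_eq (by ring)))

theorem lip_inv (i : Fin 3) (s : M.Gp) (a b : VV κ) : ds i (s⁻¹ • a) (s⁻¹ • b) ≤
    (M.B : ℚ) ^ (M.hd.vtx s).length * nv i (lam (-M.kap s)) * ds i a b := by
  have e := M.hd.inv_eq s
  rw [← kap_inv, e, mul_smul, mul_smul, M.ds_ofH, kap_mul, kap_ofH, lam_add, nv_mul]
  have := mul_le_mul_of_nonneg_left (M.ds_n i (M.hd.vtx s) a b).1 (nv_nonneg i (lam (M.hd.hp s).k))
  exact this.trans (le_of_eq (by ring))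

theorem lip (i : Fin 3) (s : M.Gp) (a b : VV κ) : ds i (s • a) (s • b) ≤
    (M.B : ℚ) ^ (M.hd.vtx s).length * nv i (lam (M.kap s)) * ds i a b := by
  have e : s = (M.hd.n (M.hd.vtx s))⁻¹ * M.hd.ofH (M.hd.hp s)⁻¹ := by
    conv_lhs => rw [← inv_inv s, M.hd.inv_eq s]
    rw [mul_inv_rev, map_inv]
  have e2 : s • a = (M.hd.n (M.hd.vtx s))⁻¹ • (M.hd.ofH (M.hd.hp s)⁻¹ : M.Gp) • a := by
    conv_lhs => rw [e, mul_smul]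
  have e3 : s • b = (M.hd.n (M.hd.vtx s))⁻¹ • (M.hd.ofH (M.hd.hp s)⁻¹ : M.Gp) • b := by
    conv_lhs => rw [e, mul_smul]
  have e4 : M.kap s = -M.kap (M.hd.n (M.hd.vtx s)) + -(M.hd.hp s).k := by
    conv_lhs => rw [e, kap_mul, kap_inv, kap_ofH, HH.inv_k]
  rw [e2, e3, e4, lam_add, nv_mul]
  refine (M.ds_n i (M.hd.vtx s) _ _).2.trans ?_
  rw [M.ds_ofH, HH.inv_k]
  exact le_of_eq (by ring)

theorem pi (l : List (J × HH κ)) (hl : M.hd.Red l) (k : ℤ × ℤ) (c : Fin 3 → VV κ) :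
    ∃ g : M.Gp, M.hd.vtx g = l ∧ M.kap g = k ∧ ∀ i, ds i 0 (g⁻¹ • c i) ≤ Fintype.card (Option κ) := by
  set k' := -k - M.kap (M.hd.n l)
  choose a ha hb using fun d : Option κ =>
    approx (fun i => (lam k' • ((M.hd.n l : M.Gp) • c i)) d)
  refine ⟨(M.hd.ofH ⟨a, k', ha⟩ * M.hd.n l)⁻¹, M.hd.exists_vtx l hl _, ?_, ?_⟩
  · rw [kap_inv, kap_mul, kap_ofH]; simp [k']
  · intro i
    rw [inv_inv, mul_smul, M.ofH_smul, ds, zero_sub, nrm_neg, nrm]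
    refine (Finset.sum_le_sum (fun d _ => hb d i)).trans ?_
    simp

theorem exists_q (j : J) : ∃ (Q : Type) (_ : Finite Q) (q : HH κ → Q),
    ∀ h h', q h = q h' → h * h'⁻¹ ∈ M.D j := by
  set m : κ → ℕ := fun c => M.P ^ M.e j c
  have hm : ∀ c, Nat.Coprime (m c) 6 := fun c => Nat.Coprime.pow_left _ M.hP
  have hm0 : ∀ c, 0 < m c := fun c => pow_pos M.P_pos _
  have hmem : ∀ (h : HH κ) (c : κ), lam (-h.k) * (h.u (some c) - M.ρ j c * h.u none) ∈ A6 :=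
    fun h c => mul_mem (lam_mem _) (sub_mem (h.hu _) (mul_mem (intCast_mem _ _) (h.hu _)))
  choose d hd a ha hda using fun (h : HH κ) (c : κ) => exists_res (hm c) (hm0 c) (hmem h c)
  refine ⟨(c : κ) → Fin (m c), inferInstance, fun h c => ⟨d h c, hd h c⟩, ?_⟩
  intro h h' e c
  have e' : d h c = d h' c := by simpa using congrFun e c
  have h1 := hda h c
  have h2 := hda h' c
  rw [e'] at h1
  have e1 : (h * h'⁻¹).u = h.u - lam h.k • (lam (-h'.k) • h'.u) := by
    simp [sub_eq_add_neg]
  refine ⟨lam h.k * (a h c - a h' c), mul_mem (lam_mem _) (sub_mem (ha _ _) (ha _ _)), ?_⟩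
  rw [e1]
  simp only [Pi.sub_apply, Pi.smul_apply, smul_eq_mul]
  have e2 : lam h.k * lam (-h.k) = 1 := by rw [← lam_add]; simp
  have hmc : (m c : ℚ) = M.P ^ M.e j c := by simp [m]
  rw [hmc] at h1 h2
  linear_combination lam h.k * (h1 - h2) - (h.u (some c) - M.ρ j c * h.u none) * e2

theorem hfin (D : ℕ) (k : ℤ × ℤ) : {h : HH κ | h.k = k ∧ ∀ i, nrm i h.u ≤ D}.Finite := by
  have hf : (Set.pi Set.univ (fun _ : Option κ => {x : ℚ | x ∈ A6 ∧ ∀ i, nv i x ≤ D})).Finite :=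
    Set.Finite.pi' (fun _ => A6_finite D) |>.subset (by intro x hx c; exact hx c trivial)
  refine Set.Finite.of_finite_image (f := fun h : HH κ => h.u) (hf.subset ?_) ?_
  · rintro _ ⟨h, ⟨h1, h2⟩, rfl⟩ c _
    exact ⟨h.hu c, fun i => (nv_le_nrm i h.u c).trans (h2 i)⟩
  · intro h hh h' hh' e
    exact HH.ext e (hh.1.trans hh'.1.symm)

theorem nk_fin (D : ℕ) : {k : ℤ × ℤ | nk k ≤ D}.Finite := by
  refine (Set.finite_Icc ((-D : ℤ), (-D : ℤ)) ((D : ℤ), (D : ℤ))).subset ?_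
  intro k hk
  simp only [Set.mem_ofPred_eq, nk] at hk
  rw [Set.mem_Icc, Prod.le_def, Prod.le_def]
  refine ⟨⟨?_, ?_⟩, ⟨?_, ?_⟩⟩ <;> simp only <;> omega

theorem hfin' (D : ℕ) : {h : HH κ | nk h.k ≤ D ∧ ∀ i, nrm i h.u ≤ D}.Finite := by
  refine ((nk_fin D).biUnion (fun k _ => hfin (κ := κ) D k)).subset ?_
  rintro h ⟨h1, h2⟩
  exact Set.mem_biUnion (show h.k ∈ {k : ℤ × ℤ | nk k ≤ D} from h1) ⟨rfl, h2⟩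

theorem ds_tri (i : Fin 3) (a b c : VV κ) : ds i a c ≤ ds i a b + ds i b c := by
  have := nrm_add i (a - b) (b - c)
  rwa [sub_add_sub_cancel] at this
theorem ds_symm (i : Fin 3) (a b : VV κ) : ds i a b = ds i b a := by
  rw [ds, ← nrm_neg, neg_sub, ds]

theorem ds_zero (i : Fin 3) (a : VV κ) : ds i 0 a = nrm i a := by
  rw [ds, zero_sub, nrm_neg]

theorem gfin (D : ℕ) : {s : M.Gp | (M.hd.vtx s).length ≤ 1 ∧ nk (M.kap s) ≤ D ∧
    ∀ i, ds i 0 (s • (0 : VV κ)) ≤ D}.Finite := by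
  have hr : ∀ j, (Set.range (M.hd.rp j)).Finite := by
    intro j
    obtain ⟨Q, hQ, q, hq⟩ := M.exists_q j
    exact M.hd.rp_finite j q hq
  have hN : ∀ (j : J) (r : HH κ), ∃ N : ℕ, ∀ i, ds i 0 ((M.hd.t j : M.Gp) • (M.hd.ofH r : M.Gp) • (0 : VV κ)) +
      M.B * (nv i (lam r.k) * D) ≤ N ∧ nk r.k + D ≤ N := by
    intro j r
    obtain ⟨N, hN⟩ := exists_nat_ge (∑ i, (ds i 0 ((M.hd.t j : M.Gp) • (M.hd.ofH r : M.Gp) • (0 : VV κ)) +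
      M.B * (nv i (lam r.k) * D)))
    refine ⟨N + (nk r.k + D), fun i => ⟨?_, by omega⟩⟩
    have := Finset.single_le_sum (f := fun i => ds i 0 ((M.hd.t j : M.Gp) • (M.hd.ofH r : M.Gp) • (0 : VV κ)) +
      M.B * (nv i (lam r.k) * D)) (fun i _ => add_nonneg (ds_nonneg _ _ _)
        (mul_nonneg (by positivity) (mul_nonneg (nv_nonneg _ _) (by positivity)))) (Finset.mem_univ i)
    push_cast
    have h0 : (0 : ℚ) ≤ (nk r.k : ℚ) + D := by positivity
    linarith
  choose N hN using hN
  have hf1 : ((fun h : HH κ => (M.hd.ofH h : M.Gp)) '' {h : HH κ | nk h.k ≤ D ∧ ∀ i, nrm i h.u ≤ D}).Finite :=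
    (hfin' D).image _
  have hf2 : (⋃ j, ⋃ r ∈ Set.range (M.hd.rp j),
      (fun h : HH κ => (M.hd.ofH r⁻¹ * M.hd.t (M.bar j) * M.hd.ofH h : M.Gp)) ''
        {h : HH κ | nk h.k ≤ N j r ∧ ∀ i, nrm i h.u ≤ N j r}).Finite :=
    Set.finite_iUnion fun j => (hr j).biUnion fun r _ => (hfin' (N j r)).image _
  refine (hf1.union hf2).subset ?_
  rintro s ⟨h1, h2, h3⟩
  have es := M.hd.inv_eq s
  rcases hv : M.hd.vtx s with _ | ⟨⟨j, r⟩, l⟩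
  · left
    rw [hv, HD.n, mul_one] at es
    have es' : s = M.hd.ofH (M.hd.hp s)⁻¹ := by rw [map_inv, ← es, inv_inv]
    set h := (M.hd.hp s)⁻¹
    refine ⟨h, ⟨?_, ?_⟩, es'.symm⟩
    · rwa [es', kap_ofH] at h2
    · intro i
      have := h3 i
      rw [es', M.ofH_smul, ds_zero] at this
      simpa using this
  · right
    have hl : l = [] := by rw [hv] at h1; simpa using h1
    subst hl
    rw [hv, HD.n, HD.n, mul_one] at es
    have hrr : M.hd.rp j r = r := by have := M.hd.red_vtx s; rw [hv] at this; exact this.1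
    set h := (M.hd.hp s)⁻¹ with hh
    have e1 : M.hd.ofH h = M.hd.t j * M.hd.ofH r * s := by
      have : (M.hd.ofH (M.hd.hp s)) = s⁻¹ * (M.hd.t j * M.hd.ofH r)⁻¹ := by rw [es]; group
      rw [hh, map_inv, this]; group
    have hb : M.hd.t (M.bar j) = (M.hd.t j)⁻¹ := M.hd.t_bar j
    have e2 : s = M.hd.ofH r⁻¹ * M.hd.t (M.bar j) * M.hd.ofH h := by
      rw [e1, hb, map_inv]; group
    refine Set.mem_iUnion.2 ⟨j, Set.mem_biUnion ⟨r, hrr⟩ ⟨h, ⟨?_, ?_⟩, e2.symm⟩⟩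
    · have := congrArg M.kap e1
      rw [kap_ofH, kap_mul, kap_mul, kap_t, kap_ofH, zero_add] at this
      rw [this]
      exact (nk_add _ _).trans (le_trans (Nat.add_le_add_left h2 _) (hN j r 0).2)
    · intro i
      have e3 : h.u = (M.hd.ofH h : M.Gp) • (0 : VV κ) := by rw [M.ofH_smul]; simp
      rw [e3, e1, mul_smul, mul_smul, ← ds_zero]
      refine (ds_tri i _ ((M.hd.t j : M.Gp) • (M.hd.ofH r : M.Gp) • (0 : VV κ)) _).trans
        (le_trans ?_ (hN j r i).1)
      have a1 := M.ds_t i j ((M.hd.ofH r : M.Gp) • (0 : VV κ)) ((M.hd.ofH r : M.Gp) • s • (0 : VV κ))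
      rw [M.ds_ofH] at a1
      have a2 : (M.B : ℚ) * (nv i (lam r.k) * ds i 0 (s • (0 : VV κ))) ≤ M.B * (nv i (lam r.k) * D) :=
        mul_le_mul_of_nonneg_left (mul_le_mul_of_nonneg_left (h3 i) (nv_nonneg _ _)) (by positivity)
      linarith

theorem lam_nsmul (n : ℕ) (k : ℤ × ℤ) : lam (n • k) = lam k ^ n := by
  induction n with
  | zero => simp
  | succ n ih => rw [succ_nsmul, lam_add, ih, pow_succ]

theorem nv_pow (i : Fin 3) (x : ℚ) (n : ℕ) : nv i (x ^ n) = nv i x ^ n := by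
  have := nv_zpow i x n
  rwa [zpow_natCast, zpow_natCast] at this

noncomputable def geo : Geo M.Gp (VV κ) (J × HH κ) where
  o := 0
  vtx := M.hd.vtx
  Red := M.hd.Red
  κ := M.kap
  dist i a b := ((ds i a b : ℚ) : ℝ)
  r i k := ((nv i (lam k) : ℚ) : ℝ)
  B := M.B
  T0 := Fintype.card (Option κ)
  τ j := M.B • tau0 j
  κ_mul := M.kap_mul
  dist_self i a := by simp [ds, nrm]
  dist_symm i a b := by rw [ds_symm]
  dist_tri i a b c := by exact_mod_cast ds_tri i a b c
  B_ge := by have := M.B_ge; exact_mod_cast (by omega : 2 ≤ M.B)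
  T0_ge := by positivity
  lip i s a b := by exact_mod_cast M.lip i s a b
  lip' i s a b := by exact_mod_cast M.lip_inv i s a b
  r_add i k k' := by rw [lam_add, nv_mul]; push_cast; rfl
  r_pos i k := by exact_mod_cast nv_pos i (lam_ne k)
  r_le i k := by
    have h1 := nv_lam_le i k
    have h2 : (3 : ℚ) ^ nk k ≤ (M.B : ℚ) ^ nk k :=
      pow_le_pow_left₀ (by norm_num) (by exact_mod_cast M.B_ge) _
    exact_mod_cast h1.trans h2
  r_tau i j h := by
    have h1 := nv_tau i j h
    have h2 : (M.B : ℚ) ≤ 2 ^ M.B := by exact_mod_cast (Nat.lt_two_pow_self (n := M.B)).le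
    have h3 : (2 : ℚ) ^ M.B ≤ nv i (lam (tau0 j)) ^ M.B := pow_le_pow_left₀ (by norm_num) h1 _
    rw [lam_nsmul, nv_pow]
    exact_mod_cast h2.trans h3
  vtx_one := M.hd.vtx_one
  red_vtx := M.hd.red_vtx
  red_tail a l h := h.tail
  len_mul := M.hd.len_mul
  adj_of := M.hd.adj_of
  of_adj := M.hd.of_adj
  of_eq := M.hd.of_eq
  pi l hl k c := by
    obtain ⟨g, h1, h2, h3⟩ := M.pi l hl k c
    exact ⟨g, h1, h2, fun i => by exact_mod_cast h3 i⟩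
  fin D := by
    refine (M.gfin D).subset ?_
    rintro s ⟨h1, h2, h3⟩
    exact ⟨h1, h2, fun i => by exact_mod_cast h3 i⟩

end AM
end CP

namespace CP

/-! ### Conjugacy in the group, and reduction to a modular stack machine -/

namespace AM
variable {κ J : Type} (M : AM κ J)

theorem conj_vec (Inv : VV κ → Prop) (hs : ∀ x k, Inv x → Inv (lam k • x))
    (hL : ∀ j x, (∀ c, x c ∈ A6) → M.Dom j x → Inv x → Inv (M.Ls j x)) {x y : VV κ}
    (hx : ∀ c, x c ∈ A6) (hy : ∀ c, y c ∈ A6)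
    (hc : IsConj (M.hd.ofH (HH.vec x hx)) (M.hd.ofH (HH.vec y hy))) (h : Inv x) : Inv y := by
  have := M.hd.conj_pred (fun h => h.k = 0 ∧ Inv h.u) ?_ ?_ hc ⟨rfl, h⟩
  · exact this.2
  · rintro u v ⟨h1, h2⟩
    refine ⟨by simp [h1], ?_⟩
    have e : (v * u * v⁻¹).u = lam v.k • u.u := by
      simp only [HH.mul_u, HH.mul_k, HH.inv_u, h1, add_zero, smul_neg, smul_smul, ← lam_add]
      simp
    rw [e]
    exact hs _ _ h2
  · rintro j u hu ⟨h1, h2⟩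
    have hu' : u ∈ M.D j := hu
    change (M.φ j u).k = 0 ∧ Inv (M.φ j u).u
    rw [M.φ_k hu', M.φ_u hu']
    exact ⟨h1, hL j _ u.hu hu' h2⟩

theorem conj_step (j : J) {x : VV κ} (hx : ∀ c, x c ∈ A6) (hd : M.Dom j x)
    (hy : ∀ c, M.Ls j x c ∈ A6) :
    IsConj (M.hd.ofH (HH.vec x hx)) (M.hd.ofH (HH.vec (M.Ls j x) hy)) := by
  have hu : HH.vec x hx ∈ M.D j := hd
  refine isConj_iff.2 ⟨M.hd.t j, ?_⟩
  have h1 : M.hd.t j * M.hd.ofH (HH.vec x hx) * (M.hd.t j)⁻¹ = M.hd.ofH (M.φ j (HH.vec x hx)) :=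
    M.hd.t_conj j hu
  rw [h1]
  congr 1
  exact HH.ext (M.φ_u hu) (M.φ_k hu)

end AM

section machine
variable {κ : Type} (P : ℕ) (hP : Nat.Coprime P 6) (hP0 : 0 < P) (op : (κ → Fin P) → κ → ℕ × ℕ)

/-- rule system of a modular stack machine -/
def mach : AM κ ((κ → Fin P) × Bool) where
  P := P
  hP := hP
  P_pos := hP0
  bar j := (j.1, !j.2)
  bar_bar j := by simp
  ρ j c := if j.2 then (j.1 c : ℕ) else (op j.1 c).1
  e j c := if j.2 then 1 else (op j.1 c).2

/-- one step on natural number configurations -/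
def nstep (s : κ → ℕ) (c : κ) : ℕ :=
  (op (fun c => ⟨s c % P, Nat.mod_lt _ hP0⟩) c).1 +
    P ^ (op (fun c => ⟨s c % P, Nat.mod_lt _ hP0⟩) c).2 * (s c / P)

def Stp (y y' : κ → ℚ) : Prop :=
  ∃ (r : κ → Fin P) (a : κ → ℚ), ∀ c, a c ∈ A6 ∧ y c = (r c : ℕ) + P * a c ∧
    y' c = (op r c).1 + P ^ (op r c).2 * a c

theorem Stp.det (P : ℕ) (hP : Nat.Coprime P 6) (hP0 : 0 < P) (op : (κ → Fin P) → κ → ℕ × ℕ)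
    {y y' y'' : κ → ℚ} (h : Stp P op y y') (h' : Stp P op y y'') : y' = y'' := by
  obtain ⟨r, a, h⟩ := h
  obtain ⟨r', a', h'⟩ := h'
  have hr : r = r' := by
    ext c
    obtain ⟨h1, h2, -⟩ := h c
    obtain ⟨h1', h2', -⟩ := h' c
    exact res_unique hP (r c).2 (r' c).2 (sub_mem h1' h1) (by linear_combination h2' - h2)
  subst hr
  have hP' : (P : ℚ) ≠ 0 := by exact_mod_cast hP0.ne'
  ext c
  obtain ⟨h1, h2, h3⟩ := h c
  obtain ⟨h1', h2', h3'⟩ := h' c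
  have : a c = a' c := by
    apply mul_left_cancel₀ hP'
    linear_combination h2' - h2
  rw [h3, h3', this]

theorem Stp.nat (s : κ → ℕ) :
    Stp P op (fun c => (s c : ℚ)) (fun c => (nstep P hP0 op s c : ℚ)) := by
  refine ⟨fun c => ⟨s c % P, Nat.mod_lt _ hP0⟩, fun c => ((s c / P : ℕ) : ℚ), fun c => ⟨natCast_mem _ _, ?_, ?_⟩⟩
  · change ((s c:ℕ):ℚ) = ((s c % P : ℕ):ℚ) + P * ((s c / P : ℕ):ℚ)
    exact_mod_cast (Nat.mod_add_div (s c) P).symm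
  · simp only [nstep]; push_cast; rfl

def emb (s : κ → ℕ) : VV κ := fun c => match c with
  | none => 1
  | some c => s c

theorem emb_mem (s : κ → ℕ) (c : Option κ) : emb s c ∈ A6 := by
  rcases c with _ | c
  · exact one_mem _
  · exact natCast_mem _ _

theorem conj_iff (s t : κ → ℕ) (ht : nstep P hP0 op t = t) :
    IsConj ((mach P hP hP0 op).hd.ofH (HH.vec (emb s) (emb_mem s)))
      ((mach P hP hP0 op).hd.ofH (HH.vec (emb t) (emb_mem t))) ↔
    ∃ i, (nstep P hP0 op)^[i] s = t := by
  set M := mach P hP hP0 op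
  have hP' : (P : ℚ) ≠ 0 := by exact_mod_cast hP0.ne'
  constructor
  · intro hc
    have htt : Stp P op (fun c => (t c : ℚ)) (fun c => (t c : ℚ)) := by
      have := Stp.nat P hP0 op t
      rwa [ht] at this
    let T : (κ → ℚ) → Prop := fun y => Relation.ReflTransGen (Stp P op) y (fun c => (t c : ℚ))
    have hT : ∀ y y', Stp P op y y' → (T y ↔ T y') := by
      intro y y' h
      constructor
      · intro h'
        rcases Relation.ReflTransGen.cases_head h' with h2 | ⟨y'', h2, h3⟩
        · subst h2
          rw [Stp.det P hP hP0 op h htt]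
        · rwa [Stp.det P hP hP0 op h h2]
      · intro h'
        exact Relation.ReflTransGen.head h h'
    let Inv : VV κ → Prop := fun x => ∃ k, ∃ y, x none = lam k ∧ (∀ c, x (some c) = lam k * y c) ∧ T y
    have key : Inv (emb s) := by
      refine M.conj_vec Inv ?_ ?_ (emb_mem t) (emb_mem s) hc.symm ?_
      · rintro x k ⟨k', y, h1, h2, h3⟩
        refine ⟨k + k', y, ?_, ?_, h3⟩
        · simp [h1, lam_add]
        · intro c; simp [h2, lam_add]; ring
      · rintro ⟨r, b⟩ x hx hd ⟨k, y, h1, h2, h3⟩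
        choose a ha hb using hd
        have hk := lam_ne k
        rcases b with _ | _
        · -- backwards
          refine ⟨k, fun c => (r c : ℕ) + P * (lam (-k) * a c), h1, ?_, ?_⟩
          · intro c
            rw [AM.Ls_some, hb c, h1, lam_neg]
            simp only [M, mach]
            simp
            field_simp
          · refine (hT _ y ?_).2 h3
            refine ⟨r, fun c => lam (-k) * a c, fun c => ⟨mul_mem (lam_mem _) (ha c), rfl, ?_⟩⟩
            have := hb c
            rw [h2, h1] at this
            simp only [M, mach] at this
            simp only [Bool.false_eq_true, if_false, Int.cast_natCast] at this
            rw [lam_neg]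
            field_simp
            linear_combination this
        · refine ⟨k, fun c => (op r c).1 + P ^ (op r c).2 * (lam (-k) * a c), h1, ?_, ?_⟩
          · intro c
            rw [AM.Ls_some, hb c, h1, lam_neg]
            simp only [M, mach]
            simp
            field_simp
          · refine (hT y _ ?_).1 h3
            refine ⟨r, fun c => lam (-k) * a c, fun c => ⟨mul_mem (lam_mem _) (ha c), ?_, rfl⟩⟩
            have := hb c
            rw [h2, h1] at this
            simp only [M, mach] at this
            simp only [if_true, Int.cast_natCast, pow_one] at this
            rw [lam_neg]
            field_simp
            linear_combination this
      · exact ⟨0, fun c => t c, by simp [emb], fun c => by simp [emb], Relation.ReflTransGen.refl⟩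
    obtain ⟨k, y, h1, h2, h3⟩ := key
    have hk : lam k = 1 := h1.symm
    have hy : y = fun c => (s c : ℚ) := by
      ext c
      have := h2 c
      rw [hk, one_mul] at this
      exact this.symm
    rw [hy] at h3
    have gen : ∀ z, Relation.ReflTransGen (Stp P op) (fun c => (s c : ℚ)) z →
        ∃ i, z = fun c => (((nstep P hP0 op)^[i] s c : ℕ) : ℚ) := by
      intro z hz
      induction hz with
      | refl => exact ⟨0, rfl⟩
      | tail _ h ih =>
        obtain ⟨i, rfl⟩ := ih
        refine ⟨i + 1, ?_⟩
        rw [Stp.det P hP hP0 op h (Stp.nat P hP0 op _), Function.iterate_succ_apply']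
    obtain ⟨i, hi⟩ := gen _ h3
    refine ⟨i, ?_⟩
    ext c
    have := congrFun hi c
    exact_mod_cast this.symm
  · rintro ⟨i, rfl⟩
    have step1 : ∀ s : κ → ℕ, IsConj (M.hd.ofH (HH.vec (emb s) (emb_mem s)))
      (M.hd.ofH (HH.vec (emb (nstep P hP0 op s)) (emb_mem _))) := by
      intro s
      set r : κ → Fin P := fun c => ⟨s c % P, Nat.mod_lt _ hP0⟩
      have hd : M.Dom (r, true) (emb s) := by
        intro c
        refine ⟨((s c / P : ℕ) : ℚ), natCast_mem _ _, ?_⟩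
        simp only [M, mach, emb, r, if_true, mul_one, pow_one, Int.cast_natCast]
        exact_mod_cast (Nat.mod_add_div (s c) P).symm
      have e : M.Ls (r, true) (emb s) = emb (nstep P hP0 op s) := by
        ext c
        rcases c with _ | c
        · rfl
        · rw [AM.Ls_some]
          simp only [M, mach, emb, r, nstep, Bool.not_true, Bool.false_eq_true, if_true, if_false,
            Int.cast_natCast, mul_one, pow_one, Nat.cast_add, Nat.cast_mul, Nat.cast_pow]
          have : (s c : ℚ) = (s c % P : ℕ) + P * (s c / P : ℕ) := by
            exact_mod_cast (Nat.mod_add_div (s c) P).symm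
          have hq : ((s c / P : ℕ) : ℚ) = ((s c : ℚ) - (s c % P : ℕ)) / P := by
            rw [eq_div_iff hP']; linear_combination - this
          rw [hq]
          ring
      have hy : ∀ c, M.Ls (r, true) (emb s) c ∈ A6 := by rw [e]; exact emb_mem _
      have := M.conj_step (r, true) (emb_mem s) hd hy
      convert this using 3
      exact e.symm
    clear ht
    induction i generalizing s with
    | zero => exact IsConj.refl _
    | succ i ih =>
      rw [Function.iterate_succ_apply]
      exact (step1 s).trans (ih _)

end machine

theorem vec_add_emb {κ : Type} [DecidableEq κ] (s0 : κ → ℕ) (c0 : κ) (n : ℕ) :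
    HH.vec (emb (Function.update s0 c0 (s0 c0 + n))) (emb_mem _) = HH.vec (emb s0) (emb_mem s0) *
      (HH.vec (fun c => if c = some c0 then 1 else 0)
        (fun c => by split_ifs <;> first | exact one_mem _ | exact zero_mem _)) ^ n := by
  have hpow : ∀ (h : HH κ), h.k = 0 → ∀ n : ℕ, (h ^ n).k = 0 ∧ (h ^ n).u = n • h.u := by
    intro h hk n
    induction n with
    | zero => simp
    | succ n ih => rw [pow_succ]; simp [ih.1, ih.2, hk, add_smul]
  apply HH.ext
  · rw [HH.mul_u, (hpow (HH.vec _ _) rfl n).2]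
    ext c
    rcases c with _ | c
    · simp [HH.vec, emb]
    · by_cases hc : c = c0
      · subst hc; simp [HH.vec, emb]
      · simp [HH.vec, emb, hc]
  · rw [HH.mul_k, (hpow (HH.vec _ _) rfl n).1]
    rfl

theorem computable_rep {α : Type} [Primcodable α] (w0 w : List α) {f : ℕ → ℕ} (hf : Computable f) :
    Computable (fun n => w0 ++ (List.replicate (f n) w).flatten) := by
  have h1 : Computable (fun m : ℕ => w0 ++ (List.replicate m w).flatten) := by
    have h2 : Primrec (fun m : ℕ => (Nat.rec (motive := fun _ => List α) [] (fun _ l => w ++ l) m)) := by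
      apply Primrec.nat_rec₁
      exact Primrec.list_append.comp (Primrec.const w) Primrec.snd
    have e : ∀ m : ℕ, (Nat.rec (motive := fun _ => List α) [] (fun _ l => w ++ l) m) =
        (List.replicate m w).flatten := by
      intro m
      induction m with
      | zero => rfl
      | succ m ih => simp only [List.replicate_succ, List.flatten_cons, ← ih]
    exact (Primrec.list_append.comp (Primrec.const w0) (h2.of_eq e)).to_comp
  exact h1.comp hf

theorem main_reduction {κ : Type} [Fintype κ] [DecidableEq κ] (P : ℕ) (hP : Nat.Coprime P 6) (hP0 : 0 < P)
    (op : (κ → Fin P) → κ → ℕ × ℕ) (t : κ → ℕ) (ht : nstep P hP0 op t = t) (s0 : κ → ℕ) (c0 : κ)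
    (f : ℕ → ℕ) (hf : Computable f)
    (hu : ¬ ComputablePred (fun n => ∃ i, (nstep P hP0 op)^[i]
      (Function.update s0 c0 (s0 c0 + f n)) = t)) :
    ∃ (a : ℕ) (R : Finset (FreeGroup (Fin a))),
      FunEquiv (dehn R) (fun n => n ^ 2) ∧
      ¬ ComputablePred (fun p : List (Fin a × Bool) × List (Fin a × Bool) =>
          IsConj
            ((QuotientGroup.mk (FreeGroup.mk p.1) :
              PresentedGroup (R : Set (FreeGroup (Fin a)))))
            (QuotientGroup.mk (FreeGroup.mk p.2))) := by
  set M := mach P hP hP0 op with hM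
  obtain ⟨a, ev, R, K, hs, hR, hq⟩ := M.geo.quad
  obtain ⟨c1, c2⟩ := conclude ev R K hs hR hq M.kap M.kap_mul
    (M.hd.ofH ⟨0, (1, 0), fun _ => zero_mem _⟩) (M.hd.ofH ⟨0, (0, 1), fun _ => zero_mem _⟩)
    (by rw [AM.kap_ofH]) (by rw [AM.kap_ofH])
    (by
      rw [Commute, SemiconjBy, ← map_mul, ← map_mul]
      congr 1
      apply HH.ext <;> simp)
  refine ⟨a, R, c1, ?_⟩
  intro hcp
  apply hu
  have hw : ∀ g : M.Gp, ∃ w : List (Fin a × Bool), ev (FreeGroup.mk w) = g := by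
    intro g
    obtain ⟨z, hz⟩ := hs g
    exact ⟨z.toWord, by rw [FreeGroup.mk_toWord, hz]⟩
  obtain ⟨w0, hw0⟩ := hw (M.hd.ofH (HH.vec (emb s0) (emb_mem s0)))
  obtain ⟨w1, hw1⟩ := hw (M.hd.ofH (HH.vec (fun c => if c = some c0 then 1 else 0)
        (fun c => by split_ifs <;> first | exact one_mem _ | exact zero_mem _)))
  obtain ⟨w2, hw2⟩ := hw (M.hd.ofH (HH.vec (emb t) (emb_mem t)))
  have hcomp : Computable (fun n => (w0 ++ (List.replicate (f n) w1).flatten, w2)) :=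
    (computable_rep w0 w1 hf).pair (Computable.const w2)
  have h3 := ComputablePred.computable_iff.1 hcp
  obtain ⟨g, hg, hge⟩ := h3
  refine ComputablePred.computable_iff.2 ⟨fun n => g (w0 ++ (List.replicate (f n) w1).flatten, w2),
    hg.comp hcomp, ?_⟩
  funext n
  have h4 := congrFun hge (w0 ++ (List.replicate (f n) w1).flatten, w2)
  simp only at h4
  rw [← h4, c2, ← FreeGroup.mul_mk, map_mul, mk_flatten, map_pow, hw0, hw1, hw2, ← map_pow,
    ← map_mul, ← vec_add_emb, hM, conj_iff P hP hP0 op _ t ht]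

end CP

namespace CP

open Turing

section tm
variable {K G L σ : Type} [DecidableEq K]

/-- stack actions -/
inductive Act (G : Type)
  | keep : Act G
  | push : G → Act G
  | pop : Act G

def Act.run {G : Type} : Act G → List G → List G
  | keep, l => l
  | push a, l => a :: l
  | pop, l => l.tail

/-- statements of the stack machine -/
abbrev St (K G L σ : Type) := TM2.Stmt (fun _ : K => G) L σ

/-- control part of one small step -/
def ctl (M : L → St K G L σ) (tp : K → Option G) : Option (St K G L σ) → σ →
    (Option (St K G L σ) × σ) × (K → Act G)
  | some (TM2.Stmt.push k f q), v => ((some q, v), Function.update (fun _ => Act.keep) k (Act.push (f v)))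
  | some (TM2.Stmt.peek k f q), v => ((some q, f v (tp k)), fun _ => Act.keep)
  | some (TM2.Stmt.pop k f q), v => ((some q, f v (tp k)), Function.update (fun _ => Act.keep) k Act.pop)
  | some (TM2.Stmt.load f q), v => ((some q, f v), fun _ => Act.keep)
  | some (TM2.Stmt.branch f q q'), v => ((some (cond (f v) q q'), v), fun _ => Act.keep)
  | some (TM2.Stmt.goto f), v => ((some (M (f v)), v), fun _ => Act.keep)
  | some TM2.Stmt.halt, v => ((none, v), fun _ => Act.keep)
  | none, v => ((none, v), fun _ => Act.keep)

abbrev SC (K G L σ : Type) := (Option (St K G L σ) × σ) × (K → List G)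

def ss (M : L → St K G L σ) (x : SC K G L σ) : SC K G L σ :=
  ((ctl M (fun k => (x.2 k).head?) x.1.1 x.1.2).1,
    fun k => ((ctl M (fun k => (x.2 k).head?) x.1.1 x.1.2).2 k).run (x.2 k))

theorem run_keep (S : K → List G) : (fun k => Act.run ((fun _ => Act.keep : K → Act G) k) (S k)) = S := rfl

theorem run_upd (S : K → List G) (k : K) (a : Act G) :
    (fun k' => Act.run (Function.update (fun _ => Act.keep) k a k') (S k')) =
      Function.update S k (a.run (S k)) := by
  funext k'
  by_cases h : k' = k
  · subst h; simp
  · simp [h, Act.run]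

variable (M : L → St K G L σ)

theorem ss_push (k f q v S) : ss M ((some (TM2.Stmt.push k f q), v), S) =
    ((some q, v), Function.update S k (f v :: S k)) := by
  simp only [ss, ctl, run_upd]; rfl
theorem ss_peek (k f q v S) : ss M ((some (TM2.Stmt.peek k f q), v), S) =
    ((some q, f v (S k).head?), S) := rfl
theorem ss_pop (k f q v S) : ss M ((some (TM2.Stmt.pop k f q), v), S) =
    ((some q, f v (S k).head?), Function.update S k (S k).tail) := by
  simp only [ss, ctl, run_upd]; rfl
theorem ss_load (f q v S) : ss M ((some (TM2.Stmt.load f q), v), S) = ((some q, f v), S) := rfl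
theorem ss_branch (f q q' v S) : ss M ((some (TM2.Stmt.branch f q q'), v), S) =
    ((some (cond (f v) q q'), v), S) := rfl
theorem ss_goto (f v S) : ss M ((some (TM2.Stmt.goto f), v), S) = ((some (M (f v)), v), S) := rfl
theorem ss_halt (v S) : ss M ((some TM2.Stmt.halt, v), S) = ((none, v), S) := rfl
theorem ss_none (v S) : ss M ((none, v), S) = ((none, v), S) := rfl

/-- big configurations as small ones -/
def big (c : TM2.Cfg (fun _ : K => G) L σ) : SC K G L σ := ((c.l.map M, c.var), c.stk)

theorem ss_stepAux (q : St K G L σ) (v : σ) (S : K → List G) :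
    ∃ i, (ss M)^[i] ((some q, v), S) = big M (TM2.stepAux q v S) := by
  induction q generalizing v S with
  | push k f q ih =>
    obtain ⟨i, hi⟩ := ih v (Function.update S k (f v :: S k))
    exact ⟨i + 1, by rw [Function.iterate_succ_apply, ss_push, hi]; rfl⟩
  | peek k f q ih =>
    obtain ⟨i, hi⟩ := ih (f v (S k).head?) S
    exact ⟨i + 1, by rw [Function.iterate_succ_apply, ss_peek, hi]; rfl⟩
  | pop k f q ih =>
    obtain ⟨i, hi⟩ := ih (f v (S k).head?) (Function.update S k (S k).tail)
    exact ⟨i + 1, by rw [Function.iterate_succ_apply, ss_pop, hi]; rfl⟩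
  | load f q ih =>
    obtain ⟨i, hi⟩ := ih (f v) S
    exact ⟨i + 1, by rw [Function.iterate_succ_apply, ss_load, hi]; rfl⟩
  | branch f q q' ih ih' =>
    cases hf : f v with
    | true =>
      obtain ⟨i, hi⟩ := ih v S
      exact ⟨i + 1, by rw [Function.iterate_succ_apply, ss_branch, hf, TM2.stepAux, hf]; exact hi⟩
    | false =>
      obtain ⟨i, hi⟩ := ih' v S
      exact ⟨i + 1, by rw [Function.iterate_succ_apply, ss_branch, hf, TM2.stepAux, hf]; exact hi⟩
  | goto f => exact ⟨1, rfl⟩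
  | halt => exact ⟨1, rfl⟩

theorem ss_reaches {c c' : TM2.Cfg (fun _ : K => G) L σ}
    (h : StateTransition.Reaches (TM2.step M) c c') : ∃ i, (ss M)^[i] (big M c) = big M c' := by
  induction h with
  | refl => exact ⟨0, rfl⟩
  | @tail b d _ h ih =>
    obtain ⟨i, hi⟩ := ih
    obtain ⟨l, v, S⟩ := b
    cases l with
    | none => simp [TM2.step] at h
    | some l =>
      simp only [TM2.step, Option.mem_def, Option.some.injEq] at h
      obtain ⟨j, hj⟩ := ss_stepAux M (M l) v S
      refine ⟨j + i, ?_⟩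
      rw [Function.iterate_add_apply, hi, ← h, ← hj]
      rfl

theorem ss_dom (i : ℕ) : ∀ (q : St K G L σ) (v : σ) (S : K → List G),
    ((ss M)^[i] ((some q, v), S)).1.1 = none →
    (StateTransition.eval (TM2.step M) (TM2.stepAux q v S)).Dom := by
  induction i with
  | zero => intro q v S h; simp at h
  | succ i ih =>
    intro q v S h
    rw [Function.iterate_succ_apply] at h
    cases q with
    | push k f q => rw [ss_push] at h; have := ih _ _ _ h; exact this
    | peek k f q => rw [ss_peek] at h; have := ih _ _ _ h; exact this
    | pop k f q => rw [ss_pop] at h; have := ih _ _ _ h; exact this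
    | load f q => rw [ss_load] at h; have := ih _ _ _ h; exact this
    | branch f q q' =>
      rw [ss_branch] at h
      have := ih _ _ _ h
      rw [TM2.stepAux]
      cases hf : f v <;> rw [hf] at this <;> exact this
    | goto f =>
      rw [ss_goto] at h
      have := ih _ _ _ h
      rwa [← StateTransition.reaches_eval (a := TM2.stepAux (TM2.Stmt.goto f) v S)] at this
      exact Relation.ReflTransGen.single rfl
    | halt =>
      rw [Part.dom_iff_mem]
      exact ⟨_, StateTransition.mem_eval.2 ⟨Relation.ReflTransGen.refl, rfl⟩⟩

theorem ss_iff (l : L) (v : σ) (S : K → List G) (d : TM2.Cfg (fun _ : K => G) L σ)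
    (hd : ∀ c' ∈ StateTransition.eval (TM2.step M) ⟨some l, v, S⟩, c' = d) :
    ((StateTransition.eval (TM2.step M) ⟨some l, v, S⟩).Dom → 
      ∃ i, (ss M)^[i] ((some (M l), v), S) = big M d) ∧
    ∀ i, ((ss M)^[i] ((some (M l), v), S)).1.1 = none →
      (StateTransition.eval (TM2.step M) ⟨some l, v, S⟩).Dom := by
  constructor
  · intro h
    obtain ⟨c', hc⟩ := Part.dom_iff_mem.1 h
    obtain rfl := hd c' hc
    obtain ⟨i, hi⟩ := ss_reaches M (StateTransition.mem_eval.1 hc).1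
    exact ⟨i, hi⟩
  · intro i h
    have := ss_dom M i _ _ _ h
    rwa [← StateTransition.reaches_eval (a := ⟨some l, v, S⟩)] at this
    exact Relation.ReflTransGen.single rfl

/-- closed set of control states -/
theorem ctl_mem (S : Finset L) (hS : ∀ q ∈ S, TM2.SupportsStmt S (M q)) (tp : K → Option G)
    (q : Option (St K G L σ)) (v : σ) (hq : q ∈ TM2.stmts M S) :
    (ctl M tp q v).1.1 ∈ TM2.stmts M S := by
  classical
  have hsup : ∀ q : St K G L σ, some q ∈ TM2.stmts M S → TM2.SupportsStmt S q := by
    simp only [TM2.stmts, Finset.mem_insertNone, Finset.mem_biUnion, Option.mem_def, Option.some.injEq,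
      forall_eq', exists_imp, and_imp]
    exact fun q l ls h ↦ TM2.stmts₁_supportsStmt_mono h (hS _ ls)
  have hnone : none ∈ TM2.stmts M S := by simp [TM2.stmts]
  cases q with
  | none => exact hnone
  | some q =>
    have hs := hsup q hq
    cases q with
    | push k f q => exact TM2.stmts_trans (by rw [TM2.stmts₁]; exact Finset.mem_insert_of_mem TM2.stmts₁_self) hq
    | peek k f q => exact TM2.stmts_trans (by rw [TM2.stmts₁]; exact Finset.mem_insert_of_mem TM2.stmts₁_self) hq
    | pop k f q => exact TM2.stmts_trans (by rw [TM2.stmts₁]; exact Finset.mem_insert_of_mem TM2.stmts₁_self) hq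
    | load f q => exact TM2.stmts_trans (by rw [TM2.stmts₁]; exact Finset.mem_insert_of_mem TM2.stmts₁_self) hq
    | branch f q q' =>
      refine TM2.stmts_trans ?_ hq
      rw [TM2.stmts₁]
      apply Finset.mem_insert_of_mem
      cases f v
      · exact Finset.mem_union_right _ TM2.stmts₁_self
      · exact Finset.mem_union_left _ TM2.stmts₁_self
    | goto f =>
      simp only [TM2.stmts, ctl, Finset.mem_insertNone, Finset.mem_biUnion, Option.mem_def, Option.some.injEq,
        forall_eq']
      exact ⟨_, hs v, TM2.stmts₁_self⟩
    | halt => exact hnone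

/-- base `P` value of a stack -/
def val (P : ℕ) (gc : G → ℕ) : List G → ℕ
  | [] => 0
  | a :: l => gc a + P * val P gc l

theorem val_div (P : ℕ) (gc : G → ℕ) (hg : ∀ a, gc a < P) (l : List G) (hP0 : 0 < P) :
    val P gc l / P = val P gc l.tail := by
  cases l with
  | nil => simp [val]
  | cons a l => simp [val, Nat.add_mul_div_left _ _ hP0, Nat.div_eq_of_lt (hg a)]

theorem val_mod (P : ℕ) (gc : G → ℕ) (gd : ℕ → Option G) (hg : ∀ a, gc a < P)
    (hd : ∀ a, gd (gc a) = some a) (hd0 : gd 0 = none) (l : List G) :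
    gd (val P gc l % P) = l.head? := by
  cases l with
  | nil => simp [val, hd0]
  | cons a l => simp [val, Nat.mod_eq_of_lt (hg a), hd]


/-- the arithmetic operation attached to a small step system -/
def opr (P : ℕ) (code : Option (St K G L σ) × σ → ℕ) (dec : ℕ → Option (St K G L σ) × σ) (gc : G → ℕ)
    (gd : ℕ → Option G) (r : Option K → Fin P) : Option K → ℕ × ℕ
  | none => (code (ctl M (fun k => gd (r (some k))) (dec (r none)).1 (dec (r none)).2).1, 1)
  | some k => match (ctl M (fun k => gd (r (some k))) (dec (r none)).1 (dec (r none)).2).2 k with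
    | Act.keep => (r (some k), 1)
    | Act.push a => (P * (r (some k)) + gc a, 2)
    | Act.pop => (0, 0)

def enc (P : ℕ) (code : Option (St K G L σ) × σ → ℕ) (gc : G → ℕ) (x : SC K G L σ) : Option K → ℕ
  | none => code x.1
  | some k => val P gc (x.2 k)

theorem nstep_enc (P : ℕ) (hP0 : 0 < P) (code : Option (St K G L σ) × σ → ℕ)
    (dec : ℕ → Option (St K G L σ) × σ) (gc : G → ℕ) (gd : ℕ → Option G) (hg : ∀ a, gc a < P)
    (hd : ∀ a, gd (gc a) = some a) (hd0 : gd 0 = none) (x : SC K G L σ)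
    (hx : code x.1 < P) (hx' : dec (code x.1) = x.1) :
    nstep P hP0 (opr M P code dec gc gd) (enc P code gc x) = enc P code gc (ss M x) := by
  have e1 : (fun k => gd (enc P code gc x (some k) % P)) = fun k => (x.2 k).head? := by
    funext k
    exact val_mod P gc gd hg hd hd0 _
  have e2 : dec (enc P code gc x none % P) = x.1 := by
    simp only [enc]
    rw [Nat.mod_eq_of_lt hx, hx']
  funext c
  cases c with
  | none =>
    simp only [nstep, opr]
    rw [e1, e2]
    simp only [enc, ss, Nat.div_eq_of_lt hx, mul_zero, add_zero]
  | some k =>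
    simp only [nstep, opr]
    rw [e1, e2]
    simp only [enc, ss]
    cases h : (ctl M (fun k => (x.2 k).head?) x.1.1 x.1.2).2 k with
    | keep => simp only [Act.run, pow_one]; exact Nat.mod_add_div _ _
    | push a =>
      simp only [Act.run, val]
      conv_rhs => rw [← Nat.mod_add_div (val P gc (x.2 k)) P]
      ring
    | pop => simp only [Act.run, pow_zero, one_mul, zero_add]; exact val_div P gc hg _ hP0

end tm

end CP

namespace CP

open Turing Turing.PartrecToTM2

/-- codes of stack letters -/
def gcode : Γ' → ℕ
  | Γ'.consₗ => 1
  | Γ'.cons => 2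
  | Γ'.bit0 => 3
  | Γ'.bit1 => 4

def gdec : ℕ → Option Γ'
  | 1 => some Γ'.consₗ
  | 2 => some Γ'.cons
  | 3 => some Γ'.bit0
  | 4 => some Γ'.bit1
  | _ => none

/-- value of the initial stack -/
def inVal (P n : ℕ) : ℕ := val P gcode (trList [n])

theorem inVal_zero (P : ℕ) : inVal P 0 = 2 := by
  simp [inVal, trList, val, gcode]

theorem trNat_double (m : ℕ) (hm : m ≠ 0) : trNat (2 * m) = Γ'.bit0 :: trNat m := by
  unfold trNat
  have : ((2 * m : ℕ) : Num) = Num.bit0 (m : Num) := by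
    rw [← Num.bit0_of_bit0]; push_cast; ring
  rw [this]
  cases h : (m : Num) with
  | zero => exfalso; apply hm; have := congrArg (fun z : Num => (z : ℕ)) h; simpa using this
  | pos p => rfl

theorem trNat_double_succ (m : ℕ) : trNat (2 * m + 1) = Γ'.bit1 :: trNat m := by
  unfold trNat
  have : ((2 * m + 1 : ℕ) : Num) = Num.bit1 (m : Num) := by
    rw [← Num.bit1_of_bit1]; push_cast; ring
  rw [this]
  cases h : (m : Num) with
  | zero => rfl
  | pos p => rfl

theorem inVal_pos (P n : ℕ) (hn : n ≠ 0) : inVal P n = (3 + n % 2) + P * inVal P (n / 2) := by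
  unfold inVal
  simp only [trList]
  rcases Nat.mod_two_eq_zero_or_one n with h | h
  · have e : n = 2 * (n / 2) := by omega
    conv_lhs => rw [e, trNat_double _ (by omega)]
    simp [val, gcode, h]
  · have e : n = 2 * (n / 2) + 1 := by omega
    conv_lhs => rw [e, trNat_double_succ]
    simp [val, gcode, h]

theorem inVal_computable (P : ℕ) : Computable (inVal P) := by
  have h : Primrec₂ (fun (_ : Unit) n => inVal P n) := by
    apply Primrec.nat_strong_rec (g := fun _ l => if l.length = 0 then some 2 else
      (l[l.length / 2]?).map (fun x => (3 + l.length % 2) + P * x))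
    · have hl : Primrec (fun p : Unit × List ℕ => p.2.length) := Primrec.list_length.comp Primrec.snd
      refine Primrec.ite (Primrec.eq.comp hl (Primrec.const 0)) (Primrec.const _) ?_
      refine Primrec.option_map (Primrec.list_getElem?.comp Primrec.snd
        (Primrec.nat_div.comp hl (Primrec.const 2))) ?_
      exact Primrec.nat_add.comp (Primrec.nat_add.comp (Primrec.const 3)
        (Primrec.nat_mod.comp (hl.comp Primrec.fst) (Primrec.const 2)))
        (Primrec.nat_mul.comp (Primrec.const P) Primrec.snd)
    · intro _ n
      simp only [List.length_map, List.length_range]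
      split_ifs with hn
      · rw [hn, inVal_zero]
      · rw [inVal_pos P n hn]
        have : n / 2 < n := by omega
        simp [this]
  exact (h.comp (Primrec.const ()) Primrec.id).to_comp

theorem exists_machine : ∃ (κ : Type) (_ : Fintype κ) (_ : DecidableEq κ) (P : ℕ) (_ : Nat.Coprime P 6)
    (hP0 : 0 < P) (op : (κ → Fin P) → κ → ℕ × ℕ) (t : κ → ℕ) (_ : nstep P hP0 op t = t) (s0 : κ → ℕ)
    (c0 : κ) (f : ℕ → ℕ) (_ : Computable f), ¬ ComputablePred (fun n => ∃ i, (nstep P hP0 op)^[i]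
      (Function.update s0 c0 (s0 c0 + f n)) = t) := by
  classical
  -- the code
  have hφ : Partrec (fun n : ℕ => ((Nat.Partrec.Code.eval (Denumerable.ofNat Nat.Partrec.Code n) 0).map
      (fun _ => 0) : Part ℕ)) := by
    refine Partrec.map ?_ (Computable.const 0).to₂
    exact Nat.Partrec.Code.eval_part.comp (Computable.ofNat _) (Computable.const 0)
  obtain ⟨c, hc⟩ := ToPartrec.Code.exists_code (Nat.Partrec'.part_iff₁.2 hφ)
  have hc' : ∀ n, ToPartrec.Code.eval c [n] = pure <$> 
      ((Nat.Partrec.Code.eval (Denumerable.ofNat Nat.Partrec.Code n) 0).map (fun _ => 0) : Part ℕ) := by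
    intro n
    exact hc ⟨[n], rfl⟩
  have htr : ∀ n, StateTransition.eval (TM2.step tr) (init c [n]) = halt <$> (pure <$> 
      ((Nat.Partrec.Code.eval (Denumerable.ofNat Nat.Partrec.Code n) 0).map (fun _ => 0) : Part ℕ)) := by
    intro n
    rw [tr_eval, hc']
  -- finite control
  let S : Finset Λ' := codeSupp c Cont'.halt
  have hS1 : trNormal c Cont'.halt ∈ S := (tr_supports c Cont'.halt).1
  have hS : ∀ q ∈ S, TM2.SupportsStmt S (tr q) := (tr_supports c Cont'.halt).2
  let F : Finset (Option (St K' Γ' Λ' (Option Γ')) × Option Γ') := TM2.stmts tr S ×ˢ Finset.univ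
  let N := F.card
  let P := 6 * (N + 1) + 1
  have hP0 : 0 < P := by positivity
  have hP : Nat.Coprime P 6 := by
    simp only [P, Nat.coprime_mul_left_add_left]; norm_num
  let code : Option (St K' Γ' Λ' (Option Γ')) × Option Γ' → ℕ := fun q => F.toList.idxOf q
  let dec : ℕ → Option (St K' Γ' Λ' (Option Γ')) × Option Γ' := fun d => F.toList.getD d (none, none)
  have hcode : ∀ q ∈ F, code q < P := by
    intro q hq
    have := List.idxOf_lt_length_of_mem (Finset.mem_toList.2 hq)
    rw [Finset.length_toList] at this
    simp only [code, P, N]; omega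
  have hdec : ∀ q ∈ F, dec (code q) = q := by
    intro q hq
    have := List.idxOf_lt_length_of_mem (Finset.mem_toList.2 hq)
    simp only [code, dec]
    rw [List.getD_eq_getElem _ _ this]
    simp
  have hg : ∀ a, gcode a < P := by intro a; cases a <;> simp only [gcode, P] <;> omega
  have hgd : ∀ a, gdec (gcode a) = some a := by intro a; cases a <;> rfl
  let M : Λ' → St K' Γ' Λ' (Option Γ') := tr
  let op := opr M P code dec gcode gdec
  have hmem : ∀ x : SC K' Γ' Λ' (Option Γ'), x.1 ∈ F → (ss M x).1 ∈ F := by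
    intro x hx
    refine Finset.mem_product.2 ⟨?_, Finset.mem_univ _⟩
    exact ctl_mem M S hS _ _ _ (Finset.mem_product.1 hx).1
  have hit : ∀ i, ∀ x : SC K' Γ' Λ' (Option Γ'), x.1 ∈ F → ((ss M)^[i] x).1 ∈ F ∧
      (nstep P hP0 op)^[i] (enc P code gcode x) = enc P code gcode ((ss M)^[i] x) := by
    intro i
    induction i with
    | zero => intro x hx; exact ⟨hx, rfl⟩
    | succ i ih =>
      intro x hx
      have := ih (ss M x) (hmem x hx)
      rw [Function.iterate_succ_apply, Function.iterate_succ_apply,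
        nstep_enc M P hP0 code dec gcode gdec hg hgd rfl x (hcode _ hx) (hdec _ hx)]
      exact this
  have hnone : none ∈ TM2.stmts tr S := by simp [TM2.stmts]
  let T : SC K' Γ' Λ' (Option Γ') := big M (halt [0])
  have hT : T.1 ∈ F := Finset.mem_product.2 ⟨hnone, Finset.mem_univ _⟩
  let I : ℕ → SC K' Γ' Λ' (Option Γ') := fun n =>
    ((some (M (trNormal c Cont'.halt)), none), K'.elim (trList [n]) [] [] [])
  have hI : ∀ n, (I n).1 ∈ F := by
    intro n
    refine Finset.mem_product.2 ⟨?_, Finset.mem_univ _⟩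
    simp only [TM2.stmts, I, Finset.mem_insertNone, Finset.mem_biUnion, Option.mem_def, Option.some.injEq,
        forall_eq']
    exact ⟨_, hS1, TM2.stmts₁_self⟩
  let s0 : Option K' → ℕ := fun k => match k with
    | none => code (some (M (trNormal c Cont'.halt)), none)
    | some _ => 0
  have hs0 : ∀ n, Function.update s0 (some K'.main) (s0 (some K'.main) + inVal P n) =
      enc P code gcode (I n) := by
    intro n
    funext k
    rcases k with _ | k
    · rfl
    · cases k <;> simp [s0, enc, I, val, inVal]
  have key : ∀ n, (∃ i, (nstep P hP0 op)^[i] (Function.update s0 (some K'.main)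
      (s0 (some K'.main) + inVal P n)) = enc P code gcode T) ↔
      (Nat.Partrec.Code.eval (Denumerable.ofNat Nat.Partrec.Code n) 0).Dom := by
    intro n
    have hdom : (StateTransition.eval (TM2.step tr) (init c [n])).Dom ↔ 
        (Nat.Partrec.Code.eval (Denumerable.ofNat Nat.Partrec.Code n) 0).Dom := by
      rw [htr n]; rfl
    have hval : ∀ c' ∈ StateTransition.eval (TM2.step tr) (init c [n]), c' = halt [0] := by
      intro c' h
      rw [htr n] at h
      simp only [Part.map_eq_map] at h
      obtain ⟨_, ⟨_, ⟨_, _, rfl⟩, rfl⟩, rfl⟩ := h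
      rfl
    obtain ⟨a1, a2⟩ := ss_iff M (trNormal c Cont'.halt) none (K'.elim (trList [n]) [] [] []) (halt [0]) hval
    rw [← hdom, hs0 n]
    constructor
    · rintro ⟨i, hi⟩
      obtain ⟨b1, b2⟩ := hit i _ (hI n)
      rw [b2] at hi
      have h3 : code ((ss M)^[i] (I n)).1 = code T.1 := congrFun hi none
      have h4 : ((ss M)^[i] (I n)).1 = T.1 := by
        rw [← hdec _ b1, h3, hdec _ hT]
      exact a2 i (congrArg Prod.fst h4)
    · intro h
      obtain ⟨i, hi⟩ := a1 h
      refine ⟨i, ?_⟩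
      rw [(hit i _ (hI n)).2]
      exact congrArg _ hi
  have hK : Fintype K' := ⟨{K'.main, K'.rev, K'.aux, K'.stack}, fun k => by cases k <;> simp⟩
  refine ⟨Option K', inferInstance, inferInstance, P, hP, hP0, op, enc P code gcode T, ?_, s0,
    some K'.main, inVal P, inVal_computable P, ?_⟩
  · exact (hit 1 T hT).2
  · intro h
    apply ComputablePred.halting_problem 0
    obtain ⟨g, hgc, hge⟩ := ComputablePred.computable_iff.1 h
    refine ComputablePred.computable_iff.2 ⟨fun c => g (Encodable.encode c), hgc.comp Computable.encode, ?_⟩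
    funext c'
    have h1 := congrFun hge (Encodable.encode c')
    change _ = _ at h1
    rw [← h1, eq_iff_iff, key, Denumerable.ofNat_encode]

end CP

/-- There is a finitely presented group `G = ⟨Fin a ∣ R⟩` whose Dehn function is
equivalent to `n²` and whose conjugacy problem is undecidable: the set of pairs of words
over the alphabet `(Fin a)^{±1}` representing conjugate elements of `G` is not
recursive. -/
theorem exists_fp_group_quadratic_dehn_undecidable_conjugacy :
    ∃ (a : ℕ) (R : Finset (FreeGroup (Fin a))),
      FunEquiv (dehn R) (fun n => n ^ 2) ∧
      ¬ ComputablePred (fun p : List (Fin a × Bool) × List (Fin a × Bool) =>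
          IsConj
            ((QuotientGroup.mk (FreeGroup.mk p.1) :
              PresentedGroup (R : Set (FreeGroup (Fin a)))))
            (QuotientGroup.mk (FreeGroup.mk p.2))) := by
  obtain ⟨κ, _, _, P, hP, hP0, op, t, ht, s0, c0, f, hf, hu⟩ := CP.exists_machine
  exact CP.main_reduction P hP hP0 op t ht s0 c0 f hf hu
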